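/- Let n ≥ 2, let Ω ⊂ ℝⁿ be a bounded domain, and let f : Ω × ℝⁿ → ℝ be a Carathéodory function, convex in the second variable for a.e. x, satisfying for some 1 ≤ L < ∞, μ ≥ 0 and a nonnegative function g ∈ L^{n/(n−1)}(Ω): |z|^n − g(x)^{n/(n−1)} ≤ f(x,z) ≤ L|z|^q + g(x)^{n/(n−1)} and f(x,2z) ≤ μ + L·f(x,z) for all z and a.e. x, where p = n < q < ∞ and min{1/q + 1/(n−1), 1} − 1/n ≥ 0. If g^{1/(n−1)} ∈ L^{n,1}(log L)^{(n−1)/n}(Ω), then every quasi-minimizer u ∈ W^{1,1}_loc(Ω) of F[u,A] = ∫_A f(x,∇u(x)) dx belongs to L^∞_loc(Ω). -/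

import Mathlib

open MeasureTheory Metric Set
open scoped ENNReal NNReal Topology

noncomputable section

/-- `du` is the weak gradient of `u` on the open set `Ω ⊆ ℝⁿ`, in the sense of
integration by parts against smooth compactly supported test functions. -/
def IsWeakGradOn (n : ℕ) (Ω : Set (EuclideanSpace ℝ (Fin n)))
    (u : EuclideanSpace ℝ (Fin n) → ℝ)
    (du : EuclideanSpace ℝ (Fin n) → EuclideanSpace ℝ (Fin n)) : Prop :=
  ∀ φ : EuclideanSpace ℝ (Fin n) → ℝ,
    ContDiff ℝ (⊤ : ℕ∞) φ → HasCompactSupport φ → tsupport φ ⊆ Ω →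
    ∀ i : Fin n,
      (∫ x in Ω, u x * (fderiv ℝ φ x (EuclideanSpace.single i (1 : ℝ))))
        = - ∫ x in Ω, du x i * φ x

/-- `u ∈ W^{1,1}_loc(Ω)` (with weak gradient `du`) is a `Q`-minimizer of the functional
`F[v,A] = ∫_A f(x, ∇v(x)) dx`: for every `φ ∈ W^{1,1}(Ω)` (with weak gradient `dφ`)
whose support is compactly contained in `Ω`, `F[u, supp φ] < ∞` (encoded as
integrability of `x ↦ f x (du x)` on `supp φ`) and
`F[u, supp φ] ≤ Q · F[u + φ, supp φ]`. -/
def IsQMinimizer (n : ℕ) (Ω : Set (EuclideanSpace ℝ (Fin n)))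
    (f : EuclideanSpace ℝ (Fin n) → EuclideanSpace ℝ (Fin n) → ℝ) (Q : ℝ)
    (u : EuclideanSpace ℝ (Fin n) → ℝ)
    (du : EuclideanSpace ℝ (Fin n) → EuclideanSpace ℝ (Fin n)) : Prop :=
  IsWeakGradOn n Ω u du ∧ LocallyIntegrableOn u Ω ∧ LocallyIntegrableOn du Ω ∧
  ∀ (φ : EuclideanSpace ℝ (Fin n) → ℝ)
    (dφ : EuclideanSpace ℝ (Fin n) → EuclideanSpace ℝ (Fin n)),
    IsWeakGradOn n Ω φ dφ → IntegrableOn φ Ω → IntegrableOn dφ Ω →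
    IsCompact (tsupport φ) → tsupport φ ⊆ Ω →
    IntegrableOn (fun x => f x (du x)) (tsupport φ) ∧
    (IntegrableOn (fun x => f x (du x + dφ x)) (tsupport φ) →
      (∫ x in tsupport φ, f x (du x)) ≤ Q * ∫ x in tsupport φ, f x (du x + dφ x))

/-- The nonincreasing rearrangement `h*(t) = inf {σ > 0 : |{|h| > σ}| ≤ t}` of a
function `h : ℝⁿ → ℝ`. -/
def rearr (n : ℕ) (h : EuclideanSpace ℝ (Fin n) → ℝ) (t : ℝ) : ℝ :=
  sInf {σ : ℝ | 0 < σ ∧ volume {x | σ < |h x|} ≤ ENNReal.ofReal t}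

/-- The Lorentz `L^{n,1}(Ω)` norm `∫_0^{|Ω|} t^{1/n} (h·χ_Ω)*(t) dt/t`. -/
def lorentzN1 (n : ℕ) (Ω : Set (EuclideanSpace ℝ (Fin n)))
    (h : EuclideanSpace ℝ (Fin n) → ℝ) : ℝ≥0∞ :=
  ∫⁻ t in Ioo (0 : ℝ) (volume Ω).toReal,
    ENNReal.ofReal (t ^ (1 / (n : ℝ)) * rearr n (Ω.indicator h) t / t)

/-- The Lorentz–Zygmund `L^{n,1}(log L)^α(Ω)` norm
`∫_0^{|Ω|} t^{1/n} (1 + |log t|)^α (h·χ_Ω)*(t) dt/t`. -/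
def lorentzZygmund (n : ℕ) (α : ℝ) (Ω : Set (EuclideanSpace ℝ (Fin n)))
    (h : EuclideanSpace ℝ (Fin n) → ℝ) : ℝ≥0∞ :=
  ∫⁻ t in Ioo (0 : ℝ) (volume Ω).toReal,
    ENNReal.ofReal (t ^ (1 / (n : ℝ)) * (1 + |Real.log t|) ^ α * rearr n (Ω.indicator h) t / t)

open Filter
open scoped Convolution

section Mollification

variable {E V : Type*} [NormedAddCommGroup E] [NormedSpace ℝ E] [FiniteDimensional ℝ E]
  [MeasurableSpace E] [BorelSpace E] {μ : Measure E} [μ.IsAddHaarMeasure]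
  [NormedAddCommGroup V] [NormedSpace ℝ V]

lemma lintegral_pow_le_lintegral_pow_of_isProbabilityMeasure {α : Type*} [MeasurableSpace α]
    (ν : Measure α) [IsProbabilityMeasure ν] {f : α → ℝ≥0∞} (hf : AEMeasurable f ν)
    {p : ℕ} (hp : 1 ≤ p) : (∫⁻ x, f x ∂ν) ^ p ≤ ∫⁻ x, f x ^ p ∂ν := by
  have hp0 : p ≠ 0 := by omega
  have h := eLpNorm_le_eLpNorm_of_exponent_le (μ := ν) (p := 1) (q := (p : ℝ≥0∞)) (f := f)
    (by exact_mod_cast hp) hf.aestronglyMeasurable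
  rw [eLpNorm_one_eq_lintegral_enorm, eLpNorm_eq_lintegral_rpow_enorm_toReal
    (by exact_mod_cast hp0) (by simp)] at h
  simp only [enorm_eq_self, ENNReal.toReal_natCast, ENNReal.rpow_natCast] at h
  calc (∫⁻ x, f x ∂ν) ^ p ≤ ((∫⁻ x, f x ^ p ∂ν) ^ (1 / (p : ℝ))) ^ p := by gcongr
    _ = _ := by
      rw [← ENNReal.rpow_natCast, ← ENNReal.rpow_mul, one_div_mul_cancel (by exact_mod_cast hp0),
        ENNReal.rpow_one]

/-- Mollification does not increase the `L^p` norm. -/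
lemma eLpNorm_convolution_normed_le (φ : ContDiffBump (0 : E)) {h : E → V}
    (hh : AEStronglyMeasurable h μ) {p : ℕ} (hp : 1 ≤ p) :
    eLpNorm (φ.normed μ ⋆[ContinuousLinearMap.lsmul ℝ ℝ, μ] h) p μ ≤ eLpNorm h p μ := by
  have hp0 : p ≠ 0 := by omega
  set ν : Measure E := μ.withDensity (fun t => ENNReal.ofReal (φ.normed μ t)) with hν
  have hcont : Continuous (φ.normed μ) := φ.continuous_normed
  have hmeas : Measurable (fun t => ENNReal.ofReal (φ.normed μ t)) :=
    hcont.measurable.ennreal_ofReal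
  have hprob : IsProbabilityMeasure ν := by
    constructor
    rw [hν, withDensity_apply _ MeasurableSet.univ, Measure.restrict_univ,
      ← ofReal_integral_eq_lintegral_ofReal φ.integrable_normed
        (Eventually.of_forall fun x => φ.nonneg_normed x), φ.integral_normed, ENNReal.ofReal_one]
  have hac : ν ≪ μ := withDensity_absolutelyContinuous _ _
  have hprod : AEStronglyMeasurable (fun z : E × E => h (z.1 - z.2)) (μ.prod ν) := by
    have h1 : AEStronglyMeasurable (fun z : E × E => h (z.1 - z.2)) (μ.prod μ) :=
      hh.comp_quasiMeasurePreserving (quasiMeasurePreserving_sub μ μ)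
    exact h1.mono_ac (Measure.AbsolutelyContinuous.prod Measure.AbsolutelyContinuous.rfl hac)
  have hpt : ∀ᵐ x ∂μ, ‖(φ.normed μ ⋆[ContinuousLinearMap.lsmul ℝ ℝ, μ] h) x‖ₑ ^ p
      ≤ ∫⁻ t, ‖h (x - t)‖ₑ ^ p ∂ν := by
    filter_upwards [hprod.prodMk_left] with x hx
    calc _ ≤ (∫⁻ t, ‖h (x - t)‖ₑ ∂ν) ^ p := by
          gcongr
          refine (enorm_integral_le_lintegral_enorm _).trans (le_of_eq ?_)
          rw [hν, lintegral_withDensity_eq_lintegral_mul_non_measurable _ hmeas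
            (Eventually.of_forall fun x => ENNReal.ofReal_lt_top)]
          refine lintegral_congr fun t => ?_
          simp only [ContinuousLinearMap.lsmul_apply, enorm_smul, Pi.mul_apply]
          rw [Real.enorm_of_nonneg (φ.nonneg_normed t)]
      _ ≤ _ := lintegral_pow_le_lintegral_pow_of_isProbabilityMeasure ν hx.enorm hp
  have hmain : ∫⁻ x, ‖(φ.normed μ ⋆[ContinuousLinearMap.lsmul ℝ ℝ, μ] h) x‖ₑ ^ p ∂μ
      ≤ ∫⁻ x, ‖h x‖ₑ ^ p ∂μ := by
    calc _ ≤ ∫⁻ x, ∫⁻ t, ‖h (x - t)‖ₑ ^ p ∂ν ∂μ := lintegral_mono_ae hpt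
      _ = ∫⁻ t, ∫⁻ x, ‖h (x - t)‖ₑ ^ p ∂μ ∂ν := by
        rw [lintegral_lintegral_swap]
        exact hprod.enorm.pow_const p
      _ = ∫⁻ t, ∫⁻ x, ‖h x‖ₑ ^ p ∂μ ∂ν := by
        congr 1; ext t
        exact lintegral_sub_right_eq_self (fun x => ‖h x‖ₑ ^ p) t
      _ = _ := by simp
  rw [eLpNorm_eq_lintegral_rpow_enorm_toReal (by exact_mod_cast hp0) (by simp),
    eLpNorm_eq_lintegral_rpow_enorm_toReal (by exact_mod_cast hp0) (by simp)]
  simp only [ENNReal.toReal_natCast, ENNReal.rpow_natCast]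
  gcongr

variable [CompleteSpace V]

lemma tendsto_eLpNorm_convolution_sub_of_continuous {φ : ℕ → ContDiffBump (0 : E)}
    (hφ : Tendsto (fun k => (φ k).rOut) atTop (𝓝 0)) {c : E → V} (hc : Continuous c)
    (hcs : HasCompactSupport c) {p : ℕ} :
    Tendsto (fun k => eLpNorm ((φ k).normed μ ⋆[ContinuousLinearMap.lsmul ℝ ℝ, μ] c - c) p μ)
      atTop (𝓝 0) := by
  set S := cthickening 1 (tsupport c) with hS
  have hScpt : IsCompact S := hcs.isCompact.cthickening
  have hSfin : μ S < ⊤ := hScpt.measure_lt_top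
  have huc : UniformContinuous c := hcs.uniformContinuous_of_continuous hc
  have key : ∀ ε : ℝ, 0 < ε → ∀ᶠ k in atTop,
      eLpNorm ((φ k).normed μ ⋆[ContinuousLinearMap.lsmul ℝ ℝ, μ] c - c) p μ
        ≤ μ S ^ (p : ℝ≥0∞).toReal⁻¹ * ENNReal.ofReal ε := by
    intro ε hε
    obtain ⟨δ, hδ, hδε⟩ := Metric.uniformContinuous_iff.1 huc ε hε
    filter_upwards [hφ.eventually (gt_mem_nhds (lt_min hδ one_pos))] with k hk
    have hb : ∀ x, ‖((φ k).normed μ ⋆[ContinuousLinearMap.lsmul ℝ ℝ, μ] c - c) x‖ ≤ ε := by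
      intro x
      rw [Pi.sub_apply, ← dist_eq_norm]
      refine ContDiffBump.dist_normed_convolution_le hc.aestronglyMeasurable fun y hy => ?_
      exact (hδε ((mem_ball.1 hy).trans (hk.trans_le (min_le_left _ _)))).le
    have hz : ∀ x, x ∉ S → ((φ k).normed μ ⋆[ContinuousLinearMap.lsmul ℝ ℝ, μ] c - c) x = 0 := by
      intro x hx
      have hx0 : ∀ y ∈ ball x (φ k).rOut, c y = 0 := by
        intro y hy
        by_contra hne
        refine hx (mem_cthickening_of_dist_le x y 1 _ (subset_tsupport _ hne) ?_)
        rw [dist_comm]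
        exact ((mem_ball.1 hy).trans (hk.trans_le (min_le_right _ _))).le
      have hxx : c x = 0 := hx0 x (mem_ball_self (φ k).rOut_pos)
      rw [Pi.sub_apply, ContDiffBump.normed_convolution_eq_right, sub_self]
      intro y hy
      rw [hx0 y hy, hxx]
    have heq : ((φ k).normed μ ⋆[ContinuousLinearMap.lsmul ℝ ℝ, μ] c - c)
        = S.indicator ((φ k).normed μ ⋆[ContinuousLinearMap.lsmul ℝ ℝ, μ] c - c) := by
      symm; rw [Set.indicator_eq_self]
      intro x hx
      by_contra h
      exact hx (hz x h)
    rw [heq, eLpNorm_indicator_eq_eLpNorm_restrict hScpt.measurableSet]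
    refine (eLpNorm_le_of_ae_bound (Eventually.of_forall hb)).trans ?_
    simp
  rw [ENNReal.tendsto_nhds_zero]
  intro η hη
  set m := μ S ^ (p : ℝ≥0∞).toReal⁻¹ with hm
  have hmfin : m ≠ ⊤ := (ENNReal.rpow_lt_top_of_nonneg (by positivity) hSfin.ne).ne
  have : Tendsto (fun ε : ℝ => m * ENNReal.ofReal ε) (𝓝[>] 0) (𝓝 (m * ENNReal.ofReal 0)) := by
    refine ENNReal.Tendsto.const_mul ?_ (Or.inr hmfin)
    exact (ENNReal.continuous_ofReal.tendsto 0).mono_left nhdsWithin_le_nhds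
  simp only [ENNReal.ofReal_zero, mul_zero] at this
  obtain ⟨ε, hε1, hε2⟩ := ((this.eventually (gt_mem_nhds hη)).and self_mem_nhdsWithin).exists
  filter_upwards [key ε hε2] with k hk
  exact hk.trans hε1.le

/-- Mollifications converge in `L^p`. -/
lemma tendsto_eLpNorm_convolution_sub {φ : ℕ → ContDiffBump (0 : E)}
    (hφ : Tendsto (fun k => (φ k).rOut) atTop (𝓝 0)) {F : E → V} {p : ℕ} (hp : 1 ≤ p)
    (hF : MemLp F p μ) :
    Tendsto (fun k => eLpNorm ((φ k).normed μ ⋆[ContinuousLinearMap.lsmul ℝ ℝ, μ] F - F) p μ)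
      atTop (𝓝 0) := by
  have hp1 : (1 : ℝ≥0∞) ≤ p := by exact_mod_cast hp
  rw [ENNReal.tendsto_nhds_zero]
  intro ε hε
  have hε3 : ε / 3 ≠ 0 := (ENNReal.div_pos hε.ne' (by norm_num)).ne'
  obtain ⟨c, hcs, hle, hc, hcm⟩ := hF.exists_hasCompactSupport_eLpNorm_sub_le (by simp) hε3
  have h2 := ENNReal.tendsto_nhds_zero.1
    (tendsto_eLpNorm_convolution_sub_of_continuous (μ := μ) (p := p) hφ hc hcs) (ε / 3)
    (pos_iff_ne_zero.2 hε3)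
  filter_upwards [h2] with k hk
  have hFl : LocallyIntegrable F μ := hF.locallyIntegrable hp1
  have hcl : LocallyIntegrable c μ := hcm.locallyIntegrable hp1
  have hex : ∀ G : E → V, LocallyIntegrable G μ →
      ConvolutionExists ((φ k).normed μ) G (ContinuousLinearMap.lsmul ℝ ℝ) μ := fun G hG =>
    (φ k).hasCompactSupport_normed.convolutionExists_left _ (φ k).continuous_normed hG
  have hsplit : (φ k).normed μ ⋆[ContinuousLinearMap.lsmul ℝ ℝ, μ] F - F
      = ((φ k).normed μ ⋆[ContinuousLinearMap.lsmul ℝ ℝ, μ] (F - c)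
        + ((φ k).normed μ ⋆[ContinuousLinearMap.lsmul ℝ ℝ, μ] c - c)) + (c - F) := by
    have : (φ k).normed μ ⋆[ContinuousLinearMap.lsmul ℝ ℝ, μ] F
        = (φ k).normed μ ⋆[ContinuousLinearMap.lsmul ℝ ℝ, μ] (F - c)
          + (φ k).normed μ ⋆[ContinuousLinearMap.lsmul ℝ ℝ, μ] c := by
      rw [← ConvolutionExists.distrib_add (hex _ (hFl.sub hcl)) (hex _ hcl), sub_add_cancel]
    rw [this]; abel
  have hm : ∀ G : E → V, LocallyIntegrable G μ →
      AEStronglyMeasurable ((φ k).normed μ ⋆[ContinuousLinearMap.lsmul ℝ ℝ, μ] G) μ := fun G hG =>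
    ((φ k).hasCompactSupport_normed.continuous_convolution_left _ (φ k).continuous_normed
      hG).aestronglyMeasurable
  rw [hsplit]
  calc _ ≤ eLpNorm ((φ k).normed μ ⋆[ContinuousLinearMap.lsmul ℝ ℝ, μ] (F - c)) p μ
        + eLpNorm ((φ k).normed μ ⋆[ContinuousLinearMap.lsmul ℝ ℝ, μ] c - c) p μ
        + eLpNorm (c - F) p μ := by
        refine (eLpNorm_add_le ((hm _ (hFl.sub hcl)).add ((hm _ hcl).sub hcm.1))
          (hcm.1.sub hF.1) hp1).trans ?_
        gcongr
        exact eLpNorm_add_le (hm _ (hFl.sub hcl)) ((hm _ hcl).sub hcm.1) hp1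
    _ ≤ ε / 3 + ε / 3 + ε / 3 := by
        gcongr
        · exact (eLpNorm_convolution_normed_le (φ k) (hF.1.sub hcm.1) hp).trans hle
        · rw [eLpNorm_sub_comm]; exact hle
    _ = ε := ENNReal.add_thirds ε

end Mollification

lemma ContinuousLinearMap.ext_euclideanSpace_single {n : ℕ} {A B : EuclideanSpace ℝ (Fin n) →L[ℝ] ℝ}
    (h : ∀ i, A (EuclideanSpace.single i 1) = B (EuclideanSpace.single i 1)) : A = B := by
  have : (A : EuclideanSpace ℝ (Fin n) →ₗ[ℝ] ℝ) = B := by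
    refine (EuclideanSpace.basisFun (Fin n) ℝ).toBasis.ext fun i => ?_
    simpa using h i
  ext x
  exact DFunLike.congr_fun this x

/-- The gradient of a mollification is the mollification of the weak gradient. -/
lemma IsWeakGradOn.hasFDerivAt_convolution {n : ℕ} {Ω S : Set (EuclideanSpace ℝ (Fin n))}
    {u : EuclideanSpace ℝ (Fin n) → ℝ} {du : EuclideanSpace ℝ (Fin n) → EuclideanSpace ℝ (Fin n)}
    (hw : IsWeakGradOn n Ω u du) (hS : MeasurableSet S) (hSΩ : S ⊆ Ω)
    (hu : IntegrableOn u S) (hdu : IntegrableOn du S)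
    (φ : ContDiffBump (0 : EuclideanSpace ℝ (Fin n))) {x : EuclideanSpace ℝ (Fin n)}
    (hx : closedBall x φ.rOut ⊆ S) :
    HasFDerivAt (φ.normed volume ⋆[ContinuousLinearMap.lsmul ℝ ℝ, volume] S.indicator u)
      (innerSL ℝ ((φ.normed volume ⋆[ContinuousLinearMap.lsmul ℝ ℝ, volume] S.indicator du) x))
      x := by
  set ψ := φ.normed (volume : Measure (EuclideanSpace ℝ (Fin n))) with hψ
  have hψs : ContDiff ℝ (⊤ : ℕ∞) ψ := φ.contDiff_normed
  have hψc : HasCompactSupport ψ := φ.hasCompactSupport_normed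
  have hui : LocallyIntegrable (S.indicator u) :=
    ((integrable_indicator_iff hS).2 hu).locallyIntegrable
  have hdui : LocallyIntegrable (S.indicator du) :=
    ((integrable_indicator_iff hS).2 hdu).locallyIntegrable
  have h1 := hψc.hasFDerivAt_convolution_left (ContinuousLinearMap.lsmul ℝ ℝ)
    (hψs.of_le (by exact_mod_cast le_top)) hui x
  refine h1.congr_fderiv ?_
  refine ContinuousLinearMap.ext_euclideanSpace_single fun i => ?_
  set η : EuclideanSpace ℝ (Fin n) → ℝ := fun y => ψ (x - y) with hη
  have hηs : ContDiff ℝ (⊤ : ℕ∞) η := hψs.comp (contDiff_const.sub contDiff_id)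
  have hηt : tsupport η ⊆ closedBall x φ.rOut := by
    refine closure_minimal ?_ isClosed_closedBall
    intro y hy
    have : x - y ∈ tsupport ψ := subset_tsupport _ hy
    rw [hψ, φ.tsupport_normed_eq, mem_closedBall_zero_iff] at this
    rwa [mem_closedBall, dist_comm, dist_eq_norm]
  have hηc : HasCompactSupport η :=
    HasCompactSupport.of_support_subset_isCompact (isCompact_closedBall x φ.rOut)
      ((subset_tsupport _).trans hηt)
  have hzero : ∀ y, y ∉ S → η y = 0 := fun y hy => by
    by_contra h
    exact hy (hx (hηt (subset_tsupport _ h)))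
  have hzero' : ∀ y, y ∉ S → fderiv ℝ η y = 0 := fun y hy => by
    by_contra h
    exact hy (hx (hηt (support_fderiv_subset ℝ h)))
  have hfd : ∀ y, fderiv ℝ η y = - fderiv ℝ ψ (x - y) := by
    intro y
    have hd : HasFDerivAt ψ (fderiv ℝ ψ (x - y)) (x - y) :=
      ((hψs.differentiable (by simp)) _).hasFDerivAt
    have := hd.comp y ((hasFDerivAt_id y).const_sub x)
    have h2 := this.fderiv
    refine h2.trans ?_
    ext v; simp
  have hw' := hw η hηs hηc (hηt.trans (hx.trans hSΩ)) i
  have hexA : ConvolutionExistsAt (fderiv ℝ ψ) (S.indicator u) x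
      (ContinuousLinearMap.precompL _ (ContinuousLinearMap.lsmul ℝ ℝ)) volume :=
    (hψc.fderiv ℝ).convolutionExists_left _ (hψs.continuous_fderiv (by simp)) hui x
  have hexB : ConvolutionExistsAt ψ (S.indicator du) x (ContinuousLinearMap.lsmul ℝ ℝ) volume :=
    hψc.convolutionExists_left _ hψs.continuous hdui x
  have eA : ((fderiv ℝ ψ ⋆[ContinuousLinearMap.precompL _ (ContinuousLinearMap.lsmul ℝ ℝ), volume]
      S.indicator u) x) (EuclideanSpace.single i 1)
      = ∫ y in Ω, -(u y * (fderiv ℝ η y (EuclideanSpace.single i (1 : ℝ)))) := by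
    rw [convolution_def, ContinuousLinearMap.integral_apply hexA,
      ← integral_sub_left_eq_self _ volume x]
    rw [setIntegral_eq_integral_of_forall_compl_eq_zero
      (fun y hy => by rw [hzero' y fun h => hy (hSΩ h)]; simp)]
    refine integral_congr_ae (Eventually.of_forall fun y => ?_)
    have hv : fderiv ℝ ψ (x - y) = - fderiv ℝ η y := by rw [hfd, neg_neg]
    by_cases hy : y ∈ S
    · simp [ContinuousLinearMap.precompL_apply, hv, hy, mul_comm]
    · simp [hy, hzero' y hy]
  have eB : (innerSL ℝ ((ψ ⋆[ContinuousLinearMap.lsmul ℝ ℝ, volume] S.indicator du) x))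
      (EuclideanSpace.single i 1) = ∫ y in Ω, du y i * η y := by
    rw [convolution_def, ← integral_sub_left_eq_self _ volume x,
      setIntegral_eq_integral_of_forall_compl_eq_zero
      (fun y hy => by rw [hzero y fun h => hy (hSΩ h)]; simp)]
    have hi : Integrable fun y => (ContinuousLinearMap.lsmul ℝ ℝ (ψ (x - y)))
        (S.indicator du (x - (x - y))) := hexB.comp_sub_left x
    rw [innerSL_apply_apply, real_inner_comm, ← integral_inner hi]
    refine integral_congr_ae (Eventually.of_forall fun y => ?_)
    by_cases hy : y ∈ S
    · simp [hy, EuclideanSpace.inner_single_left, hη, mul_comm]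
    · simp [hy, hzero y hy]
  exact eA.trans (by rw [eB, integral_neg, hw', neg_neg])

/-- Smooth approximation of a weakly differentiable function, at prescribed speed. -/
lemma IsWeakGradOn.exists_smooth_approx {n : ℕ} {Ω K U : Set (EuclideanSpace ℝ (Fin n))}
    {u : EuclideanSpace ℝ (Fin n) → ℝ} {du : EuclideanSpace ℝ (Fin n) → EuclideanSpace ℝ (Fin n)}
    (hw : IsWeakGradOn n Ω u du) (hK : MeasurableSet K) (hKΩ : K ⊆ Ω)
    (hu : IntegrableOn u K) (hdu : IntegrableOn du K) {p : ℕ} (hp : 1 ≤ p)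
    (hdup : MemLp du p (volume.restrict K)) (hU : MeasurableSet U) {r : ℝ} (hr : 0 < r)
    (hUK : ∀ x ∈ U, closedBall x r ⊆ K) {ε : ℕ → ℝ≥0∞} (hε : ∀ k, 0 < ε k) :
    ∃ w : ℕ → EuclideanSpace ℝ (Fin n) → ℝ, ∀ k, ContDiff ℝ 1 (w k) ∧
      (HasCompactSupport u → HasCompactSupport (w k)) ∧
      ∫⁻ x in U, ‖w k x - u x‖ₑ ≤ ε k ∧
      ∫⁻ x in U, ‖fderiv ℝ (w k) x - innerSL ℝ (du x)‖ₑ ^ p ≤ ε k := by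
  have hp0 : p ≠ 0 := by omega
  let φ : ℕ → ContDiffBump (0 : EuclideanSpace ℝ (Fin n)) := fun k =>
    { rIn := r / (k + 2) / 2
      rOut := r / (k + 2)
      rIn_pos := by positivity
      rIn_lt_rOut := by have : 0 < r / ((k : ℝ) + 2) := by positivity
                        linarith }
  have hφ : Tendsto (fun k => (φ k).rOut) atTop (𝓝 0) := by
    have : Tendsto (fun k : ℕ => (k : ℝ) + 2) atTop atTop :=
      tendsto_atTop_add_const_right _ _ tendsto_natCast_atTop_atTop
    exact this.const_div_atTop r
  have hφr : ∀ k, (φ k).rOut ≤ r := fun k => by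
    change r / ((k : ℝ) + 2) ≤ r
    refine div_le_self hr.le ?_
    have : (0 : ℝ) ≤ k := k.cast_nonneg
    linarith
  have hui : Integrable (K.indicator u) := (integrable_indicator_iff hK).2 hu
  have hu1 : MemLp (K.indicator u) (1 : ℕ) volume := by
    simpa using memLp_one_iff_integrable.2 hui
  have hdu1 : MemLp (K.indicator du) p volume := (memLp_indicator_iff_restrict hK).2 hdup
  have t1 := tendsto_eLpNorm_convolution_sub hφ le_rfl hu1
  have t2 := tendsto_eLpNorm_convolution_sub hφ hp hdu1
  have hUsub : U ⊆ K := fun x hx => hUK x hx (mem_closedBall_self hr.le)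
  have key : ∀ k, ∃ w : EuclideanSpace ℝ (Fin n) → ℝ, ContDiff ℝ 1 w ∧
      (HasCompactSupport u → HasCompactSupport w) ∧
      ∫⁻ x in U, ‖w x - u x‖ₑ ≤ ε k ∧
      ∫⁻ x in U, ‖fderiv ℝ w x - innerSL ℝ (du x)‖ₑ ^ p ≤ ε k := by
    intro k
    have h1 := ENNReal.tendsto_nhds_zero.1 t1 (ε k) (hε k)
    have hεp : 0 < ε k ^ (1 / (p : ℝ)) := by
      by_cases h : ε k = ⊤
      · rw [h, ENNReal.top_rpow_of_pos (by positivity)]; simp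
      · exact ENNReal.rpow_pos (hε k) h
    have h2 := ENNReal.tendsto_nhds_zero.1 t2 _ hεp
    obtain ⟨j, hj1, hj2⟩ := (h1.and h2).exists
    refine ⟨(φ j).normed volume ⋆[ContinuousLinearMap.lsmul ℝ ℝ, volume] K.indicator u,
      (φ j).hasCompactSupport_normed.contDiff_convolution_left (n := 1)
      (ContinuousLinearMap.lsmul ℝ ℝ) (φ j).contDiff_normed hui.locallyIntegrable, ?_, ?_, ?_⟩
    · intro hcs
      exact (φ j).hasCompactSupport_normed.convolution _
        (hcs.mono (by intro x hx h; exact hx (by simp [Set.indicator, h])))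
    · refine le_trans ?_ hj1
      rw [Nat.cast_one, eLpNorm_one_eq_lintegral_enorm]
      refine le_trans (le_of_eq ?_) (setLIntegral_le_lintegral U _)
      refine setLIntegral_congr_fun hU fun x hx => ?_
      simp [Set.indicator_of_mem (hUsub hx)]
    · have h3 : ∫⁻ x in U, ‖fderiv ℝ ((φ j).normed volume ⋆[ContinuousLinearMap.lsmul ℝ ℝ,
          volume] K.indicator u) x - innerSL ℝ (du x)‖ₑ ^ p
          ≤ ∫⁻ x, ‖((φ j).normed volume ⋆[ContinuousLinearMap.lsmul ℝ ℝ, volume]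
            K.indicator du - K.indicator du) x‖ₑ ^ p := by
        refine le_trans (le_of_eq ?_) (setLIntegral_le_lintegral U _)
        refine setLIntegral_congr_fun hU fun x hx => ?_
        have hd := (hw.hasFDerivAt_convolution hK hKΩ hu hdu (φ j)
          ((closedBall_subset_closedBall (hφr j)).trans (hUK x hx))).fderiv
        beta_reduce
        rw [hd, ← map_sub, Pi.sub_apply, Set.indicator_of_mem (hUsub hx)]
        congr 1
        rw [← ofReal_norm, ← ofReal_norm, innerSL_apply_norm]
      refine h3.trans ?_
      rw [eLpNorm_eq_lintegral_rpow_enorm_toReal (by exact_mod_cast hp0) (by simp)] at hj2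
      simp only [ENNReal.toReal_natCast, ENNReal.rpow_natCast] at hj2
      exact (ENNReal.rpow_le_rpow_iff (by positivity)).1 hj2
  choose w hw using key
  exact ⟨w, hw⟩

lemma lintegral_le_rpow_mul_measure_rpow {α : Type*} [MeasurableSpace α] (ν : Measure α)
    {h : α → ℝ≥0∞} (hh : AEMeasurable h ν) {p : ℕ} (hp : 1 ≤ p) :
    ∫⁻ x, h x ∂ν ≤ (∫⁻ x, h x ^ p ∂ν) ^ (1 / (p : ℝ)) * ν univ ^ (1 - 1 / (p : ℝ)) := by
  have hp0 : p ≠ 0 := by omega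
  have h := eLpNorm_le_eLpNorm_mul_rpow_measure_univ (μ := ν) (p := 1) (q := (p : ℝ≥0∞)) (f := h)
    (by exact_mod_cast hp) hh.aestronglyMeasurable
  rw [eLpNorm_one_eq_lintegral_enorm, eLpNorm_eq_lintegral_rpow_enorm_toReal
    (by exact_mod_cast hp0) (by simp)] at h
  simpa using h

lemma lintegral_closedBall_comp_smul {n : ℕ} {h : EuclideanSpace ℝ (Fin n) → ℝ≥0∞}
    (hh : Measurable h) (y : EuclideanSpace ℝ (Fin n)) (a : ℝ) {t : ℝ} (ht : 0 < t) :
    ∫⁻ z in closedBall 0 a, h (y + t • z)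
      = ENNReal.ofReal ((t ^ n)⁻¹) * ∫⁻ x in closedBall y (t * a), h x := by
  have hmap : Measure.map (fun z : EuclideanSpace ℝ (Fin n) => y + t • z) volume
      = ENNReal.ofReal ((t ^ n)⁻¹) • volume := by
    have h1 := Measure.map_addHaar_smul (volume : Measure (EuclideanSpace ℝ (Fin n))) ht.ne'
    have h2 : (fun z : EuclideanSpace ℝ (Fin n) => y + t • z) = (fun z => y + z) ∘ (fun z => t • z) :=
      rfl
    rw [h2, ← Measure.map_map (by fun_prop) (by fun_prop), h1, Measure.map_smul,
      (measurePreserving_add_left volume y).map_eq]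
    simp [abs_of_pos ht]
  rw [← lintegral_indicator measurableSet_closedBall, ← lintegral_indicator measurableSet_closedBall,
    ← smul_eq_mul, ← lintegral_smul_measure, ← hmap, lintegral_map (hh.indicator measurableSet_closedBall)
      (by fun_prop)]
  refine lintegral_congr fun z => ?_
  have : y + t • z ∈ closedBall y (t * a) ↔ z ∈ closedBall (0 : EuclideanSpace ℝ (Fin n)) a := by
    simp [norm_smul, abs_of_pos ht, ht]
  by_cases hz : z ∈ closedBall (0 : EuclideanSpace ℝ (Fin n)) a
  · rw [indicator_of_mem hz, indicator_of_mem (this.2 hz)]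
  · rw [indicator_of_notMem hz, indicator_of_notMem (fun h => hz (this.1 h))]

lemma enorm_le_enorm_add_lintegral_fderiv {E : Type*} [NormedAddCommGroup E] [NormedSpace ℝ E]
    {v : E → ℝ} (hv : ContDiff ℝ 1 v) (y z : E) :
    ‖v y‖ₑ ≤ ‖v (y + z)‖ₑ + ‖z‖ₑ * ∫⁻ t in Ioc (0 : ℝ) 1, ‖fderiv ℝ v (y + t • z)‖ₑ := by
  have hc : Continuous fun t : ℝ => fderiv ℝ v (y + t • z) :=
    (hv.continuous_fderiv (by simp)).comp (by fun_prop)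
  have hd : ∀ t : ℝ, HasDerivAt (fun t : ℝ => v (y + t • z)) (fderiv ℝ v (y + t • z) z) t := by
    intro t
    have h1 : HasDerivAt (fun t : ℝ => y + t • z) z t := by
      simpa using ((hasDerivAt_id t).smul_const z).const_add y
    exact ((hv.differentiable (by simp)) _).hasFDerivAt.comp_hasDerivAt t h1
  have hF := intervalIntegral.integral_eq_sub_of_hasDerivAt (fun t _ => hd t)
    ((hc.clm_apply continuous_const).intervalIntegrable 0 1)
  rw [intervalIntegral.integral_of_le zero_le_one] at hF
  simp only [one_smul, zero_smul, add_zero] at hF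
  have h2 : v y = v (y + z) - ∫ t in Ioc (0 : ℝ) 1, fderiv ℝ v (y + t • z) z := by
    rw [hF]; ring
  rw [h2]
  refine enorm_sub_le.trans (add_le_add (by simp) ?_)
  refine (enorm_integral_le_lintegral_enorm _).trans ?_
  rw [← lintegral_const_mul _ hc.enorm.measurable]
  refine lintegral_mono fun t => ?_
  rw [mul_comm]
  exact ContinuousLinearMap.le_opENorm _ _

lemma lintegral_ofReal_rpow_sub_one {s : ℝ} (hs : 0 < s) :
    ∫⁻ t in Ioc (0 : ℝ) 1, ENNReal.ofReal (t ^ (s - 1)) = ENNReal.ofReal (1 / s) := by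
  have hi : IntegrableOn (fun t : ℝ => t ^ (s - 1)) (Ioc 0 1) :=
    (intervalIntegral.intervalIntegrable_rpow' (by linarith)).1
  rw [← ofReal_integral_eq_lintegral_ofReal hi, ← intervalIntegral.integral_of_le zero_le_one,
    integral_rpow (Or.inl (by linarith))]
  · simp [hs.ne']
  · filter_upwards [ae_restrict_mem measurableSet_Ioc] with t ht
    exact Real.rpow_nonneg ht.1.le _

lemma volume_closedBall_eq {n : ℕ} (y : EuclideanSpace ℝ (Fin n)) {r : ℝ} (hr : 0 ≤ r) :
    volume (closedBall y r) = ENNReal.ofReal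
      (r ^ n * (volume (closedBall (0 : EuclideanSpace ℝ (Fin n)) 1)).toReal) := by
  rw [Measure.addHaar_closedBall' _ _ hr, ENNReal.ofReal_mul (by positivity),
    ENNReal.ofReal_toReal measure_closedBall_lt_top.ne, finrank_euclideanSpace_fin]

lemma volume_unitBall_toReal_pos {n : ℕ} :
    0 < (volume (closedBall (0 : EuclideanSpace ℝ (Fin n)) 1)).toReal :=
  ENNReal.toReal_pos (measure_closedBall_pos volume _ one_pos).ne' measure_closedBall_lt_top.ne

/-- If the `n`-energy on balls centred at `y` decays at most linearly, the value at `y` is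
controlled by the mean value. -/
lemma volume_mul_enorm_le_of_energy_le {n : ℕ} (hn : 1 ≤ n) {v : EuclideanSpace ℝ (Fin n) → ℝ}
    (hv : ContDiff ℝ 1 v) (y : EuclideanSpace ℝ (Fin n)) {a ρ : ℝ} (ha : 0 < a) (hρ : 0 ≤ ρ)
    (h : ∀ s ∈ Ioc 0 a, ∫⁻ x in closedBall y s, ‖fderiv ℝ v x‖ₑ ^ n ≤ ENNReal.ofReal
      ((volume (closedBall (0 : EuclideanSpace ℝ (Fin n)) 1)).toReal * ρ ^ n / a * s)) :
    volume (closedBall y a) * ‖v y‖ₑ ≤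
      (∫⁻ x in closedBall y a, ‖v x‖ₑ) + volume (closedBall y a) * ENNReal.ofReal (n * ρ) := by
  set β := (volume (closedBall (0 : EuclideanSpace ℝ (Fin n)) 1)).toReal with hβ
  have hβ0 : 0 < β := volume_unitBall_toReal_pos
  have hn0 : (0 : ℝ) < n := by exact_mod_cast hn
  have hcf : Continuous fun x => ‖fderiv ℝ v x‖ₑ := (hv.continuous_fderiv (by simp)).enorm
  have hcv : Continuous fun x => ‖v x‖ₑ := hv.continuous.enorm
  have hpt : ∀ t ∈ Ioc (0 : ℝ) 1, ∫⁻ z in closedBall (0 : EuclideanSpace ℝ (Fin n)) a,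
      ‖fderiv ℝ v (y + t • z)‖ₑ ≤
      ENNReal.ofReal (β * ρ * a ^ (n - 1)) * ENNReal.ofReal (t ^ (1 / (n : ℝ) - 1)) := by
    intro t ht
    have ht0 : 0 < t := ht.1
    have hta : 0 < t * a := mul_pos ht.1 ha
    rw [lintegral_closedBall_comp_smul hcf.measurable y a ht.1]
    have h1 := lintegral_le_rpow_mul_measure_rpow (volume.restrict (closedBall y (t * a)))
      hcf.measurable.aemeasurable hn
    have h2 := h (t * a) ⟨hta, by nlinarith [ht.2]⟩
    rw [Measure.restrict_apply_univ, volume_closedBall_eq y hta.le] at h1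
    have hexp : 0 ≤ 1 - 1 / (n : ℝ) := by
      rw [sub_nonneg, div_le_one hn0]; exact_mod_cast hn
    have h3 : ∫⁻ x in closedBall y (t * a), ‖fderiv ℝ v x‖ₑ ≤ ENNReal.ofReal
        ((β * ρ ^ n / a * (t * a)) ^ (1 / (n : ℝ)) * ((t * a) ^ n * β) ^ (1 - 1 / (n : ℝ))) := by
      refine h1.trans ?_
      rw [ENNReal.ofReal_mul (p := (β * ρ ^ n / a * (t * a)) ^ (1 / (n : ℝ))) (by positivity),
        ← ENNReal.ofReal_rpow_of_nonneg (by positivity) (by positivity),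
        ← ENNReal.ofReal_rpow_of_nonneg (by positivity) hexp]
      gcongr
    refine (mul_le_mul_right h3 _).trans (le_of_eq ?_)
    rw [← ENNReal.ofReal_mul (by positivity), ← ENNReal.ofReal_mul (by positivity)]
    congr 1
    have e1 : β * ρ ^ n / a * (t * a) = β * ρ ^ n * t := by field_simp
    have e2 : (ρ ^ n) ^ (1 / (n : ℝ)) = ρ := by
      rw [one_div]; exact Real.pow_rpow_inv_natCast hρ (by omega)
    have e3 : ((t * a) ^ n) ^ (1 - 1 / (n : ℝ)) = (t * a) ^ (n - 1) := by
      rw [← Real.rpow_natCast, ← Real.rpow_natCast, ← Real.rpow_mul hta.le, Nat.cast_sub hn]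
      congr 1
      field_simp
      simp
    have e4 : β ^ (1 / (n : ℝ)) * β ^ (1 - 1 / (n : ℝ)) = β := by
      rw [← Real.rpow_add hβ0]; simp
    have e5 : t ^ (1 / (n : ℝ) - 1) = t ^ (1 / (n : ℝ)) / t := by
      rw [Real.rpow_sub ht.1, Real.rpow_one]
    have e6 : t ^ n = t ^ (n - 1) * t := by rw [← pow_succ]; congr 1; omega
    rw [e1, Real.mul_rpow (by positivity) ht.1.le, Real.mul_rpow hβ0.le (by positivity), e2,
      Real.mul_rpow (by positivity) hβ0.le, e3, e5, e6]
    calc _ = (t ^ (n - 1) * t)⁻¹ * (ρ * t ^ (1 / (n : ℝ)) * (t * a) ^ (n - 1)) *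
          (β ^ (1 / (n : ℝ)) * β ^ (1 - 1 / (n : ℝ))) := by ring
      _ = _ := by
        rw [e4, mul_pow]
        field_simp
  calc volume (closedBall y a) * ‖v y‖ₑ
      = ∫⁻ z in closedBall (0 : EuclideanSpace ℝ (Fin n)) a, ‖v y‖ₑ := by
        rw [setLIntegral_const, volume_closedBall_eq y ha.le, volume_closedBall_eq 0 ha.le, mul_comm]
    _ ≤ ∫⁻ z in closedBall (0 : EuclideanSpace ℝ (Fin n)) a, (‖v (y + (1 : ℝ) • z)‖ₑ +
          ENNReal.ofReal a * ∫⁻ t in Ioc (0 : ℝ) 1, ‖fderiv ℝ v (y + t • z)‖ₑ) := by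
        refine setLIntegral_mono' measurableSet_closedBall fun z hz => ?_
        rw [one_smul]
        refine (enorm_le_enorm_add_lintegral_fderiv hv y z).trans ?_
        gcongr
        rw [← ofReal_norm]
        exact ENNReal.ofReal_le_ofReal (by simpa using hz)
    _ = (∫⁻ x in closedBall y a, ‖v x‖ₑ) + ENNReal.ofReal a * ∫⁻ t in Ioc (0 : ℝ) 1,
          ∫⁻ z in closedBall (0 : EuclideanSpace ℝ (Fin n)) a, ‖fderiv ℝ v (y + t • z)‖ₑ := by
        have hm : Measurable fun p : EuclideanSpace ℝ (Fin n) × ℝ =>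
            ‖fderiv ℝ v (y + p.2 • p.1)‖ₑ :=
          (hcf.comp (by fun_prop : Continuous fun p : EuclideanSpace ℝ (Fin n) × ℝ =>
            y + p.2 • p.1)).measurable
        rw [lintegral_add_left (f := fun z => ‖v (y + (1 : ℝ) • z)‖ₑ) (hcv.comp
            (by fun_prop : Continuous fun z => y + (1 : ℝ) • z)).measurable,
          lintegral_const_mul _ hm.lintegral_prod_right', lintegral_lintegral_swap hm.aemeasurable,
          lintegral_closedBall_comp_smul hcv.measurable y a one_pos]
        simp
    _ ≤ (∫⁻ x in closedBall y a, ‖v x‖ₑ) + ENNReal.ofReal a * ∫⁻ t in Ioc (0 : ℝ) 1,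
          ENNReal.ofReal (β * ρ * a ^ (n - 1)) * ENNReal.ofReal (t ^ (1 / (n : ℝ) - 1)) := by
        exact add_le_add le_rfl (mul_le_mul_right (setLIntegral_mono' measurableSet_Ioc hpt) _)
    _ = _ := by
        rw [lintegral_const_mul _ (by fun_prop), lintegral_ofReal_rpow_sub_one (by positivity),
          volume_closedBall_eq y ha.le, ← ENNReal.ofReal_mul (by positivity),
          ← ENNReal.ofReal_mul (by positivity), ← ENNReal.ofReal_mul (by positivity)]
        refine congrArg₂ _ rfl (congrArg ENNReal.ofReal ?_)
        have e6 : a ^ n = a ^ (n - 1) * a := by rw [← pow_succ]; congr 1; omega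
        rw [e6, ← hβ]
        field_simp

/-- Capacity estimate: the set of radii whose sphere carries a large value of `v` is small. -/
lemma volume_bad_radii_le {n : ℕ} (hn : 1 ≤ n) {v : EuclideanSpace ℝ (Fin n) → ℝ}
    (hv : ContDiff ℝ 1 v) (x₀ : EuclideanSpace ℝ (Fin n)) {a ρ : ℝ} (ha : 0 < a) (hρ : 0 < ρ)
    (hI : ∫⁻ x in closedBall x₀ (3 * a), ‖v x‖ₑ ≤
      volume (closedBall (0 : EuclideanSpace ℝ (Fin n)) a) * ENNReal.ofReal (n * ρ)) :
    volume {r ∈ Ioo a (2 * a) | ∃ y, dist y x₀ = r ∧ 2 * (n * ρ) < ‖v y‖} ≤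
      ENNReal.ofReal
        (10 * a / ((volume (closedBall (0 : EuclideanSpace ℝ (Fin n)) 1)).toReal * ρ ^ n)) *
        ∫⁻ x in closedBall x₀ (3 * a), ‖fderiv ℝ v x‖ₑ ^ n := by
  set β := (volume (closedBall (0 : EuclideanSpace ℝ (Fin n)) 1)).toReal with hβ
  have hβ0 : 0 < β := volume_unitBall_toReal_pos
  set T : Set (EuclideanSpace ℝ (Fin n)) :=
    {y | dist y x₀ ∈ Ioo a (2 * a) ∧ 2 * (n * ρ) < ‖v y‖} with hT
  have hsub : ∀ y ∈ T, ∀ s ≤ a, closedBall y s ⊆ closedBall x₀ (3 * a) := by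
    intro y hy s hs
    exact closedBall_subset_closedBall' (by linarith [hy.1.2])
  have hex : ∀ y ∈ T, ∃ s ∈ Ioc 0 a, ENNReal.ofReal (β * ρ ^ n / a * s) <
      ∫⁻ x in closedBall y s, ‖fderiv ℝ v x‖ₑ ^ n := by
    intro y hy
    by_contra! hcon
    have h1 := volume_mul_enorm_le_of_energy_le hn hv y ha hρ.le hcon
    have hvol : volume (closedBall (0 : EuclideanSpace ℝ (Fin n)) a) = volume (closedBall y a) := by
      rw [volume_closedBall_eq y ha.le, volume_closedBall_eq 0 ha.le]
    have h2 : volume (closedBall y a) * ‖v y‖ₑ ≤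
        volume (closedBall y a) * ENNReal.ofReal (2 * (n * ρ)) := by
      rw [two_mul, ENNReal.ofReal_add (by positivity) (by positivity), mul_add]
      refine h1.trans (add_le_add ?_ le_rfl)
      rw [← hvol]
      exact (lintegral_mono_set (hsub y hy a le_rfl)).trans hI
    rw [ENNReal.mul_le_mul_iff_right (measure_closedBall_pos volume _ ha).ne'
      measure_closedBall_lt_top.ne, ← ofReal_norm,
      ENNReal.ofReal_le_ofReal_iff (by positivity)] at h2
    exact absurd hy.2 (not_lt.2 h2)
  choose! s hs hse using hex
  obtain ⟨u, huT, hud, hcov⟩ := Vitali.exists_disjoint_subfamily_covering_enlargement_closedBall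
    T id s a (fun y hy => (hs y hy).2) 5 (by norm_num)
  simp only [id] at hud hcov
  have hcount : u.Countable := hud.countable_of_nonempty_interior fun y hy => by
    rw [interior_closedBall _ (hs y (huT hy)).1.ne']
    exact nonempty_ball.2 (hs y (huT hy)).1
  calc volume {r ∈ Ioo a (2 * a) | ∃ y, dist y x₀ = r ∧ 2 * (n * ρ) < ‖v y‖}
      ≤ volume (⋃ b ∈ u, Icc (dist b x₀ - 5 * s b) (dist b x₀ + 5 * s b)) := by
        refine measure_mono ?_
        rintro r ⟨hr, y, rfl, hy⟩
        obtain ⟨b, hb, hyb⟩ := hcov y ⟨hr, hy⟩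
        have hyb' : dist y b ≤ 5 * s b := hyb (mem_closedBall_self (hs y ⟨hr, hy⟩).1.le)
        refine mem_biUnion hb ⟨?_, ?_⟩
        · linarith [dist_triangle b y x₀, dist_comm b y]
        · linarith [dist_triangle y b x₀]
    _ ≤ ∑' b : u, volume (Icc (dist b.1 x₀ - 5 * s b) (dist b.1 x₀ + 5 * s b)) :=
        measure_biUnion_le volume hcount _
    _ ≤ ∑' b : u, ENNReal.ofReal (10 * a / (β * ρ ^ n)) *
          ∫⁻ x in closedBall b.1 (s b), ‖fderiv ℝ v x‖ₑ ^ n := by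
        refine ENNReal.tsum_le_tsum fun b => ?_
        refine le_trans (le_of_eq ?_) (mul_le_mul_right (hse b (huT b.2)).le _)
        rw [Real.volume_Icc, ← ENNReal.ofReal_mul (by positivity)]
        congr 1
        field_simp
        ring
    _ = ENNReal.ofReal (10 * a / (β * ρ ^ n)) *
          ∫⁻ x in ⋃ b ∈ u, closedBall b (s b), ‖fderiv ℝ v x‖ₑ ^ n := by
        rw [ENNReal.tsum_mul_left, lintegral_biUnion hcount (fun _ _ => measurableSet_closedBall) hud]
    _ ≤ _ := by
        gcongr
        exact iUnion₂_subset fun b hb => hsub b (huT hb) _ (hs b (huT hb)).2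

lemma ENNReal.add_pow_le_two_pow_mul (x y : ℝ≥0∞) (n : ℕ) :
    (x + y) ^ n ≤ 2 ^ n * (x ^ n + y ^ n) := by
  rcases le_total x y with h | h
  · calc (x + y) ^ n ≤ (2 * y) ^ n := by rw [two_mul]; gcongr
      _ ≤ _ := by rw [mul_pow]; gcongr; exact le_add_self
  · calc (x + y) ^ n ≤ (2 * x) ^ n := by rw [two_mul]; gcongr
      _ ≤ _ := by rw [mul_pow]; gcongr; exact le_self_add

lemma enorm_le_enorm_sub_add {F : Type*} [SeminormedAddCommGroup F] (x y : F) :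
    ‖x‖ₑ ≤ ‖x - y‖ₑ + ‖y‖ₑ := by
  simpa [edist_eq_enorm_sub] using edist_triangle x y 0

lemma enorm_sub_le_enorm_sub_add {F : Type*} [SeminormedAddCommGroup F] (x y z : F) :
    ‖x - y‖ₑ ≤ ‖y - z‖ₑ + ‖x - z‖ₑ := by
  rw [add_comm, ← edist_eq_enorm_sub, ← edist_eq_enorm_sub, ← edist_eq_enorm_sub]
  exact edist_triangle_right x y z

lemma ENNReal.exists_seq_add_le_and_mul_le {A C t : ℕ → ℝ≥0∞} (hA : ∀ k, A k ≠ 0)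
    (hC : ∀ k, C k ≠ ⊤) (ht : ∀ k, t k ≠ 0) :
    ∃ ε : ℕ → ℝ≥0∞, (∀ k, 0 < ε k) ∧
      ∀ k, ε k + ε (k + 1) ≤ A k ∧ C k * (ε k + ε (k + 1)) ≤ t k := by
  set d : ℕ → ℝ≥0∞ := fun k => min (A k) (t k / C k) / 2 with hd
  have hd0 : ∀ k, 0 < d k := fun k =>
    ENNReal.half_pos (lt_min (pos_iff_ne_zero.2 (hA k)) (ENNReal.div_pos (ht k) (hC k))).ne'
  have hadd : ∀ k, min (d k) (d (k - 1)) + min (d (k + 1)) (d (k + 1 - 1))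
      ≤ min (A k) (t k / C k) := fun k =>
    (add_le_add (min_le_left _ _) (min_le_right _ _)).trans (by
      rw [Nat.add_sub_cancel, hd]; simp only; rw [ENNReal.add_halves])
  refine ⟨fun k => min (d k) (d (k - 1)), fun k => lt_min (hd0 _) (hd0 _), fun k => ⟨?_, ?_⟩⟩
  · exact (hadd k).trans (min_le_left _ _)
  · exact (mul_le_mul_right ((hadd k).trans (min_le_right _ _)) _).trans ENNReal.mul_div_le

/-- If `u` is close to the constant `c` in mean and has small energy near `x₀`, there is a sphere
centred at `x₀` on which smooth approximations of `u` are uniformly close to `c`. -/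
lemma IsWeakGradOn.exists_sphere {n : ℕ} (hn : 1 ≤ n) {Ω : Set (EuclideanSpace ℝ (Fin n))}
    {u : EuclideanSpace ℝ (Fin n) → ℝ} {du : EuclideanSpace ℝ (Fin n) → EuclideanSpace ℝ (Fin n)}
    (hw : IsWeakGradOn n Ω u du) {x₀ : EuclideanSpace ℝ (Fin n)} {a ρ c : ℝ} (ha : 0 < a)
    (hρ : 0 < ρ) (hΩ : closedBall x₀ (4 * a) ⊆ Ω) (hu : IntegrableOn u (closedBall x₀ (4 * a)))
    (hdu : IntegrableOn du (closedBall x₀ (4 * a)))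
    (hdup : MemLp du n (volume.restrict (closedBall x₀ (4 * a))))
    (h1 : ∫⁻ x in closedBall x₀ (3 * a), ‖u x - c‖ₑ ≤
      volume (closedBall (0 : EuclideanSpace ℝ (Fin n)) a) * ENNReal.ofReal (n * (ρ / 2)))
    (h2 : ENNReal.ofReal
        (10 * a / ((volume (closedBall (0 : EuclideanSpace ℝ (Fin n)) 1)).toReal * ρ ^ n)) *
        (2 ^ n * ∫⁻ x in closedBall x₀ (3 * a), ‖du x‖ₑ ^ n) ≤ ENNReal.ofReal (a / 8)) :
    ∃ r ∈ Ioo a (2 * a), ∃ w : ℕ → EuclideanSpace ℝ (Fin n) → ℝ, (∀ k, ContDiff ℝ 1 (w k)) ∧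
      Tendsto (fun k => ∫⁻ x in closedBall x₀ r, ‖w k x - u x‖ₑ) atTop (𝓝 0) ∧
      Tendsto (fun k => ∫⁻ x in closedBall x₀ r, ‖fderiv ℝ (w k) x - innerSL ℝ (du x)‖ₑ)
        atTop (𝓝 0) ∧
      ∀ k y, dist y x₀ = r → ‖w k y - c‖ ≤ 4 * (n * ρ) := by
  set β := (volume (closedBall (0 : EuclideanSpace ℝ (Fin n)) 1)).toReal with hβ
  have hβ0 : 0 < β := volume_unitBall_toReal_pos
  have hn0 : (0 : ℝ) < n := by exact_mod_cast hn
  set C : ℝ → ℝ≥0∞ := fun s => ENNReal.ofReal (10 * a / (β * s ^ n)) with hC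
  set vol := volume (closedBall (0 : EuclideanSpace ℝ (Fin n)) a) with hvol
  have hvol0 : vol ≠ 0 := (measure_closedBall_pos volume _ ha).ne'
  have hvolt : vol ≠ ⊤ := measure_closedBall_lt_top.ne
  set σ : ℕ → ℝ := fun k => ρ * (1 / 2) ^ (k + 1) with hσ
  have hσ0 : ∀ k, 0 < σ k := fun k => by positivity
  obtain ⟨ε, hε0, hε⟩ := ENNReal.exists_seq_add_le_and_mul_le
    (A := fun k => vol * ENNReal.ofReal (n * σ k)) (C := fun k => C (σ k) * 2 ^ n)
    (t := fun k => ENNReal.ofReal (a / 16 * (1 / 2) ^ k))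
    (fun k => mul_ne_zero hvol0 (by
      have := mul_pos hn0 (hσ0 k)
      exact (ENNReal.ofReal_pos.2 this).ne'))
    (fun k => ENNReal.mul_ne_top ENNReal.ofReal_ne_top (by simp)) (fun k => by
      have : 0 < a / 16 * (1 / 2) ^ k := by positivity
      simpa using this)
  obtain ⟨w, hwa⟩ := hw.exists_smooth_approx (K := closedBall x₀ (4 * a))
    (U := closedBall x₀ (3 * a)) measurableSet_closedBall hΩ hu hdu hn hdup
    measurableSet_closedBall ha (fun x hx => closedBall_subset_closedBall' (by
      have := mem_closedBall.1 hx; linarith)) hε0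
  have hw1 : ∀ k, ContDiff ℝ 1 (w k) := fun k => (hwa k).1
  have hwu : ∀ k, ∫⁻ x in closedBall x₀ (3 * a), ‖w k x - u x‖ₑ ≤ ε k := fun k => (hwa k).2.2.1
  have hwd : ∀ k, ∫⁻ x in closedBall x₀ (3 * a), ‖fderiv ℝ (w k) x - innerSL ℝ (du x)‖ₑ ^ n ≤ ε k :=
    fun k => (hwa k).2.2.2
  have hsub3 : closedBall x₀ (3 * a) ⊆ closedBall x₀ (4 * a) :=
    closedBall_subset_closedBall (by linarith)
  have hmu : AEMeasurable u (volume.restrict (closedBall x₀ (3 * a))) :=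
    (hu.mono_set hsub3).aemeasurable
  have hmd : AEMeasurable du (volume.restrict (closedBall x₀ (3 * a))) :=
    (hdu.mono_set hsub3).aemeasurable
  have hmw : ∀ k, Measurable (w k) := fun k => (hw1 k).continuous.measurable
  have hcw : ∀ k, Continuous (fderiv ℝ (w k)) := fun k => (hw1 k).continuous_fderiv (by simp)
  have hmdw : ∀ k, AEMeasurable (fun x => ‖fderiv ℝ (w k) x - innerSL ℝ (du x)‖ₑ)
      (volume.restrict (closedBall x₀ (3 * a))) := fun k =>
    ((hcw k).measurable.aemeasurable.sub
      ((innerSL ℝ).continuous.measurable.comp_aemeasurable hmd)).enorm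
  have hB0 : volume {r ∈ Ioo a (2 * a) | ∃ y, dist y x₀ = r ∧ 2 * (n * ρ) < ‖w 0 y - c‖} ≤
      ENNReal.ofReal (a / 4) := by
    have hv : ContDiff ℝ 1 fun y => w 0 y - c := (hw1 0).sub contDiff_const
    refine (volume_bad_radii_le hn hv x₀ ha hρ ?_).trans ?_
    · calc ∫⁻ x in closedBall x₀ (3 * a), ‖w 0 x - c‖ₑ
          ≤ ∫⁻ x in closedBall x₀ (3 * a), (‖w 0 x - u x‖ₑ + ‖u x - c‖ₑ) := by
            refine lintegral_mono fun x => ?_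
            refine le_trans (le_of_eq ?_) (enorm_add_le _ _)
            congr 1; ring
        _ = (∫⁻ x in closedBall x₀ (3 * a), ‖w 0 x - u x‖ₑ) +
              ∫⁻ x in closedBall x₀ (3 * a), ‖u x - c‖ₑ :=
            lintegral_add_right' _ (hmu.sub_const c).enorm
        _ ≤ vol * ENNReal.ofReal (n * σ 0) + vol * ENNReal.ofReal (n * (ρ / 2)) :=
            add_le_add ((hwu 0).trans (le_self_add.trans (hε 0).1)) h1
        _ = _ := by
            rw [← mul_add, ← ENNReal.ofReal_add (by positivity) (by positivity)]
            congr 2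
            simp only [hσ]; ring
    · have hfd : ∀ x, fderiv ℝ (fun y => w 0 y - c) x = fderiv ℝ (w 0) x := fun x => by
        rw [fderiv_sub_const]
      simp_rw [hfd]
      calc C ρ * ∫⁻ x in closedBall x₀ (3 * a), ‖fderiv ℝ (w 0) x‖ₑ ^ n
          ≤ C ρ * ∫⁻ x in closedBall x₀ (3 * a),
              2 ^ n * (‖fderiv ℝ (w 0) x - innerSL ℝ (du x)‖ₑ ^ n + ‖du x‖ₑ ^ n) := by
            refine mul_le_mul_right (lintegral_mono fun x => ?_) _
            refine le_trans ?_ (ENNReal.add_pow_le_two_pow_mul _ _ n)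
            gcongr
            have h3 : ‖innerSL ℝ (du x)‖ₑ = ‖du x‖ₑ := by
              rw [← ofReal_norm, ← ofReal_norm, innerSL_apply_norm]
            rw [← h3]
            exact enorm_le_enorm_sub_add _ _
        _ ≤ C ρ * (2 ^ n * ε 0) + C ρ * (2 ^ n * ∫⁻ x in closedBall x₀ (3 * a), ‖du x‖ₑ ^ n) := by
            rw [lintegral_const_mul' _ _ (by simp), lintegral_add_left' ((hmdw 0).pow_const n),
              mul_add, mul_add]
            gcongr
            exact hwd 0
        _ ≤ ENNReal.ofReal (a / 8) + ENNReal.ofReal (a / 8) := by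
            refine add_le_add ?_ h2
            have h4 := (hε 0).2
            calc C ρ * (2 ^ n * ε 0) ≤ C (σ 0) * (2 ^ n * (ε 0 + ε (0 + 1))) := by
                  gcongr
                  · refine ENNReal.ofReal_le_ofReal ?_
                    have := hσ0 0
                    gcongr
                    simp only [hσ]; linarith
                  · exact le_self_add
              _ ≤ _ := by
                  rw [← mul_assoc]
                  refine h4.trans (ENNReal.ofReal_le_ofReal ?_)
                  simp only [pow_zero]; linarith
        _ = _ := by
            rw [← ENNReal.ofReal_add (by positivity) (by positivity)]
            congr 1; ring
  have hBk : ∀ k, volume {r ∈ Ioo a (2 * a) |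
      ∃ y, dist y x₀ = r ∧ 2 * (n * σ k) < ‖w (k + 1) y - w k y‖} ≤
      ENNReal.ofReal (a / 16 * (1 / 2) ^ k) := by
    intro k
    have hv : ContDiff ℝ 1 fun y => w (k + 1) y - w k y := (hw1 _).sub (hw1 _)
    refine (volume_bad_radii_le hn hv x₀ ha (hσ0 k) ?_).trans ?_
    · calc ∫⁻ x in closedBall x₀ (3 * a), ‖w (k + 1) x - w k x‖ₑ
          ≤ ∫⁻ x in closedBall x₀ (3 * a), (‖w k x - u x‖ₑ + ‖w (k + 1) x - u x‖ₑ) := by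
            exact lintegral_mono fun x => enorm_sub_le_enorm_sub_add _ _ _
        _ = (∫⁻ x in closedBall x₀ (3 * a), ‖w k x - u x‖ₑ) +
              ∫⁻ x in closedBall x₀ (3 * a), ‖w (k + 1) x - u x‖ₑ :=
            lintegral_add_right' _ ((hmw _).aemeasurable.sub hmu).enorm
        _ ≤ ε k + ε (k + 1) := add_le_add (hwu k) (hwu _)
        _ ≤ _ := (hε k).1
    · have hfd : ∀ x, fderiv ℝ (fun y => w (k + 1) y - w k y) x
          = fderiv ℝ (w (k + 1)) x - fderiv ℝ (w k) x := fun x =>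
        fderiv_fun_sub ((hw1 _).differentiable (by simp) x) ((hw1 _).differentiable (by simp) x)
      simp_rw [hfd]
      calc C (σ k) * ∫⁻ x in closedBall x₀ (3 * a), ‖fderiv ℝ (w (k + 1)) x - fderiv ℝ (w k) x‖ₑ ^ n
          ≤ C (σ k) * ∫⁻ x in closedBall x₀ (3 * a),
              2 ^ n * (‖fderiv ℝ (w k) x - innerSL ℝ (du x)‖ₑ ^ n +
                ‖fderiv ℝ (w (k + 1)) x - innerSL ℝ (du x)‖ₑ ^ n) := by
            refine mul_le_mul_right (lintegral_mono fun x => ?_) _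
            refine le_trans ?_ (ENNReal.add_pow_le_two_pow_mul _ _ n)
            gcongr
            exact enorm_sub_le_enorm_sub_add _ _ _
        _ ≤ C (σ k) * (2 ^ n * (ε k + ε (k + 1))) := by
            rw [lintegral_const_mul' _ _ (by simp), lintegral_add_left' ((hmdw k).pow_const n)]
            gcongr
            · exact hwd k
            · exact hwd (k + 1)
        _ ≤ _ := by
            rw [← mul_assoc]
            exact (hε k).2
  have hex : ∃ r ∈ Ioo a (2 * a), r ∉ {r ∈ Ioo a (2 * a) | ∃ y, dist y x₀ = r ∧
      2 * (n * ρ) < ‖w 0 y - c‖} ∪ ⋃ k, {r ∈ Ioo a (2 * a) |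
      ∃ y, dist y x₀ = r ∧ 2 * (n * σ k) < ‖w (k + 1) y - w k y‖} := by
    by_contra! hcon
    have h3 : volume (Ioo a (2 * a)) ≤ ENNReal.ofReal (a / 4) +
        ∑' k : ℕ, ENNReal.ofReal (a / 16 * (1 / 2) ^ k) :=
      (measure_mono hcon).trans ((measure_union_le _ _).trans (add_le_add hB0
        ((measure_iUnion_le _).trans (ENNReal.tsum_le_tsum hBk))))
    have hsum : HasSum (fun k : ℕ => a / 16 * (1 / 2 : ℝ) ^ k) (a / 16 * 2) :=
      hasSum_geometric_two.mul_left _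
    rw [← ENNReal.ofReal_tsum_of_nonneg (fun k => by positivity) hsum.summable, hsum.tsum_eq,
      ← ENNReal.ofReal_add (by positivity) (by positivity), Real.volume_Ioo,
      ENNReal.ofReal_le_ofReal_iff (by positivity)] at h3
    linarith
  obtain ⟨r, hr, hrb⟩ := hex
  simp only [mem_union, mem_iUnion, mem_ofPred_eq, not_or, not_exists, not_and, not_lt] at hrb
  have hrsub : closedBall x₀ r ⊆ closedBall x₀ (3 * a) :=
    closedBall_subset_closedBall (by linarith [hr.2])
  have hεt : Tendsto ε atTop (𝓝 0) := by
    have h3 : Tendsto (fun k => vol * ENNReal.ofReal (n * σ k)) atTop (𝓝 0) := by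
      have h4 : Tendsto (fun k => n * σ k) atTop (𝓝 0) := by
        have h5 := (tendsto_pow_atTop_nhds_zero_of_lt_one (r := (1 / 2 : ℝ)) (by norm_num)
          (by norm_num)).comp (tendsto_add_atTop_nat 1)
        simpa [hσ] using (h5.const_mul ρ).const_mul (n : ℝ)
      have h6 := ENNReal.tendsto_ofReal h4
      have h7 := ENNReal.Tendsto.const_mul (a := vol) h6 (Or.inr hvolt)
      simpa using h7
    exact tendsto_of_tendsto_of_tendsto_of_le_of_le tendsto_const_nhds h3 (fun _ => zero_le)
      (fun k => le_self_add.trans (hε k).1)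
  refine ⟨r, hr, w, hw1, ?_, ?_, ?_⟩
  · exact tendsto_of_tendsto_of_tendsto_of_le_of_le tendsto_const_nhds hεt (fun _ => zero_le)
      (fun k => (lintegral_mono_set hrsub).trans (hwu k))
  · have h3 : Tendsto (fun k => ε k ^ (1 / (n : ℝ)) *
        volume (closedBall x₀ (3 * a)) ^ (1 - 1 / (n : ℝ))) atTop (𝓝 0) := by
      have h4 := hεt.ennrpow_const (1 / (n : ℝ))
      rw [ENNReal.zero_rpow_of_pos (by positivity)] at h4
      have h7 := ENNReal.Tendsto.mul_const (b := volume (closedBall x₀ (3 * a)) ^ (1 - 1 / (n : ℝ)))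
        h4 (Or.inr (ENNReal.rpow_ne_top_of_nonneg (by
          rw [sub_nonneg, div_le_one hn0]; exact_mod_cast hn) measure_closedBall_lt_top.ne))
      simpa using h7
    refine tendsto_of_tendsto_of_tendsto_of_le_of_le tendsto_const_nhds h3 (fun _ => zero_le)
      (fun k => (lintegral_mono_set hrsub).trans ?_)
    refine (lintegral_le_rpow_mul_measure_rpow _ (hmdw k) hn).trans ?_
    rw [Measure.restrict_apply_univ]
    gcongr
    exact hwd k
  · intro k y hy
    have h3 : ‖w k y - c‖ ≤ 2 * (n * ρ) * (2 - (1 / 2) ^ k) := by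
      induction k with
      | zero => simpa [two_mul, show (2 : ℝ) - 1 = 1 by norm_num] using hrb.1 hr y hy
      | succ k ih =>
        have h4 := hrb.2 k hr y hy
        calc ‖w (k + 1) y - c‖ = ‖(w (k + 1) y - w k y) + (w k y - c)‖ := by congr 1; ring
          _ ≤ _ := norm_add_le _ _
          _ ≤ 2 * (n * σ k) + 2 * (n * ρ) * (2 - (1 / 2) ^ k) := add_le_add h4 ih
          _ = _ := by simp only [hσ]; ring
    refine h3.trans ?_
    have h4 : (0 : ℝ) < (1 / 2) ^ k := by positivity
    have h5 : 0 < n * ρ := by positivity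
    nlinarith

lemma IsWeakGradOn.of_tendsto {n : ℕ} {Ω : Set (EuclideanSpace ℝ (Fin n))}
    {v : ℕ → EuclideanSpace ℝ (Fin n) → ℝ}
    {dv : ℕ → EuclideanSpace ℝ (Fin n) → EuclideanSpace ℝ (Fin n)}
    {u : EuclideanSpace ℝ (Fin n) → ℝ} {du : EuclideanSpace ℝ (Fin n) → EuclideanSpace ℝ (Fin n)}
    (hv : ∀ k, IsWeakGradOn n Ω (v k) (dv k)) (hvi : ∀ k, IntegrableOn (v k) Ω)
    (hdvi : ∀ k, IntegrableOn (dv k) Ω) (hu : IntegrableOn u Ω) (hdu : IntegrableOn du Ω)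
    (h1 : Tendsto (fun k => ∫⁻ x in Ω, ‖v k x - u x‖ₑ) atTop (𝓝 0))
    (h2 : Tendsto (fun k => ∫⁻ x in Ω, ‖dv k x - du x‖ₑ) atTop (𝓝 0)) :
    IsWeakGradOn n Ω u du := by
  intro φ hφ hφc hφΩ i
  have lim : ∀ {a : ℕ → EuclideanSpace ℝ (Fin n) → ℝ} {b ψ : EuclideanSpace ℝ (Fin n) → ℝ},
      (∀ k, IntegrableOn (a k) Ω) → IntegrableOn b Ω → Continuous ψ → HasCompactSupport ψ →
      Tendsto (fun k => ∫⁻ x in Ω, ‖a k x - b x‖ₑ) atTop (𝓝 0) →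
      Tendsto (fun k => ∫ x in Ω, a k x * ψ x) atTop (𝓝 (∫ x in Ω, b x * ψ x)) := by
    intro a b ψ ha hb hψ hψc hab
    obtain ⟨C, hC⟩ := hψ.bounded_above_of_compact_support hψc
    have hC' : ∀ x, ‖ψ x‖ₑ ≤ ENNReal.ofReal C := fun x => by
      rw [← ofReal_norm]; exact ENNReal.ofReal_le_ofReal (hC x)
    refine tendsto_integral_of_L1 _ (hb.mul_bdd (c := C) hψ.aestronglyMeasurable
      (Eventually.of_forall hC)).aestronglyMeasurable (Eventually.of_forall fun k =>
      (ha k).mul_bdd (c := C) hψ.aestronglyMeasurable (Eventually.of_forall hC)) ?_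
    have h3 := ENNReal.Tendsto.mul_const (b := ENNReal.ofReal C) hab (Or.inr ENNReal.ofReal_ne_top)
    rw [zero_mul] at h3
    refine tendsto_of_tendsto_of_tendsto_of_le_of_le tendsto_const_nhds h3 (fun _ => zero_le)
      fun k => ?_
    simp only
    rw [← lintegral_mul_const' _ _ ENNReal.ofReal_ne_top]
    refine lintegral_mono fun x => ?_
    simp only
    rw [← sub_mul, enorm_mul]
    gcongr
    exact hC' x
  have hφ' : Continuous fun x => fderiv ℝ φ x (EuclideanSpace.single i (1 : ℝ)) :=
    (hφ.continuous_fderiv (by simp)).clm_apply continuous_const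
  have hφc' : HasCompactSupport fun x => fderiv ℝ φ x (EuclideanSpace.single i (1 : ℝ)) :=
    hφc.fderiv_apply ℝ _
  have hcoord : ∀ {f : EuclideanSpace ℝ (Fin n) → EuclideanSpace ℝ (Fin n)}, IntegrableOn f Ω →
      IntegrableOn (fun x => f x i) Ω := fun hf =>
    (EuclideanSpace.proj (𝕜 := ℝ) i).integrable_comp hf
  have e1 := lim hvi hu hφ' hφc' h1
  have e2 := lim (fun k => hcoord (hdvi k)) (hcoord hdu) hφ.continuous hφc (by
    refine tendsto_of_tendsto_of_tendsto_of_le_of_le tendsto_const_nhds h2 (fun _ => zero_le)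
      fun k => lintegral_mono fun x => ?_
    simp only
    rw [← ofReal_norm, ← ofReal_norm, ← PiLp.sub_apply]
    exact ENNReal.ofReal_le_ofReal (PiLp.norm_apply_le _ i))
  refine tendsto_nhds_unique e1 (e2.neg.congr fun k => ?_)
  exact (hv k φ hφ hφc hφΩ i).symm

lemma isWeakGradOn_univ_of_contDiff {n : ℕ} {ψ : EuclideanSpace ℝ (Fin n) → ℝ}
    {dψ : EuclideanSpace ℝ (Fin n) → EuclideanSpace ℝ (Fin n)} (hψ : Differentiable ℝ ψ)
    (hψi : Integrable ψ) (hdψi : Integrable dψ)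
    (hd : ∀ x, fderiv ℝ ψ x = innerSL ℝ (dψ x)) : IsWeakGradOn n univ ψ dψ := by
  intro φ hφ hφc _ i
  simp only [Measure.restrict_univ]
  have hcoord : ∀ x, fderiv ℝ ψ x (EuclideanSpace.single i 1) = dψ x i := fun x => by
    rw [hd, innerSL_apply_apply, real_inner_comm, EuclideanSpace.inner_single_left]; simp
  have hφ' : Continuous fun x => fderiv ℝ φ x (EuclideanSpace.single i (1 : ℝ)) :=
    (hφ.continuous_fderiv (by simp)).clm_apply continuous_const
  obtain ⟨C, hC⟩ := hφ.continuous.bounded_above_of_compact_support hφc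
  obtain ⟨C', hC'⟩ := hφ'.bounded_above_of_compact_support (hφc.fderiv_apply ℝ _)
  have h := integral_mul_fderiv_eq_neg_fderiv_mul_of_integrable (μ := volume) (𝕜 := ℝ) (f := ψ) (g := φ)
    (v := EuclideanSpace.single i 1) ?_ ?_ ?_ (fun x _ => hψ x)
    (fun x _ => hφ.differentiable (by simp) x)
  · simp_rw [hcoord] at h
    exact h
  · simp_rw [hcoord]
    exact ((EuclideanSpace.proj (𝕜 := ℝ) i).integrable_comp hdψi).mul_bdd (c := C)
      hφ.continuous.aestronglyMeasurable (Eventually.of_forall hC)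
  · exact hψi.mul_bdd (c := C') hφ'.aestronglyMeasurable (Eventually.of_forall hC')
  · exact hψi.mul_bdd (c := C) hφ.continuous.aestronglyMeasurable (Eventually.of_forall hC)

/-- A `C¹` approximation of the positive part. -/
lemma exists_contDiff_approx_posPart : ∃ H : ℕ → ℝ → ℝ, ∀ m, ContDiff ℝ 1 (H m) ∧
    (∀ t ≤ 0, H m t = 0) ∧ (∀ t ≤ 0, deriv (H m) t = 0) ∧ (∀ t, ‖deriv (H m) t‖ ≤ 1) ∧
    (∀ s t, |H m s - H m t| ≤ |s - t|) ∧
    ∀ t, Tendsto (fun m => H m t) atTop (𝓝 (max t 0)) ∧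
      Tendsto (fun m => deriv (H m) t) atTop (𝓝 (if 0 < t then 1 else 0)) := by
  set c : ℕ → ℝ → ℝ := fun m s => min 1 (max 0 (m * s)) with hc
  have hcc : ∀ m, Continuous (c m) := fun m => by fun_prop
  have hc0 : ∀ m, ∀ t ≤ 0, c m t = 0 := fun m t ht => by
    have : (m : ℝ) * t ≤ 0 := mul_nonpos_of_nonneg_of_nonpos (by positivity) ht
    simp [hc, this]
  have hc1 : ∀ m t, ‖c m t‖ ≤ 1 := fun m t => by
    rw [Real.norm_of_nonneg (le_min zero_le_one (le_max_left _ _))]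
    exact min_le_left _ _
  have hclim : ∀ t, Tendsto (fun m => c m t) atTop (𝓝 (if 0 < t then 1 else 0)) := by
    intro t
    split_ifs with h
    · refine tendsto_const_nhds.congr' ?_
      have : Tendsto (fun m : ℕ => (m : ℝ) * t) atTop atTop :=
        tendsto_natCast_atTop_atTop.atTop_mul_const h
      filter_upwards [this.eventually_ge_atTop 1] with m hm
      exact (min_eq_left (hm.trans (le_max_right _ _))).symm
    · simp_rw [hc0 _ t (not_lt.1 h)]
      exact tendsto_const_nhds
  set H : ℕ → ℝ → ℝ := fun m t => ∫ s in (0 : ℝ)..t, c m s with hH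
  have hder : ∀ m t, HasDerivAt (H m) (c m t) t := fun m t =>
    intervalIntegral.integral_hasDerivAt_right ((hcc m).intervalIntegrable _ _)
      ((hcc m).stronglyMeasurableAtFilter _ _) (hcc m).continuousAt
  have hderiv : ∀ m, deriv (H m) = c m := fun m => funext fun t => (hder m t).deriv
  have hH0 : ∀ m, ∀ t ≤ 0, H m t = 0 := fun m t ht => by
    rw [hH]
    simp only
    rw [intervalIntegral.integral_symm, intervalIntegral.integral_of_le ht,
      setIntegral_eq_zero_of_forall_eq_zero, neg_zero]
    exact fun s hs => hc0 m s hs.2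
  refine ⟨H, fun m => ⟨?_, hH0 m, ?_, ?_, ?_, fun t => ⟨?_, ?_⟩⟩⟩
  · rw [contDiff_one_iff_deriv]
    exact ⟨fun t => (hder m t).differentiableAt, by rw [hderiv]; exact hcc m⟩
  · rw [hderiv]; exact hc0 m
  · rw [hderiv]; exact hc1 m
  · intro s t
    have := Convex.norm_image_sub_le_of_norm_hasDerivWithin_le (s := univ) (C := 1)
      (fun x _ => (hder m x).hasDerivWithinAt) (fun x _ => hc1 m x) convex_univ (mem_univ t)
      (mem_univ s)
    simpa using this
  · rcases le_or_gt t 0 with h | h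
    · simp_rw [hH0 _ t h, max_eq_right h]
      exact tendsto_const_nhds
    · have h1 := intervalIntegral.tendsto_integral_filter_of_dominated_convergence
        (μ := volume) (a := 0) (b := t) (F := c) (f := fun s => if 0 < s then 1 else 0)
        (l := atTop) (fun _ => (1 : ℝ))
        (Eventually.of_forall fun m => (hcc m).aestronglyMeasurable)
        (Eventually.of_forall fun m => Eventually.of_forall fun s _ => hc1 m s)
        intervalIntegrable_const (Eventually.of_forall fun s _ => hclim s)
      have h2 : ∫ s in (0 : ℝ)..t, (if 0 < s then (1 : ℝ) else 0) = t := by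
        rw [intervalIntegral.integral_of_le h.le]
        rw [setIntegral_congr_fun (g := fun _ => (1 : ℝ)) measurableSet_Ioc
          (fun s hs => if_pos hs.1)]
        simp [h.le]
      rw [h2] at h1
      rwa [max_eq_left h.le]
  · rw [show (fun m => deriv (H m) t) = fun m => c m t from funext fun m => by rw [hderiv]]
    exact hclim t

lemma innerSL_gradient {F : Type*} [NormedAddCommGroup F] [InnerProductSpace ℝ F] [CompleteSpace F]
    (w : F → ℝ) (x : F) : innerSL ℝ (gradient w x) = fderiv ℝ w x :=
  (InnerProductSpace.toDual ℝ F).apply_symm_apply (fderiv ℝ w x)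

lemma isWeakGradOn_indicator_comp {n : ℕ} {w : EuclideanSpace ℝ (Fin n) → ℝ} {H : ℝ → ℝ}
    {x₀ : EuclideanSpace ℝ (Fin n)} {r M : ℝ} (hw : ContDiff ℝ 1 w) (hH : ContDiff ℝ 1 H)
    (h0 : ∀ t ≤ 0, H t = 0) (h0' : ∀ t ≤ 0, deriv H t = 0) (hs : ∀ y, dist y x₀ = r → w y < M) :
    IsWeakGradOn n univ ((closedBall x₀ r).indicator fun x => H (w x - M))
      ((closedBall x₀ r).indicator fun x => deriv H (w x - M) • gradient w x) := by
  have hcg : Continuous (gradient w) :=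
    (InnerProductSpace.toDual ℝ _).symm.continuous.comp (hw.continuous_fderiv (by simp))
  have hcH : Continuous fun x => H (w x - M) :=
    hH.continuous.comp (hw.continuous.sub continuous_const)
  have hcH' : Continuous fun x => deriv H (w x - M) • gradient w x :=
    ((hH.continuous_deriv (by simp)).comp (hw.continuous.sub continuous_const)).smul hcg
  have hd : ∀ x, HasFDerivAt ((closedBall x₀ r).indicator fun x => H (w x - M))
      (innerSL ℝ ((closedBall x₀ r).indicator (fun x => deriv H (w x - M) • gradient w x) x)) x := by
    intro x
    have hz : ∀ s : Set (EuclideanSpace ℝ (Fin n)), s ∈ 𝓝 x →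
        (∀ y ∈ s, (closedBall x₀ r).indicator (fun x => H (w x - M)) y = 0) →
        HasFDerivAt ((closedBall x₀ r).indicator fun x => H (w x - M))
          (0 : EuclideanSpace ℝ (Fin n) →L[ℝ] ℝ) x := by
      intro s hs' h
      refine HasFDerivAt.congr_of_eventuallyEq (hasFDerivAt_const (𝕜 := ℝ) (0 : ℝ) x) ?_
      filter_upwards [hs'] with y hy using h y hy
    rcases lt_trichotomy (dist x x₀) r with h | h | h
    · have hx : x ∈ closedBall x₀ r := h.le
      rw [indicator_of_mem hx, map_smul, innerSL_gradient]
      have h1 : HasFDerivAt (fun x => H (w x - M)) (deriv H (w x - M) • fderiv ℝ w x) x :=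
        ((hH.differentiable (by simp) _).hasDerivAt).comp_hasFDerivAt x
          (((hw.differentiable (by simp)) x).hasFDerivAt.sub_const M)
      refine h1.congr_of_eventuallyEq ?_
      filter_upwards [isOpen_ball.mem_nhds (show x ∈ ball x₀ r from h)] with y hy
      rw [indicator_of_mem (ball_subset_closedBall hy)]
    · have hlt : w x - M < 0 := by linarith [hs x h]
      have e : (closedBall x₀ r).indicator (fun x => deriv H (w x - M) • gradient w x) x = 0 := by
        simp [indicator, h0' _ hlt.le]
      rw [e, map_zero]
      refine hz {y | w y < M} ((isOpen_lt hw.continuous continuous_const).mem_nhds (hs x h))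
        fun y hy => ?_
      have : w y - M ≤ 0 := by linarith [show w y < M from hy]
      simp [indicator, h0 _ this]
    · have hx : x ∉ closedBall x₀ r := by simpa using h
      rw [indicator_of_notMem hx, map_zero]
      exact hz _ (isClosed_closedBall.isOpen_compl.mem_nhds hx) fun y hy =>
        indicator_of_notMem hy _
  refine isWeakGradOn_univ_of_contDiff (fun x => (hd x).differentiableAt) ?_ ?_
    (fun x => (hd x).fderiv)
  · exact (integrable_indicator_iff measurableSet_closedBall).2
      (hcH.continuousOn.integrableOn_compact (isCompact_closedBall _ _))
  · exact (integrable_indicator_iff measurableSet_closedBall).2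
      (hcH'.continuousOn.integrableOn_compact (isCompact_closedBall _ _))

/-- Truncations of `u` above the level `M`, cut off outside a ball on whose boundary sphere the
approximations of `u` stay below `M`, are weakly differentiable on the whole space. -/
lemma isWeakGradOn_indicator_posPart {n : ℕ} {u : EuclideanSpace ℝ (Fin n) → ℝ}
    {du : EuclideanSpace ℝ (Fin n) → EuclideanSpace ℝ (Fin n)}
    {w : ℕ → EuclideanSpace ℝ (Fin n) → ℝ} {x₀ : EuclideanSpace ℝ (Fin n)} {r M : ℝ}
    (hum : Measurable u) (hu : IntegrableOn u (closedBall x₀ r))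
    (hdu : IntegrableOn du (closedBall x₀ r)) (hw : ∀ k, ContDiff ℝ 1 (w k))
    (h1 : Tendsto (fun k => ∫⁻ x in closedBall x₀ r, ‖w k x - u x‖ₑ) atTop (𝓝 0))
    (h2 : Tendsto (fun k => ∫⁻ x in closedBall x₀ r, ‖fderiv ℝ (w k) x - innerSL ℝ (du x)‖ₑ)
        atTop (𝓝 0))
    (hs : ∀ k y, dist y x₀ = r → w k y < M) :
    IsWeakGradOn n univ ((closedBall x₀ r).indicator fun x => max (u x - M) 0)
      ((closedBall x₀ r ∩ {x | M < u x}).indicator du) := by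
  set B := closedBall x₀ r with hB
  have hBm : MeasurableSet B := measurableSet_closedBall
  have hdum : AEStronglyMeasurable du (volume.restrict B) := hdu.aestronglyMeasurable
  have hsub : ∃ ns : ℕ → ℕ, StrictMono ns ∧ ∀ᵐ x ∂volume.restrict B,
      Tendsto (fun k => w (ns k) x) atTop (𝓝 (u x)) := by
    refine TendstoInMeasure.exists_seq_tendsto_ae
      (tendstoInMeasure_of_tendsto_eLpNorm (p := 1) one_ne_zero
        (fun k => (hw k).continuous.aestronglyMeasurable) hum.aestronglyMeasurable ?_)
    simpa [eLpNorm_one_eq_lintegral_enorm] using h1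
  obtain ⟨ns, hns, hae⟩ := hsub
  have h1' := h1.comp hns.tendsto_atTop
  have h2' : Tendsto (fun k => ∫⁻ x in B, ‖gradient (w (ns k)) x - du x‖ₑ) atTop (𝓝 0) := by
    refine (h2.comp hns.tendsto_atTop).congr fun k => lintegral_congr fun x => ?_
    rw [← innerSL_gradient, ← map_sub, ← ofReal_norm, innerSL_apply_norm, ofReal_norm]
  obtain ⟨H, hH⟩ := exists_contDiff_approx_posPart
  have hcg : ∀ k, Continuous (gradient (w k)) := fun k =>
    (InnerProductSpace.toDual ℝ _).symm.continuous.comp ((hw k).continuous_fderiv (by simp))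
  have hcH' : ∀ m, Continuous (deriv (H m)) := fun m => (hH m).1.continuous_deriv (by simp)
  have hHbd : ∀ m t, ‖deriv (H m) t‖ ≤ 1 := fun m => (hH m).2.2.2.1
  have hHbd' : ∀ m t, ‖deriv (H m) t‖ₑ ≤ 1 := fun m t => by
    rw [← ofReal_norm, ← ENNReal.ofReal_one]; exact ENNReal.ofReal_le_ofReal (hHbd m t)
  have hHlip : ∀ m s t, ‖H m s - H m t‖ₑ ≤ ‖s - t‖ₑ := fun m s t => by
    rw [← ofReal_norm, ← ofReal_norm]
    exact ENNReal.ofReal_le_ofReal ((hH m).2.2.2.2.1 s t)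
  have hHabs : ∀ m s, ‖H m s‖ ≤ ‖s‖ := fun m s => by
    simpa [(hH m).2.1 0 le_rfl] using (hH m).2.2.2.2.1 s 0
  have huM : IntegrableOn (fun x => u x - M) B := by
    refine hu.sub ?_
    exact integrableOn_const measure_closedBall_lt_top.ne
  have hi1 : ∀ m, IntegrableOn (fun x => H m (u x - M)) B := fun m =>
    Integrable.mono huM ((hH m).1.continuous.comp_aestronglyMeasurable huM.aestronglyMeasurable)
      (Eventually.of_forall fun x => hHabs m _)
  have hm2 : ∀ m, AEStronglyMeasurable (fun x => deriv (H m) (u x - M)) (volume.restrict B) :=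
    fun m => (hcH' m).comp_aestronglyMeasurable huM.aestronglyMeasurable
  have hi2 : ∀ m, IntegrableOn (fun x => deriv (H m) (u x - M) • du x) B := fun m =>
    Integrable.mono hdu ((hm2 m).smul hdum) (Eventually.of_forall fun x => by
      rw [norm_smul]
      exact mul_le_of_le_one_left (norm_nonneg _) (hHbd m _))
  have htrans : ∀ {F : Type} [NormedAddCommGroup F] {a b : EuclideanSpace ℝ (Fin n) → F},
      ∫⁻ x in univ, ‖B.indicator a x - B.indicator b x‖ₑ = ∫⁻ x in B, ‖a x - b x‖ₑ := by
    intro F _ a b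
    rw [Measure.restrict_univ, ← lintegral_indicator hBm]
    refine lintegral_congr fun x => ?_
    by_cases hx : x ∈ B <;> simp [hx]
  have hdom : ∀ {c : ℕ → EuclideanSpace ℝ (Fin n) → ℝ} {b : EuclideanSpace ℝ (Fin n) → ℝ},
      (∀ k, AEStronglyMeasurable (c k) (volume.restrict B)) →
      AEStronglyMeasurable b (volume.restrict B) → (∀ k x, ‖c k x‖ₑ ≤ 1) →
      (∀ᵐ x ∂volume.restrict B, Tendsto (fun k => c k x) atTop (𝓝 (b x))) →
      (∀ x, ‖b x‖ₑ ≤ 1) →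
      Tendsto (fun k => ∫⁻ x in B, ‖(c k x - b x) • du x‖ₑ) atTop (𝓝 0) := by
    intro c b hc hb hc1 hcb hb1
    have := tendsto_lintegral_of_dominated_convergence' (μ := volume.restrict B)
      (F := fun k x => ‖(c k x - b x) • du x‖ₑ) (f := fun _ => 0) (fun x => 2 * ‖du x‖ₑ)
      (fun k => (((hc k).sub hb).smul hdum).enorm)
      (fun k => Eventually.of_forall fun x => by
        simp only
        rw [enorm_smul]
        gcongr
        exact enorm_sub_le.trans ((add_le_add (hc1 k x) (hb1 x)).trans (by norm_num)))
      (by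
        rw [lintegral_const_mul' _ _ (by simp)]
        exact ENNReal.mul_ne_top (by simp) hdu.2.ne)
      (by
        filter_upwards [hcb] with x hx
        have h3 := ((hx.sub_const (b x)).smul_const (du x)).enorm
        simpa using h3)
    simpa using this
  have stage1 : ∀ m, IsWeakGradOn n univ (B.indicator fun x => H m (u x - M))
      (B.indicator fun x => deriv (H m) (u x - M) • du x) := by
    intro m
    have hcw : ∀ k, Continuous fun x => H m (w k x - M) := fun k =>
      (hH m).1.continuous.comp ((hw k).continuous.sub continuous_const)
    have hcdw : ∀ k, Continuous fun x => deriv (H m) (w k x - M) • gradient (w k) x := fun k =>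
      ((hcH' m).comp ((hw k).continuous.sub continuous_const)).smul (hcg k)
    refine IsWeakGradOn.of_tendsto (fun k => isWeakGradOn_indicator_comp (hw (ns k)) (hH m).1
      (hH m).2.1 (hH m).2.2.1 (hs (ns k))) ?_ ?_ ?_ ?_ ?_ ?_
    · exact fun k => ((integrable_indicator_iff hBm).2
        ((hcw _).continuousOn.integrableOn_compact (isCompact_closedBall _ _))).integrableOn
    · exact fun k => ((integrable_indicator_iff hBm).2
        ((hcdw _).continuousOn.integrableOn_compact (isCompact_closedBall _ _))).integrableOn
    · exact ((integrable_indicator_iff hBm).2 (hi1 m)).integrableOn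
    · exact ((integrable_indicator_iff hBm).2 (hi2 m)).integrableOn
    · simp_rw [← hB, htrans]
      refine tendsto_of_tendsto_of_tendsto_of_le_of_le tendsto_const_nhds h1' (fun _ => zero_le)
        fun k => lintegral_mono fun x => ?_
      refine (hHlip m _ _).trans (le_of_eq ?_)
      simp
    · simp_rw [← hB, htrans]
      have h3 := hdom (c := fun k x => deriv (H m) (w (ns k) x - M))
        (b := fun x => deriv (H m) (u x - M))
        (fun k => ((hcH' m).comp ((hw _).continuous.sub continuous_const)).aestronglyMeasurable)
        (hm2 m) (fun k x => hHbd' m _) (by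
          filter_upwards [hae] with x hx
          exact ((hcH' m).tendsto _).comp (hx.sub_const M)) (fun x => hHbd' m _)
      have h4 := h2'.add h3
      rw [add_zero] at h4
      refine tendsto_of_tendsto_of_tendsto_of_le_of_le tendsto_const_nhds h4 (fun _ => zero_le)
        fun k => ?_
      simp only
      have hgm : AEMeasurable (fun x => ‖gradient (w (ns k)) x - du x‖ₑ) (volume.restrict B) :=
        ((hcg _).aestronglyMeasurable.sub hdum).enorm
      rw [← lintegral_add_left' hgm]
      refine lintegral_mono fun x => ?_
      have e : deriv (H m) (w (ns k) x - M) • gradient (w (ns k)) x - deriv (H m) (u x - M) • du x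
          = deriv (H m) (w (ns k) x - M) • (gradient (w (ns k)) x - du x) +
            (deriv (H m) (w (ns k) x - M) - deriv (H m) (u x - M)) • du x := by
        rw [smul_sub, sub_smul]; abel
      simp only
      rw [e]
      refine (enorm_add_le _ _).trans (add_le_add ?_ le_rfl)
      rw [enorm_smul]
      exact mul_le_of_le_one_left zero_le (hHbd' m _)
  have hind : (B ∩ {x | M < u x}).indicator du =
      B.indicator fun x => (if 0 < u x - M then (1 : ℝ) else 0) • du x := by
    ext1 x
    by_cases hx : x ∈ B <;> by_cases hx' : M < u x <;> simp [hx, hx', indicator]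
  rw [hind]
  have hmif : Measurable fun x => if 0 < u x - M then (1 : ℝ) else 0 :=
    Measurable.ite (measurableSet_lt measurable_const (hum.sub_const M)) measurable_const
      measurable_const
  have hif : ∀ x, ‖(if 0 < u x - M then (1 : ℝ) else 0)‖ ≤ 1 := fun x => by
    split_ifs <;> simp
  have hif' : ∀ x, ‖(if 0 < u x - M then (1 : ℝ) else 0)‖ₑ ≤ 1 := fun x => by
    split_ifs <;> simp
  refine IsWeakGradOn.of_tendsto stage1 ?_ ?_ ?_ ?_ ?_ ?_
  · exact fun m => ((integrable_indicator_iff hBm).2 (hi1 m)).integrableOn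
  · exact fun m => ((integrable_indicator_iff hBm).2 (hi2 m)).integrableOn
  · exact ((integrable_indicator_iff hBm).2 huM.pos_part).integrableOn
  · exact ((integrable_indicator_iff hBm).2 (Integrable.mono hdu
      (hmif.aestronglyMeasurable.smul hdum) (Eventually.of_forall fun x => by
        rw [Pi.smul_apply', norm_smul]
        exact mul_le_of_le_one_left (norm_nonneg _) (hif x)))).integrableOn
  · simp_rw [htrans]
    have := tendsto_lintegral_of_dominated_convergence' (μ := volume.restrict B)
      (F := fun m x => ‖H m (u x - M) - max (u x - M) 0‖ₑ) (f := fun _ => 0)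
      (fun x => 2 * ‖u x - M‖ₑ)
      (fun m => ((hi1 m).aestronglyMeasurable.sub huM.pos_part.aestronglyMeasurable).enorm)
      (fun m => Eventually.of_forall fun x => by
        simp only
        refine enorm_sub_le.trans ?_
        rw [two_mul, ← ofReal_norm, ← ofReal_norm, ← ofReal_norm]
        refine add_le_add (ENNReal.ofReal_le_ofReal (hHabs m _)) (ENNReal.ofReal_le_ofReal ?_)
        rw [Real.norm_of_nonneg (le_max_right _ _)]
        exact max_le (le_abs_self _) (abs_nonneg _))
      (by
        rw [lintegral_const_mul' _ _ (by simp)]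
        exact ENNReal.mul_ne_top (by simp) huM.2.ne)
      (Eventually.of_forall fun x => by
        have h4 := ((hH 0).2.2.2.2.2 (u x - M)).1
        simpa using (h4.sub_const (max (u x - M) 0)).enorm)
    simpa using this
  · simp_rw [htrans]
    simp_rw [← sub_smul]
    refine hdom (fun m => hm2 m) hmif.aestronglyMeasurable (fun m x => hHbd' m _) ?_ hif'
    exact Eventually.of_forall fun x => ((hH 0).2.2.2.2.2 (u x - M)).2

/-- The truncation `(u - M)₊`, cut off outside `B`, has weak gradient `∇u · 1_{B ∩ {u > M}}` on the
whole space. -/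
def HasWeakGradPosPart (n : ℕ) (B : Set (EuclideanSpace ℝ (Fin n)))
    (u : EuclideanSpace ℝ (Fin n) → ℝ)
    (du : EuclideanSpace ℝ (Fin n) → EuclideanSpace ℝ (Fin n)) (M : ℝ) : Prop :=
  IsWeakGradOn n univ (B.indicator fun x => max (u x - M) 0) ((B ∩ {x | M < u x}).indicator du)

lemma IsWeakGradOn.exists_ball_hasWeakGradPosPart {n : ℕ} (hn : 1 ≤ n)
    {Ω : Set (EuclideanSpace ℝ (Fin n))} {u : EuclideanSpace ℝ (Fin n) → ℝ}
    {du : EuclideanSpace ℝ (Fin n) → EuclideanSpace ℝ (Fin n)} (hw : IsWeakGradOn n Ω u du)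
    {x₀ : EuclideanSpace ℝ (Fin n)} {a ρ c : ℝ} (hum : Measurable u) (ha : 0 < a) (hρ : 0 < ρ)
    (hΩ : closedBall x₀ (4 * a) ⊆ Ω) (hu : IntegrableOn u (closedBall x₀ (4 * a)))
    (hdu : IntegrableOn du (closedBall x₀ (4 * a)))
    (hdup : MemLp du n (volume.restrict (closedBall x₀ (4 * a))))
    (h1 : ∫⁻ x in closedBall x₀ (3 * a), ‖u x - c‖ₑ ≤
      volume (closedBall (0 : EuclideanSpace ℝ (Fin n)) a) * ENNReal.ofReal (n * (ρ / 2)))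
    (h2 : ENNReal.ofReal (10 * a /
        ((volume (closedBall (0 : EuclideanSpace ℝ (Fin n)) 1)).toReal * ρ ^ n)) *
      (2 ^ n * ∫⁻ x in closedBall x₀ (3 * a), ‖du x‖ₑ ^ n) ≤ ENNReal.ofReal (a / 8)) :
    ∃ r ∈ Ioo a (2 * a), ∀ M, c + 4 * (n * ρ) < M →
      HasWeakGradPosPart n (closedBall x₀ r) u du M := by
  obtain ⟨r, hr, w, hw1, hw2, hw3, hw4⟩ := hw.exists_sphere hn ha hρ hΩ hu hdu hdup h1 h2
  have hsub : closedBall x₀ r ⊆ closedBall x₀ (4 * a) :=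
    closedBall_subset_closedBall (by linarith [hr.2])
  refine ⟨r, hr, fun M hM => isWeakGradOn_indicator_posPart hum (hu.mono_set hsub)
    (hdu.mono_set hsub) hw1 hw2 hw3 fun k y hy => ?_⟩
  have := (abs_le.1 (hw4 k y hy)).2
  linarith

lemma IsWeakGradOn.exists_ball_hasWeakGradPosPart_of_large {n : ℕ} (hn : 1 ≤ n)
    {Ω : Set (EuclideanSpace ℝ (Fin n))} {u : EuclideanSpace ℝ (Fin n) → ℝ}
    {du : EuclideanSpace ℝ (Fin n) → EuclideanSpace ℝ (Fin n)} (hw : IsWeakGradOn n Ω u du)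
    {x₀ : EuclideanSpace ℝ (Fin n)} {a : ℝ} (hum : Measurable u) (ha : 0 < a)
    (hΩ : closedBall x₀ (4 * a) ⊆ Ω) (hu : IntegrableOn u (closedBall x₀ (4 * a)))
    (hdu : IntegrableOn du (closedBall x₀ (4 * a)))
    (hdup : MemLp du n (volume.restrict (closedBall x₀ (4 * a)))) :
    ∃ r ∈ Ioo a (2 * a), ∃ M₀, ∀ M, M₀ < M → HasWeakGradPosPart n (closedBall x₀ r) u du M := by
  have hsub : closedBall x₀ (3 * a) ⊆ closedBall x₀ (4 * a) :=
    closedBall_subset_closedBall (by linarith)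
  have hn' : (1 : ℝ) ≤ n := by exact_mod_cast hn
  set I := ∫⁻ x in closedBall x₀ (3 * a), ‖u x - 0‖ₑ with hI
  set J := 2 ^ n * ∫⁻ x in closedBall x₀ (3 * a), ‖du x‖ₑ ^ n with hJ
  set V := volume (closedBall (0 : EuclideanSpace ℝ (Fin n)) a) with hV
  set ω := (volume (closedBall (0 : EuclideanSpace ℝ (Fin n)) 1)).toReal with hω
  have hωpos : 0 < ω := volume_unitBall_toReal_pos
  have hI' : I ≠ ⊤ := by
    simpa [hI] using (hu.mono_set hsub).2.ne
  have hJ' : J ≠ ⊤ := by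
    refine ENNReal.mul_ne_top (by simp) ?_
    have := (hdup.mono_measure (Measure.restrict_mono hsub le_rfl)).2
    have h3 := lintegral_rpow_enorm_lt_top_of_eLpNorm_lt_top
      (p := (n : ℝ≥0∞)) (by positivity) (by simp) this
    simpa using h3.ne
  have hV0 : V ≠ 0 := (measure_closedBall_pos _ _ ha).ne'
  have hV1 : V ≠ ⊤ := measure_closedBall_lt_top.ne
  set ρ := max 1 (max (2 * (I / V).toReal) (80 * J.toReal / ω)) with hρ
  have h1ρ : 1 ≤ ρ := le_max_left _ _
  have hρ1 : 2 * (I / V).toReal ≤ ρ := (le_max_left _ _).trans (le_max_right _ _)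
  have hρ2 : 80 * J.toReal / ω ≤ ρ := (le_max_right _ _).trans (le_max_right _ _)
  suffices h : ∃ r ∈ Ioo a (2 * a), ∀ M, 0 + 4 * (n * ρ) < M →
      HasWeakGradPosPart n (closedBall x₀ r) u du M by
    obtain ⟨r, hr, h⟩ := h
    exact ⟨r, hr, _, h⟩
  refine hw.exists_ball_hasWeakGradPosPart hn hum ha (by linarith) hΩ hu hdu hdup ?_ ?_
  · rw [← hI, ← hV, mul_comm, ← ENNReal.div_le_iff hV0 hV1,
      ← ENNReal.ofReal_toReal (ENNReal.div_ne_top hI' hV0)]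
    refine ENNReal.ofReal_le_ofReal ?_
    nlinarith
  · rw [← hJ, ← hω, ← ENNReal.ofReal_toReal hJ', ← ENNReal.ofReal_mul (by positivity)]
    refine ENNReal.ofReal_le_ofReal ?_
    rw [div_le_iff₀ hωpos] at hρ2
    have : ρ ≤ ρ ^ n := le_self_pow₀ h1ρ (by omega)
    rw [div_mul_eq_mul_div, div_le_iff₀ (by positivity)]
    have : 80 * J.toReal ≤ ρ ^ n * ω := hρ2.trans (by gcongr)
    nlinarith

lemma IsWeakGradOn.ae_exists_small_ball_hasWeakGradPosPart {n : ℕ} (hn : 1 ≤ n)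
    {Ω : Set (EuclideanSpace ℝ (Fin n))} {u : EuclideanSpace ℝ (Fin n) → ℝ}
    {du : EuclideanSpace ℝ (Fin n) → EuclideanSpace ℝ (Fin n)} (hw : IsWeakGradOn n Ω u du)
    {U : Set (EuclideanSpace ℝ (Fin n))} (hU : IsOpen U) (hum : Measurable u) (hUΩ : U ⊆ Ω)
    (hu : IntegrableOn u U) (hdu : IntegrableOn du U) (hdup : MemLp du n (volume.restrict U)) :
    ∀ᵐ x, x ∈ U → ∀ M, u x < M → ∀ η > 0, ∃ r ∈ Ioo 0 η,
      closedBall x r ⊆ U ∧ HasWeakGradPosPart n (closedBall x r) u du M := by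
  have hL := (Besicovitch.vitaliFamily (volume : Measure (EuclideanSpace ℝ (Fin n)))
    ).ae_tendsto_lintegral_enorm_sub_div
      ((integrable_indicator_iff hU.measurableSet).2 hu).locallyIntegrable
  have hn' : (1 : ℝ) ≤ n := by exact_mod_cast hn
  set ω := (volume (closedBall (0 : EuclideanSpace ℝ (Fin n)) 1)).toReal with hω
  have hωpos : 0 < ω := volume_unitBall_toReal_pos
  have hfin : ∫⁻ x in U, ‖du x‖ₑ ^ n ≠ ⊤ := by
    have h3 := lintegral_rpow_enorm_lt_top_of_eLpNorm_lt_top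
      (p := (n : ℝ≥0∞)) (by positivity) (by simp) hdup.2
    simpa using h3.ne
  filter_upwards [hL] with x hx hxU M hM η hη
  set ρ := (M - u x) / (8 * n) with hρdef
  have hρ : 0 < ρ := div_pos (by linarith) (by positivity)
  have hρ' : u x + 4 * (n * ρ) < M := by
    have : 4 * (n * ρ) = (M - u x) / 2 := by rw [hρdef]; field_simp; ring
    linarith
  have hnear : ∀ᶠ s in 𝓝[>] (0 : ℝ), closedBall x s ⊆ U := by
    obtain ⟨s, hs, hsU⟩ := Metric.isOpen_iff.1 hU x hxU
    filter_upwards [Ioo_mem_nhdsGT hs] with t ht using (closedBall_subset_ball ht.2).trans hsU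
  have hav := hx.comp (Besicovitch.tendsto_filterAt volume x)
  have e1 : ∀ᶠ s in 𝓝[>] (0 : ℝ), ∫⁻ y in closedBall x s, ‖u y - u x‖ₑ ≤
      volume (closedBall (0 : EuclideanSpace ℝ (Fin n)) (s / 3)) *
        ENNReal.ofReal (n * (ρ / 2)) := by
    have hc : 0 < ENNReal.ofReal (n * (ρ / 2) / 3 ^ n) := by
      rw [ENNReal.ofReal_pos]; positivity
    filter_upwards [hnear, hav.eventually_le_const hc, self_mem_nhdsWithin] with s hs1 hs2 hs0
    have hs0' : (0 : ℝ) < s := hs0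
    simp only [Function.comp] at hs2
    rw [ENNReal.div_le_iff (measure_closedBall_pos _ _ hs0').ne' measure_closedBall_lt_top.ne,
      indicator_of_mem hxU] at hs2
    refine (le_of_eq ?_).trans (hs2.trans (le_of_eq ?_))
    · refine setLIntegral_congr_fun measurableSet_closedBall fun y hy => ?_
      simp only [indicator_of_mem (hs1 hy)]
    · rw [volume_closedBall_eq x hs0'.le, volume_closedBall_eq 0 (by positivity : 0 ≤ s / 3), ← hω,
        ← ENNReal.ofReal_mul (by positivity), ← ENNReal.ofReal_mul (by positivity)]
      congr 1
      rw [div_pow]; field_simp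
  have e2 : ∀ᶠ s in 𝓝[>] (0 : ℝ), ∫⁻ y in closedBall x s, ‖du y‖ₑ ^ n ≤
      ENNReal.ofReal (ω * ρ ^ n / (80 * 2 ^ n)) := by
    have hv : Tendsto (fun s => volume.restrict U (closedBall x s)) (𝓝[>] (0 : ℝ)) (𝓝 0) := by
      have h0 : Tendsto (fun s : ℝ => volume (closedBall x s)) (𝓝[>] (0 : ℝ)) (𝓝 0) := by
        have : Tendsto (fun s : ℝ => ENNReal.ofReal (s ^ n * ω)) (𝓝[>] (0 : ℝ)) (𝓝 0) := by
          have hc : Continuous fun s : ℝ => ENNReal.ofReal (s ^ n * ω) :=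
            ENNReal.continuous_ofReal.comp (by fun_prop)
          have := (hc.tendsto 0).mono_left (nhdsWithin_le_nhds (s := Ioi (0 : ℝ)))
          simpa [zero_pow (show n ≠ 0 by omega)] using this
        refine this.congr' ?_
        filter_upwards [self_mem_nhdsWithin] with s hs
        exact (volume_closedBall_eq x (le_of_lt hs)).symm
      exact tendsto_of_tendsto_of_tendsto_of_le_of_le tendsto_const_nhds h0 (fun _ => zero_le)
        fun s => Measure.restrict_apply_le _ _
    have h0 := tendsto_setLIntegral_zero hfin hv
    filter_upwards [hnear, h0.eventually_le_const (show 0 < ENNReal.ofReal _ from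
      ENNReal.ofReal_pos.2 (by positivity : 0 < ω * ρ ^ n / (80 * 2 ^ n)))] with s hs1 hs2
    rwa [Measure.restrict_restrict measurableSet_closedBall,
      inter_eq_self_of_subset_left hs1] at hs2
  have h3 : Tendsto (fun a : ℝ => 3 * a) (𝓝[>] 0) (𝓝[>] 0) := by
    refine tendsto_nhdsWithin_iff.2 ⟨?_, ?_⟩
    · have : Continuous fun a : ℝ => 3 * a := by fun_prop
      simpa using (this.tendsto 0).mono_left nhdsWithin_le_nhds
    · filter_upwards [self_mem_nhdsWithin] with s hs
      exact mem_Ioi.2 (mul_pos (by norm_num) (mem_Ioi.1 hs))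
  have h4 : Tendsto (fun a : ℝ => 4 * a) (𝓝[>] 0) (𝓝[>] 0) := by
    refine tendsto_nhdsWithin_iff.2 ⟨?_, ?_⟩
    · have : Continuous fun a : ℝ => 4 * a := by fun_prop
      simpa using (this.tendsto 0).mono_left nhdsWithin_le_nhds
    · filter_upwards [self_mem_nhdsWithin] with s hs
      exact mem_Ioi.2 (mul_pos (by norm_num) (mem_Ioi.1 hs))
  obtain ⟨a, ⟨⟨ha1, ha2⟩, ha3⟩, ha⟩ := ((((h3.eventually e1).and (h3.eventually e2)).and
    (h4.eventually hnear)).and (Ioo_mem_nhdsGT (show 0 < η / 2 by positivity))).exists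
  have ha0 : 0 < a := ha.1
  obtain ⟨r, hr, h⟩ := hw.exists_ball_hasWeakGradPosPart hn (c := u x) hum ha0 hρ
    (ha3.trans hUΩ) (hu.mono_set ha3) (hdu.mono_set ha3)
    (hdup.mono_measure (Measure.restrict_mono ha3 le_rfl)) (by simpa using ha1) (by
      rw [← hω]
      refine (mul_le_mul_right (mul_le_mul_right ha2 _) _).trans (le_of_eq ?_)
      rw [show (2 : ℝ≥0∞) ^ n = ENNReal.ofReal (2 ^ n) by
          rw [ENNReal.ofReal_pow (by norm_num)]; simp,
        ← ENNReal.ofReal_mul (by positivity), ← ENNReal.ofReal_mul (by positivity)]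
      congr 1
      field_simp
      norm_num)
  have := ha.2
  refine ⟨r, ⟨ha0.trans hr.1, by linarith [hr.2]⟩, (closedBall_subset_closedBall ?_).trans ha3,
    h M hρ'⟩
  linarith [hr.2]

lemma hasWeakGradPosPart_iff {n : ℕ} {B : Set (EuclideanSpace ℝ (Fin n))} (hB : MeasurableSet B)
    {u : EuclideanSpace ℝ (Fin n) → ℝ}
    {du : EuclideanSpace ℝ (Fin n) → EuclideanSpace ℝ (Fin n)} {M : ℝ} :
    HasWeakGradPosPart n B u du M ↔ ∀ φ : EuclideanSpace ℝ (Fin n) → ℝ,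
      ContDiff ℝ (⊤ : ℕ∞) φ → HasCompactSupport φ → ∀ i : Fin n,
      (∫ x in B, max (u x - M) 0 * (fderiv ℝ φ x (EuclideanSpace.single i (1 : ℝ))))
        = - ∫ x in B, {x | M < u x}.indicator du x i * φ x := by
  have key : ∀ φ : EuclideanSpace ℝ (Fin n) → ℝ, ∀ i : Fin n,
      (∫ x in univ, B.indicator (fun x => max (u x - M) 0) x *
        (fderiv ℝ φ x (EuclideanSpace.single i (1 : ℝ)))) =
        (∫ x in B, max (u x - M) 0 * (fderiv ℝ φ x (EuclideanSpace.single i (1 : ℝ)))) ∧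
      ∫ x in univ, (B ∩ {x | M < u x}).indicator du x i * φ x =
        ∫ x in B, {x | M < u x}.indicator du x i * φ x := by
    intro φ i
    rw [Measure.restrict_univ]
    constructor <;> rw [← integral_indicator hB] <;> refine integral_congr_ae (ae_of_all _ ?_) <;>
      intro x <;> by_cases hx : x ∈ B <;> simp [hx, indicator]
  constructor
  · intro h φ hφ hφc i
    rw [← (key φ i).1, ← (key φ i).2]
    exact h φ hφ hφc (subset_univ _) i
  · intro h φ hφ hφc _ i
    rw [(key φ i).1, (key φ i).2]
    exact h φ hφ hφc i

lemma integrableOn_mul_fderiv {n : ℕ} {Ω : Set (EuclideanSpace ℝ (Fin n))}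
    {u φ : EuclideanSpace ℝ (Fin n) → ℝ} (hu : IntegrableOn u Ω)
    (hφ : ContDiff ℝ (⊤ : ℕ∞) φ) (hφc : HasCompactSupport φ) (i : Fin n) :
    IntegrableOn (fun x => u x * (fderiv ℝ φ x (EuclideanSpace.single i (1 : ℝ)))) Ω := by
  have hc : Continuous fun x => fderiv ℝ φ x (EuclideanSpace.single i (1 : ℝ)) :=
    (hφ.continuous_fderiv (by simp)).clm_apply continuous_const
  obtain ⟨C, hC⟩ := hc.bounded_above_of_compact_support (hφc.fderiv_apply ℝ _)
  exact hu.mul_bdd (c := C) hc.aestronglyMeasurable (Eventually.of_forall hC)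

lemma integrableOn_apply_mul {n : ℕ} {Ω : Set (EuclideanSpace ℝ (Fin n))}
    {φ : EuclideanSpace ℝ (Fin n) → ℝ}
    {du : EuclideanSpace ℝ (Fin n) → EuclideanSpace ℝ (Fin n)} (hdu : IntegrableOn du Ω)
    (hφ : ContDiff ℝ (⊤ : ℕ∞) φ) (hφc : HasCompactSupport φ) (i : Fin n) :
    IntegrableOn (fun x => du x i * φ x) Ω := by
  obtain ⟨C, hC⟩ := hφ.continuous.bounded_above_of_compact_support hφc
  have h2 : IntegrableOn (fun x => du x i) Ω := (EuclideanSpace.proj (𝕜 := ℝ) i).integrable_comp hdu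
  exact h2.mul_bdd (c := C) hφ.continuous.aestronglyMeasurable (Eventually.of_forall hC)

lemma integrableOn_posPart_mul_fderiv {n : ℕ} {B : Set (EuclideanSpace ℝ (Fin n))}
    (hB : volume B ≠ ⊤) {u φ : EuclideanSpace ℝ (Fin n) → ℝ} (hu : IntegrableOn u B) (M : ℝ)
    (hφ : ContDiff ℝ (⊤ : ℕ∞) φ) (hφc : HasCompactSupport φ) (i : Fin n) :
    IntegrableOn (fun x => max (u x - M) 0 *
      (fderiv ℝ φ x (EuclideanSpace.single i (1 : ℝ)))) B := by
  have h1 : IntegrableOn (fun x => max (u x - M) 0) B :=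
    Integrable.pos_part (hu.sub (integrableOn_const hB))
  exact integrableOn_mul_fderiv h1 hφ hφc i

lemma integrableOn_indicator_apply_mul {n : ℕ} {B : Set (EuclideanSpace ℝ (Fin n))}
    {u φ : EuclideanSpace ℝ (Fin n) → ℝ} (hum : Measurable u)
    {du : EuclideanSpace ℝ (Fin n) → EuclideanSpace ℝ (Fin n)} (hdu : IntegrableOn du B) (M : ℝ)
    (hφ : ContDiff ℝ (⊤ : ℕ∞) φ) (hφc : HasCompactSupport φ) (i : Fin n) :
    IntegrableOn (fun x => {x | M < u x}.indicator du x i * φ x) B := by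
  have h1 : IntegrableOn ({x | M < u x}.indicator du) B :=
    Integrable.indicator hdu (measurableSet_lt measurable_const hum)
  exact integrableOn_apply_mul h1 hφ hφc i

lemma HasWeakGradPosPart.iUnion {n : ℕ} {ι : Type*} [Countable ι]
    {D : ι → Set (EuclideanSpace ℝ (Fin n))} (hD : ∀ j, MeasurableSet (D j))
    (hdisj : Pairwise (Function.onFun Disjoint D)) (hfin : volume (⋃ j, D j) ≠ ⊤)
    {u : EuclideanSpace ℝ (Fin n) → ℝ} (hum : Measurable u)
    {du : EuclideanSpace ℝ (Fin n) → EuclideanSpace ℝ (Fin n)} {M : ℝ}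
    (hu : IntegrableOn u (⋃ j, D j)) (hdu : IntegrableOn du (⋃ j, D j))
    (h : ∀ j, HasWeakGradPosPart n (D j) u du M) :
    HasWeakGradPosPart n (⋃ j, D j) u du M := by
  rw [hasWeakGradPosPart_iff (MeasurableSet.iUnion hD)]
  intro φ hφ hφc i
  rw [integral_iUnion hD hdisj (integrableOn_posPart_mul_fderiv hfin hu M hφ hφc i),
    integral_iUnion hD hdisj (integrableOn_indicator_apply_mul hum hdu M hφ hφc i), ← tsum_neg]
  exact tsum_congr fun j => (hasWeakGradPosPart_iff (hD j)).1 (h j) φ hφ hφc i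

lemma HasWeakGradPosPart.diff {n : ℕ} {B D : Set (EuclideanSpace ℝ (Fin n))}
    (hB : MeasurableSet B) (hD : MeasurableSet D) (hDB : D ⊆ B) (hfin : volume B ≠ ⊤)
    {u : EuclideanSpace ℝ (Fin n) → ℝ} (hum : Measurable u)
    {du : EuclideanSpace ℝ (Fin n) → EuclideanSpace ℝ (Fin n)} {M : ℝ}
    (hu : IntegrableOn u B) (hdu : IntegrableOn du B)
    (h : HasWeakGradPosPart n B u du M) (h' : HasWeakGradPosPart n D u du M) :
    HasWeakGradPosPart n (B \ D) u du M := by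
  rw [hasWeakGradPosPart_iff (hB.diff hD)]
  intro φ hφ hφc i
  rw [setIntegral_sdiff hD (integrableOn_posPart_mul_fderiv hfin hu M hφ hφc i) hDB,
    setIntegral_sdiff hD (integrableOn_indicator_apply_mul hum hdu M hφ hφc i) hDB,
    (hasWeakGradPosPart_iff hB).1 h φ hφ hφc i, (hasWeakGradPosPart_iff hD).1 h' φ hφ hφc i]
  ring

lemma IsWeakGradOn.neg {n : ℕ} {Ω : Set (EuclideanSpace ℝ (Fin n))}
    {u : EuclideanSpace ℝ (Fin n) → ℝ} {du : EuclideanSpace ℝ (Fin n) → EuclideanSpace ℝ (Fin n)}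
    (h : IsWeakGradOn n Ω u du) : IsWeakGradOn n Ω (fun x => -u x) (fun x => -du x) := by
  intro φ hφ hφc hφΩ i
  have := h φ hφ hφc hφΩ i
  simp only [neg_mul, PiLp.neg_apply, integral_neg, this]

lemma IsWeakGradOn.restrict_of_support_subset {n : ℕ} {Ω : Set (EuclideanSpace ℝ (Fin n))}
    {u : EuclideanSpace ℝ (Fin n) → ℝ} {du : EuclideanSpace ℝ (Fin n) → EuclideanSpace ℝ (Fin n)}
    (h : IsWeakGradOn n univ u du) (hu : ∀ x ∉ Ω, u x = 0) (hdu : ∀ x ∉ Ω, du x = 0) :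
    IsWeakGradOn n Ω u du := by
  intro φ hφ hφc hφΩ i
  have := h φ hφ hφc (subset_univ _) i
  rw [Measure.restrict_univ] at this
  rw [setIntegral_eq_integral_of_forall_compl_eq_zero fun x hx => by simp [hu x hx],
    setIntegral_eq_integral_of_forall_compl_eq_zero fun x hx => by simp [hdu x hx], this]

/-- Almost all of the sublevel set `{u < M}` can be covered by an exceptional set `D` on which the
truncation `(u - M)₊` is admissible and which meets the superlevel set in small measure. -/
lemma IsWeakGradOn.exists_sublevel_cover {n : ℕ} (hn : 1 ≤ n)
    {Ω : Set (EuclideanSpace ℝ (Fin n))} {u : EuclideanSpace ℝ (Fin n) → ℝ}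
    {du : EuclideanSpace ℝ (Fin n) → EuclideanSpace ℝ (Fin n)} (hw : IsWeakGradOn n Ω u du)
    {U : Set (EuclideanSpace ℝ (Fin n))} (hU : IsOpen U) (hUfin : volume U ≠ ⊤)
    (hum : Measurable u) (hUΩ : U ⊆ Ω)
    (hu : IntegrableOn u U) (hdu : IntegrableOn du U) (hdup : MemLp du n (volume.restrict U))
    (M : ℝ) {δ : ℝ≥0∞} (hδ : 0 < δ) :
    ∃ D V : Set (EuclideanSpace ℝ (Fin n)), MeasurableSet D ∧ D ⊆ U ∧ IsOpen V ∧ V ⊆ D ∧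
      volume (D \ V) = 0 ∧ volume ((U ∩ {x | u x < M}) \ D) = 0 ∧
      volume (D ∩ {x | M < u x}) ≤ δ * volume U ∧ HasWeakGradPosPart n D u du M := by
  have hA : MeasurableSet {x | M < u x} := measurableSet_lt measurable_const hum
  set A := {x | M < u x} with hAdef
  have h1 := hw.ae_exists_small_ball_hasWeakGradPosPart hn hU hum hUΩ hu hdu hdup
  have h2 := Besicovitch.ae_tendsto_measure_inter_div_of_measurableSet
    (volume : Measure (EuclideanSpace ℝ (Fin n))) hA
  set F : EuclideanSpace ℝ (Fin n) → Set ℝ := fun x => {r | closedBall x r ⊆ U ∧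
    HasWeakGradPosPart n (closedBall x r) u du M ∧
    volume (A ∩ closedBall x r) ≤ δ * volume (closedBall x r)} with hF
  set S := {x | x ∈ U ∧ u x < M ∧ ∀ η > 0, (F x ∩ Ioo 0 η).Nonempty} with hS
  have hae : ∀ᵐ x, x ∈ U → u x < M → x ∈ S := by
    filter_upwards [h1, h2] with x hx1 hx2 hxU hxM
    refine ⟨hxU, hxM, fun η hη => ?_⟩
    have hxA : x ∉ A := by simp [hAdef, hxM.le]
    rw [indicator_of_notMem hxA] at hx2
    obtain ⟨s, hs, hsub⟩ := mem_nhdsGT_iff_exists_Ioo_subset.1 (hx2.eventually_le_const hδ)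
    have hs' : (0 : ℝ) < s := hs
    obtain ⟨r, hr, hrU, hrG⟩ := hx1 hxU M hxM (min s η) (lt_min hs' hη)
    refine ⟨r, ⟨hrU, hrG, ?_⟩, hr.1, hr.2.trans_le (min_le_right _ _)⟩
    have h3 : volume (A ∩ closedBall x r) / volume (closedBall x r) ≤ δ :=
      hsub ⟨hr.1, hr.2.trans_le (min_le_left _ _)⟩
    rwa [ENNReal.div_le_iff (measure_closedBall_pos _ _ hr.1).ne' measure_closedBall_lt_top.ne]
      at h3
  obtain ⟨t, r, htc, htS, htr, hcov, hdisj⟩ := Besicovitch.exists_disjoint_closedBall_covering_ae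
    (volume : Measure (EuclideanSpace ℝ (Fin n))) F S (fun x hx => hx.2.2) (fun _ => 1)
    (fun _ _ => one_pos)
  have : Countable t := htc.to_subtype
  set D : t → Set (EuclideanSpace ℝ (Fin n)) := fun x => closedBall x (r x) with hDdef
  have hDm : ∀ x, MeasurableSet (D x) := fun x => measurableSet_closedBall
  have hDU : ∀ x, D x ⊆ U := fun x => (htr x x.2).1.1
  have hDU' : (⋃ x, D x) ⊆ U := iUnion_subset hDU
  have hdisj' : Pairwise (Function.onFun Disjoint D) := fun x y hxy =>
    hdisj x.2 y.2 (fun h => hxy (Subtype.ext h))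
  refine ⟨⋃ x, D x, ⋃ x : t, ball (x : EuclideanSpace ℝ (Fin n)) (r x), MeasurableSet.iUnion hDm,
    hDU', isOpen_iUnion fun _ => isOpen_ball, iUnion_mono fun x => ball_subset_closedBall,
    ?_, ?_, ?_, ?_⟩
  · refine measure_mono_null (t := ⋃ x : t, sphere (x : EuclideanSpace ℝ (Fin n)) (r x)) ?_ ?_
    · rintro y ⟨hy1, hy2⟩
      obtain ⟨x, hx⟩ := mem_iUnion.1 hy1
      refine mem_iUnion.2 ⟨x, ?_⟩
      have h3 : y ∉ ball (x : EuclideanSpace ℝ (Fin n)) (r x) := fun h =>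
        hy2 (mem_iUnion.2 ⟨x, h⟩)
      exact le_antisymm (mem_closedBall.1 hx) (not_lt.1 h3)
    · exact measure_iUnion_null fun x =>
        Measure.addHaar_sphere_of_ne_zero _ _ (htr x x.2).2.1.ne'
  · refine measure_mono_null (t := (S \ ⋃ x ∈ t, closedBall x (r x)) ∪
      {x | ¬ (x ∈ U → u x < M → x ∈ S)}) ?_ (measure_union_null hcov hae)
    rintro y ⟨⟨hy1, hy2⟩, hy3⟩
    by_cases hyS : y ∈ S
    · refine Or.inl ⟨hyS, fun h => hy3 ?_⟩
      obtain ⟨x, hx, hyx⟩ := mem_iUnion₂.1 h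
      exact mem_iUnion.2 ⟨⟨x, hx⟩, hyx⟩
    · exact Or.inr fun h => hyS (h hy1 hy2)
  · calc volume ((⋃ x, D x) ∩ A) = volume (⋃ x, D x ∩ A) := by rw [iUnion_inter]
      _ ≤ ∑' x, volume (D x ∩ A) := measure_iUnion_le _
      _ ≤ ∑' x, δ * volume (D x) := ENNReal.tsum_le_tsum fun x => by
          rw [inter_comm]; exact (htr x x.2).1.2.2
      _ = δ * volume (⋃ x, D x) := by rw [ENNReal.tsum_mul_left, measure_iUnion hdisj' hDm]
      _ ≤ δ * volume U := by gcongr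
  · exact HasWeakGradPosPart.iUnion hDm hdisj' (measure_ne_top_of_subset hDU' hUfin) hum
      (hu.mono_set hDU') (hdu.mono_set hDU') fun x => (htr x x.2).1.2.1

lemma IsQMinimizer.lintegral_le_of_sublevel_cover {n : ℕ} {Ω : Set (EuclideanSpace ℝ (Fin n))}
    {f : EuclideanSpace ℝ (Fin n) → EuclideanSpace ℝ (Fin n) → ℝ} {Q : ℝ}
    {u : EuclideanSpace ℝ (Fin n) → ℝ}
    {du : EuclideanSpace ℝ (Fin n) → EuclideanSpace ℝ (Fin n)} (hQ : 1 ≤ Q)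
    (hmin : IsQMinimizer n Ω f Q u du) (hum : Measurable u)
    {G : EuclideanSpace ℝ (Fin n) → ℝ} (hG : IntegrableOn G Ω)
    (hf0m : AEStronglyMeasurable (fun x => f x 0) (volume.restrict Ω))
    (hf0 : ∀ᵐ x ∂volume.restrict Ω, |f x 0| ≤ G x)
    (hlow : ∀ᵐ x ∂volume.restrict Ω, ‖du x‖ ^ n - G x ≤ f x (du x))
    {x₀ : EuclideanSpace ℝ (Fin n)} {R M : ℝ} (hR : 0 < R) (hB : closedBall x₀ R ⊆ Ω)
    (hu : IntegrableOn u (closedBall x₀ R)) (hdu : IntegrableOn du (closedBall x₀ R))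
    (hnull : volume {x | u x = M} = 0) (hBM : HasWeakGradPosPart n (closedBall x₀ R) u du M)
    {D V : Set (EuclideanSpace ℝ (Fin n))} (hD : MeasurableSet D) (hDB : D ⊆ closedBall x₀ R)
    (hV : IsOpen V) (hVD : V ⊆ D) (hDV : volume (D \ V) = 0)
    (hcov : volume ((ball x₀ R ∩ {x | u x < M}) \ D) = 0) (hDM : HasWeakGradPosPart n D u du M) :
    ∫⁻ x in (closedBall x₀ R \ D) ∩ {x | M < u x}, ‖du x‖ₑ ^ n ≤
      ENNReal.ofReal (Q + 1) *
        ∫⁻ x in (closedBall x₀ R \ D) ∩ {x | M < u x}, ENNReal.ofReal (G x) := by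
  set B := closedBall x₀ R with hBdef
  have hBm : MeasurableSet B := measurableSet_closedBall
  have hBfin : volume B ≠ ⊤ := measure_closedBall_lt_top.ne
  have hA : MeasurableSet {x | M < u x} := measurableSet_lt measurable_const hum
  set P := (B \ D) ∩ {x | M < u x} with hP
  have hPm : MeasurableSet P := (hBm.diff hD).inter hA
  have hPΩ : P ⊆ Ω := fun x hx => hB hx.1.1
  set φ : EuclideanSpace ℝ (Fin n) → ℝ :=
    fun x => -(B \ D).indicator (fun x => max (u x - M) 0) x with hφ
  set dφ : EuclideanSpace ℝ (Fin n) → EuclideanSpace ℝ (Fin n) :=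
    fun x => -P.indicator du x with hdφ
  have hnotΩ : ∀ x ∉ Ω, x ∉ B \ D := fun x hx h => hx (hB h.1)
  have hweak : IsWeakGradOn n Ω φ dφ := by
    refine IsWeakGradOn.restrict_of_support_subset
      (HasWeakGradPosPart.diff hBm hD hDB hBfin hum hu hdu hBM hDM).neg ?_ ?_
    · intro x hx
      exact neg_eq_zero.2 (indicator_of_notMem (hnotΩ x hx) _)
    · intro x hx
      exact neg_eq_zero.2 (indicator_of_notMem (fun h : x ∈ P => hnotΩ x hx h.1) _)
  have hφi : IntegrableOn φ Ω := by
    have h0 : IntegrableOn (fun x => max (u x - M) 0) B :=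
      Integrable.pos_part (hu.sub (integrableOn_const hBfin))
    have h1 : IntegrableOn (fun x => max (u x - M) 0) (B \ D) := h0.mono_set sdiff_subset
    exact ((integrable_indicator_iff (hBm.diff hD)).2 h1).neg.integrableOn
  have hdφi : IntegrableOn dφ Ω :=
    ((integrable_indicator_iff hPm).2 (hdu.mono_set fun x hx => hx.1.1)).neg.integrableOn
  set T := tsupport φ with hT
  have hTsub : T ⊆ B \ V := by
    refine closure_minimal (fun x hx => ?_) (isClosed_closedBall.sdiff hV)
    by_contra hx'
    refine hx ?_
    have : x ∉ B \ D := fun h => hx' ⟨h.1, fun h' => h.2 (hVD h')⟩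
    simp [hφ, indicator_of_notMem this]
  have hTc : IsCompact T :=
    (isCompact_closedBall x₀ R).of_isClosed_subset (isClosed_tsupport φ)
      (hTsub.trans sdiff_subset)
  have hPT : P ⊆ T := by
    refine fun x hx => subset_tsupport φ ?_
    have h1 : M < u x := hx.2
    rw [Function.mem_support, hφ]
    simp only [indicator_of_mem hx.1, ne_eq, neg_eq_zero]
    exact (lt_max_of_lt_left (sub_pos.2 h1)).ne'
  have hTP : volume (T \ P) = 0 := by
    refine measure_mono_null (t := ((D \ V) ∪ sphere x₀ R) ∪ ({x | u x = M} ∪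
      ((ball x₀ R ∩ {x | u x < M}) \ D))) ?_ (measure_union_null (measure_union_null hDV
        (Measure.addHaar_sphere_of_ne_zero _ _ hR.ne')) (measure_union_null hnull hcov))
    rintro x ⟨hxT, hxP⟩
    have hx := hTsub hxT
    by_cases hxD : x ∈ D
    · exact Or.inl (Or.inl ⟨hxD, hx.2⟩)
    rcases lt_or_eq_of_le (mem_closedBall.1 hx.1) with h | h
    · rcases lt_trichotomy (u x) M with h' | h' | h'
      · exact Or.inr (Or.inr ⟨⟨h, h'⟩, hxD⟩)
      · exact Or.inr (Or.inl h')
      · exact absurd ⟨⟨hx.1, hxD⟩, h'⟩ hxP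
    · exact Or.inl (Or.inr h)
  have hTPe : T =ᵐ[volume] P := by
    refine (ae_le_set.2 hTP).antisymm (LE.le.eventuallyLE hPT)
  have hTΩ : T ⊆ Ω := hTsub.trans (sdiff_subset.trans hB)
  have hmono : volume.restrict P ≤ volume.restrict Ω := Measure.restrict_mono hPΩ le_rfl
  have hG' : IntegrableOn G P := hG.mono_set hPΩ
  have hf0' : ∀ᵐ x ∂volume.restrict P, |f x 0| ≤ G x := ae_mono hmono hf0
  have hf0i : IntegrableOn (fun x => f x 0) P :=
    Integrable.mono' hG' (hf0m.mono_measure hmono) hf0'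
  have hsum : ∀ x ∈ P, f x (du x + dφ x) = f x 0 := fun x hx => by
    simp [hdφ, indicator_of_mem hx]
  have hfi : IntegrableOn (fun x => f x (du x + dφ x)) T := by
    rw [integrableOn_congr_set_ae hTPe]
    exact (integrableOn_congr_fun hsum hPm).2 hf0i
  obtain ⟨hint, hle⟩ := hmin.2.2.2 φ dφ hweak hφi hdφi hTc hTΩ
  have hle := hle hfi
  rw [setIntegral_congr_set hTPe, setIntegral_congr_set hTPe, setIntegral_congr_fun hPm hsum] at hle
  have hint' : IntegrableOn (fun x => f x (du x)) P := hint.mono_set hPT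
  have hlow' : ∀ᵐ x ∂volume.restrict P, ‖du x‖ ^ n - G x ≤ f x (du x) := ae_mono hmono hlow
  have hle2 : ∫ x in P, f x 0 ≤ ∫ x in P, G x :=
    integral_mono_ae hf0i hG' (hf0'.mono fun x hx => (le_abs_self _).trans hx)
  have hG0 : 0 ≤ᵐ[volume.restrict P] G := hf0'.mono fun x hx => (abs_nonneg _).trans hx
  calc ∫⁻ x in P, ‖du x‖ₑ ^ n ≤ ∫⁻ x in P, ENNReal.ofReal (f x (du x) + G x) := by
        refine lintegral_mono_ae (hlow'.mono fun x hx => ?_)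
        rw [← ofReal_norm, ← ENNReal.ofReal_pow (norm_nonneg _)]
        exact ENNReal.ofReal_le_ofReal (by linarith)
    _ = ENNReal.ofReal (∫ x in P, (f x (du x) + G x)) := by
        refine (ofReal_integral_eq_lintegral_ofReal (hint'.add hG') ?_).symm
        filter_upwards [hlow'] with x hx
        have : 0 ≤ ‖du x‖ ^ n := by positivity
        simp only [Pi.zero_apply, Pi.add_apply]
        linarith
    _ ≤ ENNReal.ofReal ((Q + 1) * ∫ x in P, G x) := by
        refine ENNReal.ofReal_le_ofReal ?_
        rw [integral_add hint' hG']
        nlinarith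
    _ = _ := by
        rw [ENNReal.ofReal_mul (by linarith), ofReal_integral_eq_lintegral_ofReal hG' hG0]

lemma IsQMinimizer.lintegral_superlevel_le_of_null {n : ℕ} (hn : 1 ≤ n)
    {Ω : Set (EuclideanSpace ℝ (Fin n))}
    {f : EuclideanSpace ℝ (Fin n) → EuclideanSpace ℝ (Fin n) → ℝ} {Q : ℝ}
    {u : EuclideanSpace ℝ (Fin n) → ℝ}
    {du : EuclideanSpace ℝ (Fin n) → EuclideanSpace ℝ (Fin n)} (hQ : 1 ≤ Q)
    (hmin : IsQMinimizer n Ω f Q u du) (hum : Measurable u)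
    {G : EuclideanSpace ℝ (Fin n) → ℝ} (hG : IntegrableOn G Ω)
    (hf0m : AEStronglyMeasurable (fun x => f x 0) (volume.restrict Ω))
    (hf0 : ∀ᵐ x ∂volume.restrict Ω, |f x 0| ≤ G x)
    (hlow : ∀ᵐ x ∂volume.restrict Ω, ‖du x‖ ^ n - G x ≤ f x (du x))
    {x₀ : EuclideanSpace ℝ (Fin n)} {R M : ℝ} (hR : 0 < R) (hB : closedBall x₀ R ⊆ Ω)
    (hu : IntegrableOn u (closedBall x₀ R)) (hdu : IntegrableOn du (closedBall x₀ R))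
    (hdup : MemLp du n (volume.restrict (closedBall x₀ R)))
    (hnull : volume {x | u x = M} = 0) (hBM : HasWeakGradPosPart n (closedBall x₀ R) u du M) :
    ∫⁻ x in closedBall x₀ R ∩ {x | M < u x}, ‖du x‖ₑ ^ n ≤
      ENNReal.ofReal (Q + 1) *
        ∫⁻ x in closedBall x₀ R ∩ {x | M < u x}, ENNReal.ofReal (G x) := by
  set B := closedBall x₀ R with hBdef
  set A := {x | M < u x} with hAdef
  have hA : MeasurableSet A := measurableSet_lt measurable_const hum
  have hUB : ball x₀ R ⊆ B := ball_subset_closedBall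
  have hcover := fun k : ℕ => hmin.1.exists_sublevel_cover hn (isOpen_ball (x := x₀) (ε := R))
    measure_ball_lt_top.ne hum (hUB.trans hB) (hu.mono_set hUB) (hdu.mono_set hUB)
    (hdup.mono_measure (Measure.restrict_mono hUB le_rfl)) M (δ := ((k : ℝ≥0∞) + 1)⁻¹)
    (ENNReal.inv_pos.2 (by finiteness))
  choose D V hD hDU hV hVD hDV hcov hsmall hDM using hcover
  have hfin : ∫⁻ x in B, ‖du x‖ₑ ^ n ≠ ⊤ := by
    have h3 := lintegral_rpow_enorm_lt_top_of_eLpNorm_lt_top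
      (p := (n : ℝ≥0∞)) (by positivity) (by simp) hdup.2
    simpa using h3.ne
  have hlim : Tendsto (fun k => ∫⁻ x in D k ∩ A, ‖du x‖ₑ ^ n) atTop (𝓝 0) := by
    have h1 : Tendsto (fun k : ℕ => ((k : ℝ≥0∞) + 1)⁻¹ * volume (ball x₀ R)) atTop (𝓝 0) := by
      have h2 : Tendsto (fun k : ℕ => ((k : ℝ≥0∞) + 1)⁻¹) atTop (𝓝 0) := by
        have := (ENNReal.tendsto_inv_nat_nhds_zero).comp (tendsto_add_atTop_nat 1)
        simpa [Function.comp_def] using this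
      simpa using ENNReal.Tendsto.mul_const h2 (Or.inr measure_ball_lt_top.ne)
    have h2 : Tendsto (fun k => volume.restrict B (D k ∩ A)) atTop (𝓝 0) :=
      tendsto_of_tendsto_of_tendsto_of_le_of_le tendsto_const_nhds h1 (fun _ => zero_le)
        fun k => (Measure.restrict_apply_le _ _).trans (hsmall k)
    refine (tendsto_setLIntegral_zero hfin h2).congr fun k => ?_
    rw [Measure.restrict_restrict ((hD k).inter hA), inter_eq_self_of_subset_left
      (inter_subset_left.trans ((hDU k).trans hUB))]
  have hle : ∀ k, ∫⁻ x in B ∩ A, ‖du x‖ₑ ^ n ≤ ENNReal.ofReal (Q + 1) *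
      (∫⁻ x in B ∩ A, ENNReal.ofReal (G x)) + ∫⁻ x in D k ∩ A, ‖du x‖ₑ ^ n := by
    intro k
    calc ∫⁻ x in B ∩ A, ‖du x‖ₑ ^ n
        ≤ ∫⁻ x in ((B \ D k) ∩ A) ∪ (D k ∩ A), ‖du x‖ₑ ^ n := by
          refine lintegral_mono_set fun x hx => ?_
          by_cases h : x ∈ D k
          · exact Or.inr ⟨h, hx.2⟩
          · exact Or.inl ⟨⟨hx.1, h⟩, hx.2⟩
      _ ≤ (∫⁻ x in (B \ D k) ∩ A, ‖du x‖ₑ ^ n) + ∫⁻ x in D k ∩ A, ‖du x‖ₑ ^ n :=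
          lintegral_union_le _ _ _
      _ ≤ _ := by
          gcongr
          refine (hmin.lintegral_le_of_sublevel_cover hQ hum hG hf0m hf0 hlow hR hB hu hdu hnull
            hBM (hD k) ((hDU k).trans hUB) (hV k) (hVD k) (hDV k) (hcov k) (hDM k)).trans ?_
          gcongr
          exact sdiff_subset
  refine ge_of_tendsto' (f := fun k => _) (x := atTop) ?_ hle
  simpa using hlim.const_add (ENNReal.ofReal (Q + 1) * ∫⁻ x in B ∩ A, ENNReal.ofReal (G x))

/-- Energy of a quasi-minimizer on superlevel sets inside a ball is controlled by the
inhomogeneity. -/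
lemma IsQMinimizer.lintegral_superlevel_le {n : ℕ} (hn : 1 ≤ n)
    {Ω : Set (EuclideanSpace ℝ (Fin n))}
    {f : EuclideanSpace ℝ (Fin n) → EuclideanSpace ℝ (Fin n) → ℝ} {Q : ℝ}
    {u : EuclideanSpace ℝ (Fin n) → ℝ}
    {du : EuclideanSpace ℝ (Fin n) → EuclideanSpace ℝ (Fin n)} (hQ : 1 ≤ Q)
    (hmin : IsQMinimizer n Ω f Q u du) (hum : Measurable u)
    {G : EuclideanSpace ℝ (Fin n) → ℝ} (hG : IntegrableOn G Ω)
    (hf0m : AEStronglyMeasurable (fun x => f x 0) (volume.restrict Ω))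
    (hf0 : ∀ᵐ x ∂volume.restrict Ω, |f x 0| ≤ G x)
    (hlow : ∀ᵐ x ∂volume.restrict Ω, ‖du x‖ ^ n - G x ≤ f x (du x))
    {x₀ : EuclideanSpace ℝ (Fin n)} {R M₀ : ℝ} (hR : 0 < R) (hB : closedBall x₀ R ⊆ Ω)
    (hu : IntegrableOn u (closedBall x₀ R)) (hdu : IntegrableOn du (closedBall x₀ R))
    (hdup : MemLp du n (volume.restrict (closedBall x₀ R)))
    (hBM : ∀ M, M₀ < M → HasWeakGradPosPart n (closedBall x₀ R) u du M) {M : ℝ} (hM : M₀ ≤ M) :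
    ∫⁻ x in closedBall x₀ R ∩ {x | M < u x}, ‖du x‖ₑ ^ n ≤
      ENNReal.ofReal (Q + 1) *
        ∫⁻ x in closedBall x₀ R ∩ {x | M < u x}, ENNReal.ofReal (G x) := by
  set B := closedBall x₀ R with hBdef
  have hdense : Dense {t : ℝ | 0 < volume {x | u x = t}}ᶜ :=
    (Measure.countable_meas_level_set_pos (μ := volume) hum).dense_compl ℝ
  obtain ⟨s, hs_anti, hs, hs_lim⟩ := hdense.exists_seq_strictAnti_tendsto M
  have hunion : B ∩ {x | M < u x} = ⋃ k, B ∩ {x | s k < u x} := by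
    ext x
    simp only [mem_inter_iff, Set.mem_ofPred_eq, mem_iUnion, exists_and_left]
    refine and_congr_right fun _ => ⟨fun h => ?_, fun ⟨k, hk⟩ => ?_⟩
    · exact (hs_lim.eventually_lt_const h).exists
    · exact (hs k).1.trans hk
  have hdir : Directed (· ⊆ ·) fun k => B ∩ {x | s k < u x} :=
    Monotone.directed_le fun i j hij => inter_subset_inter_right _
      fun x (hx : s i < u x) => (hs_anti.antitone hij).trans_lt hx
  rw [hunion, setLIntegral_iUnion_of_directed _ hdir]
  refine iSup_le fun k => ?_
  refine (hmin.lintegral_superlevel_le_of_null hn hQ hum hG hf0m hf0 hlow hR hB hu hdu hdup ?_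
    (hBM _ (hM.trans_lt (hs k).1))).trans ?_
  · simpa using (hs k).2
  · gcongr
    exact subset_iUnion (fun k => B ∩ {x | s k < u x}) k

lemma IsQMinimizer.memLp_of_isCompact {n : ℕ} (hn : 1 ≤ n)
    {Ω : Set (EuclideanSpace ℝ (Fin n))}
    {f : EuclideanSpace ℝ (Fin n) → EuclideanSpace ℝ (Fin n) → ℝ} {Q : ℝ}
    {u : EuclideanSpace ℝ (Fin n) → ℝ}
    {du : EuclideanSpace ℝ (Fin n) → EuclideanSpace ℝ (Fin n)}
    (hmin : IsQMinimizer n Ω f Q u du)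
    {G : EuclideanSpace ℝ (Fin n) → ℝ} (hG : IntegrableOn G Ω)
    (hlow : ∀ᵐ x ∂volume.restrict Ω, ‖du x‖ ^ n - G x ≤ f x (du x))
    {K : Set (EuclideanSpace ℝ (Fin n))} (hK : IsCompact K) (hKΩ : K ⊆ Ω) :
    MemLp du n (volume.restrict K) := by
  have : Nonempty (Fin n) := ⟨⟨0, hn⟩⟩
  obtain ⟨c, hcc, hcd⟩ := TopologicalSpace.exists_countable_dense K
  set S : Set (EuclideanSpace ℝ (Fin n)) := Subtype.val '' c with hS
  have hSnull : volume S = 0 := (hcc.image _).measure_zero _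
  have hSK : closure S = K := by
    refine Subset.antisymm (closure_minimal ?_ hK.isClosed) fun x hx => ?_
    · rintro _ ⟨y, _, rfl⟩
      exact y.2
    · have : (⟨x, hx⟩ : K) ∈ closure c := hcd _
      rw [closure_subtype] at this
      exact this
  set φ : EuclideanSpace ℝ (Fin n) → ℝ := S.indicator 1 with hφ
  have hφ0 : φ =ᵐ[volume] 0 := indicator_meas_zero hSnull
  have hφ0' : φ =ᵐ[volume.restrict Ω] 0 := ae_restrict_of_ae hφ0
  have hsupp : tsupport φ = K := by
    rw [tsupport, hφ, support_indicator]
    simpa using hSK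
  have hweak : IsWeakGradOn n Ω φ 0 := by
    intro ψ _ _ _ i
    have h1 : ∫ x in Ω, φ x * (fderiv ℝ ψ x (EuclideanSpace.single i (1 : ℝ))) = 0 := by
      rw [← integral_zero (EuclideanSpace ℝ (Fin n)) ℝ (μ := volume.restrict Ω)]
      exact integral_congr_ae (hφ0'.mono fun x hx => by simp [hx])
    rw [h1]
    simp
  have hint := (hmin.2.2.2 φ 0 hweak (integrableOn_zero.congr hφ0'.symm) integrableOn_zero
    (hsupp ▸ hK) (hsupp ▸ hKΩ)).1
  rw [hsupp] at hint
  have hdu : IntegrableOn du K := hmin.2.2.1.integrableOn_compact_subset hKΩ hK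
  have hpow : Integrable (fun x => ‖du x‖ ^ (n : ℝ≥0∞).toReal) (volume.restrict K) := by
    refine (hint.add (hG.mono_set hKΩ)).mono' ?_ ?_
    · exact (hdu.aestronglyMeasurable.norm.aemeasurable.pow_const _).aestronglyMeasurable
    · filter_upwards [ae_mono (Measure.restrict_mono hKΩ le_rfl) hlow] with x hx
      rw [ENNReal.toReal_natCast, Real.rpow_natCast, Real.norm_of_nonneg (by positivity)]
      simp only [Pi.add_apply]
      linarith
  exact (integrable_norm_rpow_iff hdu.aestronglyMeasurable
    (by simpa using (show n ≠ 0 by omega)) (by simp)).1 hpow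

lemma IsQMinimizer.congr_ae {n : ℕ} {Ω : Set (EuclideanSpace ℝ (Fin n))}
    {f : EuclideanSpace ℝ (Fin n) → EuclideanSpace ℝ (Fin n) → ℝ} {Q : ℝ}
    {u u' : EuclideanSpace ℝ (Fin n) → ℝ}
    {du : EuclideanSpace ℝ (Fin n) → EuclideanSpace ℝ (Fin n)}
    (hmin : IsQMinimizer n Ω f Q u du) (huu' : u =ᵐ[volume.restrict Ω] u') :
    IsQMinimizer n Ω f Q u' du := by
  refine ⟨fun φ hφ hφc hφΩ i => ?_, fun x hx => ?_, hmin.2.2⟩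
  · rw [← hmin.1 φ hφ hφc hφΩ i]
    exact integral_congr_ae (huu'.mono fun x hx => by simp only [hx])
  · obtain ⟨s, hs, hsu⟩ := hmin.2.1 x hx
    refine ⟨s ∩ Ω, inter_mem hs self_mem_nhdsWithin, ?_⟩
    exact (hsu.mono_set inter_subset_left).congr
      (ae_mono (Measure.restrict_mono inter_subset_right le_rfl) huu')

lemma IsQMinimizer.neg {n : ℕ} {Ω : Set (EuclideanSpace ℝ (Fin n))}
    {f : EuclideanSpace ℝ (Fin n) → EuclideanSpace ℝ (Fin n) → ℝ} {Q : ℝ}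
    {u : EuclideanSpace ℝ (Fin n) → ℝ}
    {du : EuclideanSpace ℝ (Fin n) → EuclideanSpace ℝ (Fin n)}
    (hmin : IsQMinimizer n Ω f Q u du) :
    IsQMinimizer n Ω (fun x z => f x (-z)) Q (fun x => -u x) (fun x => -du x) := by
  refine ⟨hmin.1.neg, hmin.2.1.neg, hmin.2.2.1.neg, fun φ dφ hw hφ hdφ hc hs => ?_⟩
  have hsupp : tsupport (fun x => -φ x) = tsupport φ := by
    simp [tsupport, Function.support]
  have h := hmin.2.2.2 (fun x => -φ x) (fun x => -dφ x) hw.neg hφ.neg hdφ.neg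
    (by rwa [hsupp]) (by rwa [hsupp])
  rw [hsupp] at h
  simpa only [neg_neg, neg_add_rev, add_comm] using h

/-- Weak-type form of the Gagliardo-Nirenberg-Sobolev inequality in `W^{1,1}`. -/
lemma IsWeakGradOn.exists_mul_measure_rpow_le {n : ℕ} (hn : 2 ≤ n) :
    ∃ C : ℝ, 0 < C ∧ ∀ (v : EuclideanSpace ℝ (Fin n) → ℝ)
      (dv : EuclideanSpace ℝ (Fin n) → EuclideanSpace ℝ (Fin n)),
      IsWeakGradOn n univ v dv → Integrable v → Integrable dv → HasCompactSupport v →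
      ∀ (τ : ℝ≥0∞) (A : Set (EuclideanSpace ℝ (Fin n))), (∀ x ∈ A, τ ≤ ‖v x‖ₑ) →
      τ * volume A ^ (((n : ℝ) - 1) / n) ≤ ENNReal.ofReal C * ∫⁻ x, ‖dv x‖ₑ := by
  have hn' : (2 : ℝ) ≤ n := by exact_mod_cast hn
  set p : ℝ := n / (n - 1) with hp
  have hp0 : 0 < p := div_pos (by linarith) (by linarith)
  have hpinv : p⁻¹ = ((n : ℝ) - 1) / n := by rw [hp, inv_div]
  have hconj : (Module.finrank ℝ (EuclideanSpace ℝ (Fin n)) : ℝ).HolderConjugate p := by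
    rw [finrank_euclideanSpace_fin, Real.holderConjugate_iff]
    refine ⟨by linarith, ?_⟩
    rw [hpinv]
    field_simp
    ring
  set C₀ : ℝ≥0 := lintegralPowLePowLIntegralFDerivConst
    (volume : Measure (EuclideanSpace ℝ (Fin n))) p with hC₀
  refine ⟨(C₀ : ℝ) ^ p⁻¹ + 1, by positivity, fun v dv hw hv hdv hvc τ A hA => ?_⟩
  obtain ⟨ε, hε0, hεlim⟩ : ∃ ε : ℕ → ℝ≥0∞, (∀ k, 0 < ε k) ∧
      Tendsto ε atTop (𝓝 0) :=
    ⟨fun k => ((k : ℝ≥0∞) + 1)⁻¹, fun k => ENNReal.inv_pos.2 (by finiteness), by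
      have := (ENNReal.tendsto_inv_nat_nhds_zero).comp (tendsto_add_atTop_nat 1)
      simpa [Function.comp_def] using this⟩
  obtain ⟨w, hw'⟩ := hw.exists_smooth_approx (K := univ) (U := univ) (p := 1) (r := 1) (ε := ε)
    MeasurableSet.univ subset_rfl hv.integrableOn hdv.integrableOn le_rfl
    (by simpa using memLp_one_iff_integrable.2 hdv) MeasurableSet.univ one_pos
    (fun x _ => subset_univ _) hε0
  simp only [Measure.restrict_univ, pow_one] at hw'
  have h1 : Tendsto (fun k => ∫⁻ x, ‖w k x - v x‖ₑ) atTop (𝓝 0) :=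
    tendsto_of_tendsto_of_tendsto_of_le_of_le tendsto_const_nhds hεlim (fun _ => zero_le)
      fun k => (hw' k).2.2.1
  have hsub : ∃ ns : ℕ → ℕ, StrictMono ns ∧ ∀ᵐ x,
      Tendsto (fun k => w (ns k) x) atTop (𝓝 (v x)) := by
    refine TendstoInMeasure.exists_seq_tendsto_ae
      (tendstoInMeasure_of_tendsto_eLpNorm (p := 1) one_ne_zero
        (fun k => (hw' k).1.continuous.aestronglyMeasurable) hv.aestronglyMeasurable ?_)
    simpa [eLpNorm_one_eq_lintegral_enorm] using h1
  obtain ⟨ns, hns, hae⟩ := hsub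
  have hgrad : ∀ k, ∫⁻ x, ‖fderiv ℝ (w k) x‖ₑ ≤ ε k + ∫⁻ x, ‖dv x‖ₑ := by
    intro k
    have hm : AEMeasurable (fun x => ‖dv x‖ₑ) volume := hdv.aestronglyMeasurable.enorm
    refine le_trans ?_ (add_le_add_left (hw' k).2.2.2 _)
    rw [← lintegral_add_right' _ hm]
    refine lintegral_mono fun x => ?_
    have e : ‖dv x‖ₑ = ‖innerSL ℝ (dv x)‖ₑ := by
      rw [← ofReal_norm, ← ofReal_norm, innerSL_apply_norm]
    simp only
    rw [e]
    exact enorm_le_enorm_sub_add _ _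
  have hbound : ∫⁻ x, ‖v x‖ₑ ^ p ≤ C₀ * (∫⁻ x, ‖dv x‖ₑ) ^ p := by
    have hlim : Tendsto (fun k => (C₀ : ℝ≥0∞) * (ε (ns k) + ∫⁻ x, ‖dv x‖ₑ) ^ p) atTop
        (𝓝 (C₀ * (∫⁻ x, ‖dv x‖ₑ) ^ p)) := by
      refine ENNReal.Tendsto.const_mul ?_ (Or.inr ENNReal.coe_ne_top)
      have h2 := (hεlim.comp hns.tendsto_atTop).add_const (∫⁻ x, ‖dv x‖ₑ)
      rw [zero_add] at h2
      exact ((ENNReal.continuous_rpow_const (y := p)).tendsto _).comp h2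
    calc ∫⁻ x, ‖v x‖ₑ ^ p
        ≤ ∫⁻ x, liminf (fun k => ‖w (ns k) x‖ₑ ^ p) atTop := by
          refine lintegral_mono_ae (hae.mono fun x hx => ?_)
          exact (((ENNReal.continuous_rpow_const (y := p)).tendsto _).comp hx.enorm).liminf_eq.ge
      _ ≤ liminf (fun k => ∫⁻ x, ‖w (ns k) x‖ₑ ^ p) atTop := by
          refine lintegral_liminf_le fun k => ?_
          exact ((hw' _).1.continuous.enorm.measurable).pow_const _
      _ ≤ liminf (fun k => (C₀ : ℝ≥0∞) * (ε (ns k) + ∫⁻ x, ‖dv x‖ₑ) ^ p) atTop := by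
          refine liminf_le_liminf (Eventually.of_forall fun k => ?_)
          refine (lintegral_pow_le_pow_lintegral_fderiv volume (hw' _).1 ((hw' _).2.1 hvc)
            hconj).trans ?_
          gcongr
          exact hgrad _
      _ = _ := hlim.liminf_eq
  have hτ : τ ^ p * volume A ≤ C₀ * (∫⁻ x, ‖dv x‖ₑ) ^ p := by
    refine le_trans ?_ hbound
    have hvm : AEMeasurable (fun x => ‖v x‖ₑ ^ p) volume :=
      hv.aestronglyMeasurable.enorm.pow_const _
    refine le_trans ?_ (mul_meas_ge_le_lintegral₀ hvm (τ ^ p))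
    gcongr
    exact fun x hx => ENNReal.rpow_le_rpow (hA x hx) hp0.le
  have h3 := ENNReal.rpow_le_rpow hτ (inv_nonneg.2 hp0.le)
  rw [ENNReal.mul_rpow_of_nonneg _ _ (inv_nonneg.2 hp0.le),
    ENNReal.mul_rpow_of_nonneg _ _ (inv_nonneg.2 hp0.le), ENNReal.rpow_rpow_inv hp0.ne',
    ENNReal.rpow_rpow_inv hp0.ne', hpinv] at h3
  refine h3.trans ?_
  gcongr
  rw [← hpinv, ← ENNReal.ofReal_coe_nnreal, ENNReal.ofReal_rpow_of_nonneg C₀.coe_nonneg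
    (inv_nonneg.2 hp0.le)]
  exact ENNReal.ofReal_le_ofReal (by linarith)

lemma IsWeakGradOn.sub {n : ℕ} {Ω : Set (EuclideanSpace ℝ (Fin n))}
    {u v : EuclideanSpace ℝ (Fin n) → ℝ}
    {du dv : EuclideanSpace ℝ (Fin n) → EuclideanSpace ℝ (Fin n)}
    (hu : IsWeakGradOn n Ω u du) (hv : IsWeakGradOn n Ω v dv)
    (hui : IntegrableOn u Ω) (hvi : IntegrableOn v Ω)
    (hdui : IntegrableOn du Ω) (hdvi : IntegrableOn dv Ω) :
    IsWeakGradOn n Ω (fun x => u x - v x) (fun x => du x - dv x) := by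
  intro φ hφ hφc hφΩ i
  simp only [sub_mul, PiLp.sub_apply]
  rw [integral_sub (integrableOn_mul_fderiv hui hφ hφc i) (integrableOn_mul_fderiv hvi hφ hφc i),
    integral_sub (integrableOn_apply_mul hdui hφ hφc i) (integrableOn_apply_mul hdvi hφ hφc i),
    hu φ hφ hφc hφΩ i, hv φ hφ hφc hφΩ i]
  ring

/-- Decay of the measure of superlevel sets across a slice, in terms of the `n`-energy in the
slice. -/
lemma HasWeakGradPosPart.exists_measure_superlevel_le {n : ℕ} (hn : 2 ≤ n) :
    ∃ C : ℝ, 0 < C ∧ ∀ (u : EuclideanSpace ℝ (Fin n) → ℝ)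
      (du : EuclideanSpace ℝ (Fin n) → EuclideanSpace ℝ (Fin n)) (x₀ : EuclideanSpace ℝ (Fin n))
      (R a b : ℝ), Measurable u → IntegrableOn u (closedBall x₀ R) →
      IntegrableOn du (closedBall x₀ R) → a ≤ b →
      HasWeakGradPosPart n (closedBall x₀ R) u du a →
      HasWeakGradPosPart n (closedBall x₀ R) u du b →
      ENNReal.ofReal (b - a) *
          volume (closedBall x₀ R ∩ {x | b < u x}) ^ (((n : ℝ) - 1) / n) ≤
        ENNReal.ofReal C *
          ((∫⁻ x in (closedBall x₀ R ∩ {x | a < u x}) \ (closedBall x₀ R ∩ {x | b < u x}),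
            ‖du x‖ₑ ^ n) ^ (1 / (n : ℝ)) *
          volume (closedBall x₀ R ∩ {x | a < u x}) ^ (((n : ℝ) - 1) / n)) := by
  obtain ⟨C, hC, H⟩ := IsWeakGradOn.exists_mul_measure_rpow_le hn
  refine ⟨C, hC, fun u du x₀ R a b hum hu hdu hab ha hb => ?_⟩
  set B := closedBall x₀ R with hBdef
  have hBm : MeasurableSet B := isClosed_closedBall.measurableSet
  have hBf : volume B ≠ ⊤ := measure_closedBall_lt_top.ne
  have hlev : ∀ t, MeasurableSet (B ∩ {x | t < u x}) := fun t =>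
    hBm.inter (measurableSet_lt measurable_const hum)
  have hi : ∀ t, Integrable (B.indicator fun x => max (u x - t) 0) := fun t =>
    (integrable_indicator_iff hBm).2 (Integrable.pos_part (hu.sub (integrableOn_const hBf)))
  have hdi : ∀ t, Integrable ((B ∩ {x | t < u x}).indicator du) := fun t =>
    (integrable_indicator_iff (hlev t)).2 (hdu.mono_set inter_subset_left)
  have hsub : B ∩ {x | b < u x} ⊆ B ∩ {x | a < u x} := fun x hx => ⟨hx.1, hab.trans_lt hx.2⟩
  have key := H _ _ (IsWeakGradOn.sub ha hb (hi a).integrableOn (hi b).integrableOn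
    (hdi a).integrableOn (hdi b).integrableOn) ((hi a).sub (hi b)) ((hdi a).sub (hdi b)) ?_
    (ENNReal.ofReal (b - a)) (B ∩ {x | b < u x}) ?_
  · refine key.trans ?_
    gcongr
    have e : (∫⁻ x, ‖(B ∩ {x | a < u x}).indicator du x - (B ∩ {x | b < u x}).indicator du x‖ₑ)
        = ∫⁻ x in (B ∩ {x | a < u x}) \ (B ∩ {x | b < u x}), ‖du x‖ₑ := by
      rw [← lintegral_indicator ((hlev a).diff (hlev b))]
      refine lintegral_congr fun x => ?_
      rw [← Pi.sub_apply, ← indicator_sdiff hsub, enorm_indicator_eq_indicator_enorm]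
    rw [e]
    refine (lintegral_le_rpow_mul_measure_rpow _ ?_ (by omega : 1 ≤ n)).trans ?_
    · exact (Integrable.mono_measure hdu (Measure.restrict_mono
        (sdiff_subset.trans inter_subset_left) le_rfl)).aestronglyMeasurable.enorm
    · have hn0 : (n : ℝ) ≠ 0 := by positivity
      rw [Measure.restrict_apply_univ, sub_div, div_self hn0]
      gcongr
      · have : (1 : ℝ) / n ≤ 1 := by
          rw [div_le_one (by positivity)]
          exact_mod_cast (by omega : 1 ≤ n)
        linarith
      · exact sdiff_subset
  · refine HasCompactSupport.intro (isCompact_closedBall x₀ R) fun x hx => ?_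
    simp [indicator_of_notMem (show x ∉ B from hx)]
  · intro x hx
    rw [indicator_of_mem hx.1, indicator_of_mem hx.1, max_eq_left (by linarith [hx.2.out]),
      max_eq_left (by linarith [hx.2.out]), Real.enorm_eq_ofReal_abs]
    refine ENNReal.ofReal_le_ofReal ((le_of_eq ?_).trans (le_abs_self _))
    ring

lemma le_half_pow_mul_of_slice_decay {n : ℕ} {θ e : ℝ → ℝ} {C a E : ℝ} {N : ℕ}
    (hN : 0 < N) (hC : 0 < C) (hE : 0 < E) (hθ : ∀ t, 0 ≤ θ t) (he : ∀ t, 0 ≤ e t)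
    (hanti : AntitoneOn e (Ici a)) (hea : e a ≤ E)
    (h : ∀ s t, a ≤ s → s ≤ t → (t - s) * θ t ≤ C * ((e s - e t) ^ (1 / (n : ℝ)) * θ s)) :
    θ (a + N * (2 * C * (E / N) ^ (1 / (n : ℝ)))) ≤ (1 / 2) ^ N * θ a := by
  have hN' : (0 : ℝ) < N := by exact_mod_cast hN
  set ρ := (E / N) ^ (1 / (n : ℝ)) with hρ
  have hρ0 : 0 < ρ := Real.rpow_pos_of_pos (div_pos hE hN') _
  set τ := 2 * C * ρ with hτ
  have hτ0 : 0 < τ := by positivity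
  set s : ℕ → ℝ := fun j => a + j * τ with hs
  have hsa : ∀ j, a ≤ s j := fun j => le_add_of_nonneg_right (by positivity)
  have hs1 : ∀ j, s (j + 1) - s j = τ := fun j => by simp only [hs]; push_cast; ring
  have hd : ∀ j, 0 ≤ e (s j) - e (s (j + 1)) := fun j =>
    sub_nonneg.2 (hanti (hsa j) (hsa (j + 1)) (by linarith [hs1 j]))
  have hprod : ∀ k, τ ^ k * θ (s k) ≤
      C ^ k * ((∏ j ∈ Finset.range k, (e (s j) - e (s (j + 1))) ^ (1 / (n : ℝ))) * θ a) := by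
    intro k
    induction k with
    | zero => simp [hs]
    | succ k ih =>
      have h1 := h (s k) (s (k + 1)) (hsa k) (by linarith [hs1 k])
      rw [hs1] at h1
      rw [Finset.prod_range_succ]
      calc τ ^ (k + 1) * θ (s (k + 1)) = τ ^ k * (τ * θ (s (k + 1))) := by ring
        _ ≤ τ ^ k * (C * ((e (s k) - e (s (k + 1))) ^ (1 / (n : ℝ)) * θ (s k))) := by gcongr
        _ = C * (e (s k) - e (s (k + 1))) ^ (1 / (n : ℝ)) * (τ ^ k * θ (s k)) := by ring
        _ ≤ C * (e (s k) - e (s (k + 1))) ^ (1 / (n : ℝ)) * _ :=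
          mul_le_mul_of_nonneg_left ih (mul_nonneg hC.le (Real.rpow_nonneg (hd k) _))
        _ = _ := by ring
  have hamgm : ∏ j ∈ Finset.range N, (e (s j) - e (s (j + 1))) ≤ (E / N) ^ N := by
    have h1 := Real.geom_mean_le_arith_mean_weighted (Finset.range N) (fun _ => (1 : ℝ) / N)
      (fun j => e (s j) - e (s (j + 1))) (fun _ _ => by positivity)
      (by simp [hN'.ne']) (fun j _ => hd j)
    rw [← Finset.mul_sum, Finset.sum_range_sub', Real.finsetProd_rpow _ _ fun j _ => hd j] at h1
    have h2 : (∏ j ∈ Finset.range N, (e (s j) - e (s (j + 1)))) ^ ((1 : ℝ) / N) ≤ E / N := by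
      refine h1.trans ?_
      rw [one_div_mul_eq_div]
      have : e (s 0) - e (s N) ≤ E := by
        have : s 0 = a := by simp [hs]
        rw [this]
        linarith [he (s N)]
      gcongr
    have h3 := pow_le_pow_left₀ (by
      exact Real.rpow_nonneg (Finset.prod_nonneg fun j _ => hd j) _) h2 N
    rwa [← Real.rpow_natCast, ← Real.rpow_mul (Finset.prod_nonneg fun j _ => hd j),
      one_div_mul_cancel hN'.ne', Real.rpow_one] at h3
  have hfin := hprod N
  rw [Real.finsetProd_rpow _ _ fun j _ => hd j] at hfin
  have h4 : (∏ j ∈ Finset.range N, (e (s j) - e (s (j + 1)))) ^ (1 / (n : ℝ)) ≤ ρ ^ N := by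
    refine (Real.rpow_le_rpow (Finset.prod_nonneg fun j _ => hd j) hamgm (by positivity)).trans ?_
    rw [hρ, ← Real.rpow_natCast, ← Real.rpow_mul (by positivity), ← Real.rpow_natCast,
      ← Real.rpow_mul (by positivity), mul_comm]
  have h5 : τ ^ N * θ (s N) ≤ τ ^ N * ((1 / 2) ^ N * θ a) := by
    refine hfin.trans ((mul_le_mul_of_nonneg_left (mul_le_mul_of_nonneg_right h4 (hθ a))
      (by positivity)).trans (le_of_eq ?_))
    rw [hτ, mul_pow, mul_pow, one_div, inv_pow]
    field_simp
  exact le_of_mul_le_mul_left h5 (by positivity)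

/-- Vanishing of a nonincreasing function whose decay on slices is controlled by an energy. -/
lemma exists_eq_zero_of_slice_decay {n : ℕ} (hn : 2 ≤ n) {m e : ℝ → ℝ} {C K M₀ : ℝ}
    (hC : 0 < C) (hK : 0 < K) (hm : ∀ t, 0 ≤ m t) (hmanti : Antitone m) (he : ∀ t, 0 ≤ e t)
    (heanti : Antitone e)
    (hslice : ∀ s t, M₀ < s → s ≤ t → (t - s) * m t ^ (((n : ℝ) - 1) / n) ≤
      C * ((e s - e t) ^ (1 / (n : ℝ)) * m s ^ (((n : ℝ) - 1) / n)))
    {T : ℕ → ℝ} (hT : ∀ N, 0 < T N)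
    (henergy : ∀ t N, M₀ < t → m t ≤ (1 / 2) ^ N → e t ≤ K * T N ^ n)
    (hsum : Summable fun k : ℕ => ((2 : ℝ) ^ (((n : ℝ) - 1) / n)) ^ k * T (2 ^ k))
    (hstart : ∃ a, M₀ < a ∧ m a ≤ 1 / 2) : ∃ M, m M = 0 := by
  have hn' : (2 : ℝ) ≤ n := by exact_mod_cast hn
  set γ := ((n : ℝ) - 1) / n with hγ
  have hγ0 : 0 < γ := div_pos (by linarith) (by linarith)
  have hγ1 : γ = 1 - 1 / n := by rw [hγ]; field_simp
  have hγle : γ ≤ 1 := by rw [hγ1]; linarith [show (0 : ℝ) ≤ 1 / n by positivity]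
  obtain ⟨a₀, ha₀, hma₀⟩ := hstart
  set δ : ℕ → ℝ := fun k => 2 * C * K ^ (1 / (n : ℝ)) * ((2 ^ γ) ^ k * T (2 ^ k)) with hδ
  have hδ0 : ∀ k, 0 ≤ δ k := fun k => by have := hT (2 ^ k); positivity
  have hδs : Summable δ := hsum.mul_left _
  set a : ℕ → ℝ := fun k => a₀ + ∑ j ∈ Finset.range k, δ j with ha
  have haM : ∀ k, M₀ < a k := fun k =>
    ha₀.trans_le (le_add_of_nonneg_right (Finset.sum_nonneg fun j _ => hδ0 j))
  have hstep : ∀ k, m (a k) ≤ (1 / 2) ^ (2 ^ k) := by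
    intro k
    induction k with
    | zero => simpa [ha] using hma₀
    | succ k ih =>
      have hN : 0 < 2 ^ k := by positivity
      have hE : 0 < K * T (2 ^ k) ^ n := mul_pos hK (pow_pos (hT _) _)
      have h1 := le_half_pow_mul_of_slice_decay (n := n) (θ := fun t => m t ^ γ) (e := e) hN hC hE
        (fun t => Real.rpow_nonneg (hm t) _) he (heanti.antitoneOn _)
        (henergy _ _ (haM k) ih) (fun s t hs hst => hslice s t ((haM k).trans_le hs) hst)
      have h2 : ((2 ^ k : ℕ) : ℝ) *
          (2 * C * (K * T (2 ^ k) ^ n / ((2 ^ k : ℕ) : ℝ)) ^ (1 / (n : ℝ))) = δ k := by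
        have hn0 : n ≠ 0 := by omega
        have e1 : ((T (2 ^ k)) ^ n) ^ (1 / (n : ℝ)) = T (2 ^ k) := by
          rw [one_div, Real.pow_rpow_inv_natCast (hT _).le hn0]
        have e2 : ((2 : ℝ) ^ γ) ^ k = (2 ^ k) / ((2 : ℝ) ^ k) ^ (1 / (n : ℝ)) := by
          rw [← Real.rpow_natCast, ← Real.rpow_mul (by norm_num), mul_comm,
            Real.rpow_mul (by norm_num), Real.rpow_natCast, hγ1,
            Real.rpow_sub (by positivity), Real.rpow_one]
        push_cast
        rw [Real.div_rpow hE.le (by positivity), Real.mul_rpow hK.le (pow_nonneg (hT _).le _), e1]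
        simp only [hδ]
        rw [e2]
        ring
      have h3 : a k + δ k = a (k + 1) := by
        simp only [ha, Finset.sum_range_succ]
        ring
      rw [h2, h3] at h1
      have h4 : m (a (k + 1)) ^ γ ≤ ((1 / 2) ^ (2 ^ k) * m (a k)) ^ γ := by
        refine h1.trans ?_
        rw [Real.mul_rpow (by positivity) (hm _)]
        refine mul_le_mul_of_nonneg_right ?_ (Real.rpow_nonneg (hm _) _)
        have h5 : ((1 : ℝ) / 2) ^ (2 ^ k) ≤ 1 := pow_le_one₀ (by norm_num) (by norm_num)
        exact Real.self_le_rpow_of_le_one (by positivity) h5 hγle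
      have h6 := (Real.rpow_le_rpow_iff (hm _) (mul_nonneg (by positivity) (hm _)) hγ0).1 h4
      refine h6.trans ?_
      rw [pow_succ 2 k, mul_two, pow_add]
      gcongr
  refine ⟨a₀ + ∑' k, δ k, le_antisymm ?_ (hm _)⟩
  have hlim : Tendsto (fun k : ℕ => ((1 : ℝ) / 2) ^ (2 ^ k)) atTop (𝓝 0) :=
    (tendsto_pow_atTop_nhds_zero_of_lt_one (by norm_num) (by norm_num)).comp
      (tendsto_pow_atTop_atTop_of_one_lt (by norm_num))
  refine ge_of_tendsto' hlim fun k => (hmanti ?_).trans (hstep k)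
  exact add_le_add_right (hδs.sum_le_tsum _ fun j _ => hδ0 j) _

lemma tsum_pow_mul_tsum_ite_le {γ : ℝ} (hγ : 0 < γ) (α : ℕ → ℝ≥0∞) :
    ∑' k : ℕ, ENNReal.ofReal (((2 : ℝ) ^ γ) ^ k) * ∑' i, (if 2 ^ k ≤ i then α i else 0) ≤
      ENNReal.ofReal ((2 : ℝ) ^ γ / ((2 : ℝ) ^ γ - 1)) *
        ∑' i : ℕ, ENNReal.ofReal ((1 + (i : ℝ)) ^ γ) * α i := by
  set r := (2 : ℝ) ^ γ with hr
  have hr1 : 1 < r := Real.one_lt_rpow (by norm_num) hγ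
  have hc : 0 < r / (r - 1) := div_pos (by linarith) (by linarith)
  simp_rw [← ENNReal.tsum_mul_left]
  rw [ENNReal.tsum_comm]
  refine ENNReal.tsum_le_tsum fun i => ?_
  have e : ∀ k : ℕ, ENNReal.ofReal (r ^ k) * (if 2 ^ k ≤ i then α i else 0) =
      (if 2 ^ k ≤ i then ENNReal.ofReal (r ^ k) else 0) * α i := fun k => by
    split_ifs <;> simp
  simp_rw [e]
  rw [ENNReal.tsum_mul_right, ← mul_assoc]
  gcongr
  rcases Nat.eq_zero_or_pos i with rfl | hi
  · simp
  rw [tsum_eq_sum (s := Finset.range (Nat.log 2 i + 1)) fun k hk => if_neg fun h => hk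
    (Finset.mem_range.2 (Nat.lt_succ_of_le (Nat.le_log_of_pow_le (by norm_num) h)))]
  calc ∑ k ∈ Finset.range (Nat.log 2 i + 1), (if 2 ^ k ≤ i then ENNReal.ofReal (r ^ k) else 0)
      ≤ ∑ k ∈ Finset.range (Nat.log 2 i + 1), ENNReal.ofReal (r ^ k) :=
        Finset.sum_le_sum fun k _ => by split_ifs <;> simp
    _ = ENNReal.ofReal (∑ k ∈ Finset.range (Nat.log 2 i + 1), r ^ k) :=
        (ENNReal.ofReal_sum_of_nonneg fun k _ => by positivity).symm
    _ ≤ ENNReal.ofReal (r / (r - 1) * (1 + i) ^ γ) := by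
        refine ENNReal.ofReal_le_ofReal ?_
        rw [geom_sum_eq hr1.ne', div_mul_eq_mul_div]
        have h1 : r ^ Nat.log 2 i ≤ (1 + (i : ℝ)) ^ γ := by
          rw [hr, ← Real.rpow_natCast, ← Real.rpow_mul (by norm_num), mul_comm,
            Real.rpow_mul (by norm_num), Real.rpow_natCast]
          refine Real.rpow_le_rpow (by positivity) ?_ hγ.le
          have : ((2 ^ Nat.log 2 i : ℕ) : ℝ) ≤ i := by
            exact_mod_cast Nat.pow_log_le_self 2 hi.ne'
          push_cast at this
          linarith
        have h2 : r ^ (Nat.log 2 i + 1) - 1 ≤ r * (1 + (i : ℝ)) ^ γ := by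
          rw [pow_succ']
          have := mul_le_mul_of_nonneg_left h1 (by linarith : 0 ≤ r)
          linarith
        exact div_le_div_of_nonneg_right h2 (by linarith)
    _ = _ := ENNReal.ofReal_mul hc.le

lemma ENNReal.tsum_pow_le_pow_tsum {ι : Type*} (α : ι → ℝ≥0∞) {n : ℕ} (hn : 1 ≤ n) :
    ∑' i, α i ^ n ≤ (∑' i, α i) ^ n := by
  obtain ⟨m, rfl⟩ := Nat.exists_eq_add_of_le' hn
  simp_rw [pow_succ]
  calc ∑' i, α i ^ m * α i ≤ ∑' i, (∑' i, α i) ^ m * α i := by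
        refine ENNReal.tsum_le_tsum fun i => ?_
        gcongr
        exact ENNReal.le_tsum i
    _ = _ := ENNReal.tsum_mul_left

/-- The integral of `|H|ⁿ` over a small set is controlled by the sizes of the superlevel sets. -/
lemma lintegral_enorm_pow_le_of_measure_superlevel_le {X : Type*} [MeasurableSpace X]
    {ν : Measure X} {n : ℕ} (hn : 1 ≤ n) {H : X → ℝ} {σ : ℕ → ℝ}
    (hσ : ∀ i, ν {x | σ i < |H x|} ≤ ENNReal.ofReal ((1 / 2) ^ i))
    {A : Set X} {N : ℕ} (hA : ν A ≤ ENNReal.ofReal ((1 / 2) ^ N)) :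
    ∫⁻ x in A, ‖H x‖ₑ ^ n ∂ν ≤
      3 * (∑' i, if N ≤ i then ENNReal.ofReal (((1 / 2) ^ i) ^ (1 / (n : ℝ)) * σ i) else 0) ^ n := by
  have hn0 : n ≠ 0 := by omega
  set α : ℕ → ℝ≥0∞ := fun i =>
    if N ≤ i then ENNReal.ofReal (((1 / 2) ^ i) ^ (1 / (n : ℝ)) * σ i) else 0 with hα
  have hαn : ∀ i, N ≤ i → α i ^ n = ENNReal.ofReal (σ i) ^ n * ENNReal.ofReal ((1 / 2) ^ i) := by
    intro i hi
    simp only [hα, if_pos hi]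
    rw [ENNReal.ofReal_mul (by positivity), mul_pow, mul_comm,
      ← ENNReal.ofReal_pow (p := ((1 / 2) ^ i) ^ (1 / (n : ℝ))) (by positivity), one_div (n : ℝ),
      Real.rpow_inv_natCast_pow (by positivity) hn0]
  have hbd : ∀ (S : Set X) (c : ℝ), (∀ x ∈ S, |H x| ≤ c) →
      ∫⁻ x in S, ‖H x‖ₑ ^ n ∂ν ≤ ENNReal.ofReal c ^ n * ν S := by
    intro S c hS
    rw [← setLIntegral_const]
    refine setLIntegral_mono measurable_const fun x hx => ?_
    rw [Real.enorm_eq_ofReal_abs]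
    gcongr
    exact hS x hx
  set S : ℕ → Set X := fun i => {x | N ≤ i ∧ σ i < |H x| ∧ |H x| ≤ σ (i + 1)} with hS
  set Z : Set X := {x | ∀ i, N ≤ i → σ i < |H x|} with hZ
  have hcov : A ⊆ ((A ∩ {x | |H x| ≤ σ N}) ∪ ⋃ i, S i) ∪ Z := by
    intro x hxA
    by_contra hx
    simp only [mem_union, mem_iUnion, not_or, not_exists] at hx
    obtain ⟨⟨h1, h2⟩, h3⟩ := hx
    refine h3 fun i hi => ?_
    induction i, hi using Nat.le_induction with
    | base => exact not_le.1 fun h => h1 ⟨hxA, h⟩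
    | succ i hi ih => exact not_le.1 fun h => h2 i ⟨hi, ih, h⟩
  have hZ0 : ν Z = 0 := by
    have hlim : Tendsto (fun i : ℕ => ENNReal.ofReal ((1 / 2) ^ i)) atTop (𝓝 0) := by
      have := (ENNReal.continuous_ofReal.tendsto _).comp
        (tendsto_pow_atTop_nhds_zero_of_lt_one (by norm_num : (0 : ℝ) ≤ 1 / 2) (by norm_num))
      rwa [ENNReal.ofReal_zero] at this
    refine le_antisymm (ge_of_tendsto hlim ?_) zero_le
    filter_upwards [eventually_ge_atTop N] with i hi
    exact (measure_mono fun x (hx : x ∈ Z) => hx i hi).trans (hσ i)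
  have hSi : ∀ i, ∫⁻ x in S i, ‖H x‖ₑ ^ n ∂ν ≤ 2 * α (i + 1) ^ n := by
    intro i
    by_cases hi : N ≤ i
    · refine (hbd _ (σ (i + 1)) fun x hx => hx.2.2).trans ?_
      rw [hαn _ (hi.trans (Nat.le_succ i))]
      have h2 : (2 : ℝ≥0∞) * ENNReal.ofReal ((1 / 2) ^ (i + 1)) = ENNReal.ofReal ((1 / 2) ^ i) := by
        rw [show (2 : ℝ≥0∞) = ENNReal.ofReal 2 by simp, ← ENNReal.ofReal_mul (by norm_num)]
        congr 1
        ring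
      rw [mul_left_comm, h2]
      gcongr
      exact (measure_mono fun x hx => hx.2.1).trans (hσ i)
    · have : S i = ∅ := by
        ext x
        simp [hS, hi]
      simp [this]
  calc ∫⁻ x in A, ‖H x‖ₑ ^ n ∂ν
      ≤ ∫⁻ x in ((A ∩ {x | |H x| ≤ σ N}) ∪ ⋃ i, S i) ∪ Z, ‖H x‖ₑ ^ n ∂ν :=
        lintegral_mono_set hcov
    _ ≤ (∫⁻ x in A ∩ {x | |H x| ≤ σ N}, ‖H x‖ₑ ^ n ∂ν) + (∫⁻ x in ⋃ i, S i, ‖H x‖ₑ ^ n ∂ν)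
          + ∫⁻ x in Z, ‖H x‖ₑ ^ n ∂ν :=
        (lintegral_union_le _ _ _).trans (add_le_add_left (lintegral_union_le _ _ _) _)
    _ ≤ α N ^ n + (∑' i, 2 * α (i + 1) ^ n) + 0 := by
        gcongr
        · refine (hbd _ (σ N) fun x hx => hx.2).trans ?_
          rw [hαn N le_rfl]
          gcongr
          exact (measure_mono inter_subset_left).trans hA
        · exact (lintegral_iUnion_le _ _).trans (ENNReal.tsum_le_tsum hSi)
        · exact (setLIntegral_measure_zero _ _ hZ0).le
    _ ≤ (∑' i, α i ^ n) + 2 * ∑' i, α i ^ n := by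
        rw [add_zero, ENNReal.tsum_mul_left]
        refine add_le_add (ENNReal.le_tsum (f := fun i => α i ^ n) N) (mul_le_mul_right ?_ 2)
        exact ENNReal.tsum_comp_le_tsum_of_injective (add_left_injective 1) fun i => α i ^ n
    _ = 3 * ∑' i, α i ^ n := by ring
    _ ≤ 3 * (∑' i, α i) ^ n := by
        gcongr
        exact ENNReal.tsum_pow_le_pow_tsum α hn

lemma exists_measure_superlevel_le {X : Type*} [MeasurableSpace X]
    {ν : Measure X} {n : ℕ} (hn : 1 ≤ n) {H : X → ℝ} (hH : AEMeasurable H ν)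
    (hfin : ∫⁻ x, ‖H x‖ₑ ^ n ∂ν ≠ ⊤) {t : ℝ} (ht : 0 < t) :
    ∃ σ : ℝ, 0 < σ ∧ ν {x | σ < |H x|} ≤ ENNReal.ofReal t := by
  set I := ∫⁻ x, ‖H x‖ₑ ^ n ∂ν with hI
  have hσ : 0 < 1 + I.toReal / t := by positivity
  refine ⟨1 + I.toReal / t, hσ, ?_⟩
  set s := 1 + I.toReal / t with hs
  have h1 : ENNReal.ofReal s * ν {x | s < |H x|} ≤ I := by
    refine le_trans ?_ (mul_meas_ge_le_lintegral₀ (hH.enorm.pow_const n) (ENNReal.ofReal s))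
    gcongr
    intro hx
    have hs1 : 1 ≤ ENNReal.ofReal s := by
      rw [ENNReal.one_le_ofReal, hs]
      exact le_add_of_nonneg_right (by positivity)
    rw [Real.enorm_eq_ofReal_abs]
    refine (ENNReal.ofReal_le_ofReal hx.le).trans (le_self_pow₀ ?_ (by omega))
    exact hs1.trans (ENNReal.ofReal_le_ofReal hx.le)
  have h2 : I ≤ ENNReal.ofReal s * ENNReal.ofReal t := by
    rw [← ENNReal.ofReal_mul hσ.le, ← ENNReal.ofReal_toReal hfin]
    refine ENNReal.ofReal_le_ofReal ?_
    rw [hs, add_mul, div_mul_cancel₀ _ ht.ne']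
    linarith
  exact (ENNReal.mul_le_mul_iff_right (by simpa using hσ) ENNReal.ofReal_ne_top).1 (h1.trans h2)

lemma rearr_nonneg (n : ℕ) (h : EuclideanSpace ℝ (Fin n) → ℝ) (t : ℝ) : 0 ≤ rearr n h t :=
  Real.sInf_nonneg fun _ hσ => hσ.1.le

lemma rearr_anti {n : ℕ} {h : EuclideanSpace ℝ (Fin n) → ℝ} {s t : ℝ}
    (hs : ∃ σ : ℝ, 0 < σ ∧ volume {x | σ < |h x|} ≤ ENNReal.ofReal s) (hst : s ≤ t) :
    rearr n h t ≤ rearr n h s :=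
  csInf_le_csInf ⟨0, fun _ hσ => hσ.1.le⟩ hs fun _ hσ =>
    ⟨hσ.1, hσ.2.trans (ENNReal.ofReal_le_ofReal hst)⟩

lemma measure_superlevel_le_of_rearr_lt {n : ℕ} {h : EuclideanSpace ℝ (Fin n) → ℝ} {s t : ℝ}
    (hne : ∃ σ : ℝ, 0 < σ ∧ volume {x | σ < |h x|} ≤ ENNReal.ofReal t) (hs : rearr n h t < s) :
    volume {x | s < |h x|} ≤ ENNReal.ofReal t := by
  obtain ⟨σ, hσ, hσs⟩ := exists_lt_of_csInf_lt hne hs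
  exact (measure_mono fun x (hx : s < |h x|) => hσs.trans hx).trans hσ.2

/-- On a dyadic interval the Lorentz-Zygmund integral controls the corresponding term of the
dyadic series. -/
lemma ofReal_dyadic_le_setLIntegral {n : ℕ} (hn : 1 ≤ n) {γ : ℝ} (hγ0 : 0 ≤ γ) (hγ1 : γ ≤ 1)
    {H : EuclideanSpace ℝ (Fin n) → ℝ}
    (hne : ∀ t : ℝ, 0 < t → ∃ σ : ℝ, 0 < σ ∧ volume {x | σ < |H x|} ≤ ENNReal.ofReal t) (i : ℕ) :
    ENNReal.ofReal ((1 + (i : ℝ)) ^ γ * (((1 / 2) ^ i) ^ (1 / (n : ℝ)) * rearr n H ((1 / 2) ^ i)))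
      ≤ 8 * ∫⁻ t in Ioo (((1 : ℝ) / 2) ^ (i + 1)) ((1 / 2) ^ i),
        ENNReal.ofReal (t ^ (1 / (n : ℝ)) * (1 + |Real.log t|) ^ γ * rearr n H t / t) := by
  set s : ℝ := (1 / 2) ^ i with hs
  have hs0 : 0 < s := by positivity
  have hs2 : ((1 : ℝ) / 2) ^ (i + 1) = s / 2 := by rw [hs]; ring
  have hn1 : 1 / (n : ℝ) ≤ 1 := by
    rw [div_le_one (by positivity)]
    exact_mod_cast hn
  set c := (1 + (i : ℝ)) ^ γ * (s ^ (1 / (n : ℝ)) * rearr n H s) with hc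
  have hr0 : 0 ≤ rearr n H s := rearr_nonneg _ _ _
  have hc0 : 0 ≤ c := by positivity
  have hhalf : ∀ {x β : ℝ}, 0 ≤ x → 0 ≤ β → β ≤ 1 → x ^ β / 2 ≤ (x / 2) ^ β := by
    intro x β hx hβ0 hβ1
    rw [Real.div_rpow hx (by norm_num)]
    have : (2 : ℝ) ^ β ≤ 2 := Real.rpow_le_self_of_one_le (by norm_num) hβ1
    gcongr
  rw [hs2]
  have hbd : ∀ t ∈ Ioo (s / 2) s, ENNReal.ofReal (c / (4 * s)) ≤
      ENNReal.ofReal (t ^ (1 / (n : ℝ)) * (1 + |Real.log t|) ^ γ * rearr n H t / t) := by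
    intro t ht
    have ht0 : 0 < t := by linarith [ht.1]
    refine ENNReal.ofReal_le_ofReal ?_
    have h1 : s ^ (1 / (n : ℝ)) / 2 ≤ t ^ (1 / (n : ℝ)) :=
      (hhalf hs0.le (by positivity) hn1).trans
        (Real.rpow_le_rpow (by positivity) ht.1.le (by positivity))
    have h2 : (1 + (i : ℝ)) ^ γ / 2 ≤ (1 + |Real.log t|) ^ γ := by
      refine (hhalf (by positivity) hγ0 hγ1).trans (Real.rpow_le_rpow (by positivity) ?_ hγ0)
      have h3 : Real.log t ≤ -(i * Real.log 2) := by
        refine (Real.log_le_log ht0 ht.2.le).trans (le_of_eq ?_)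
        rw [hs, Real.log_pow, one_div, Real.log_inv]
        ring
      have h4 := Real.log_two_gt_d9
      have h5 : (i : ℝ) * (1 / 2) ≤ i * Real.log 2 := by gcongr; linarith
      linarith [neg_abs_le (Real.log t)]
    have h3 : rearr n H s ≤ rearr n H t := rearr_anti (hne t ht0) ht.2.le
    calc c / (4 * s)
        = (s ^ (1 / (n : ℝ)) / 2) * ((1 + (i : ℝ)) ^ γ / 2) * rearr n H s / s := by
          rw [hc]
          field_simp
          ring
      _ ≤ t ^ (1 / (n : ℝ)) * (1 + |Real.log t|) ^ γ * rearr n H t / t := by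
          refine div_le_div₀ (mul_nonneg (by positivity) (rearr_nonneg _ _ _)) ?_ ht0 ht.2.le
          gcongr
  calc ENNReal.ofReal c = 8 * (ENNReal.ofReal (c / (4 * s)) * volume (Ioo (s / 2) s)) := by
        rw [Real.volume_Ioo, ← ENNReal.ofReal_mul (by positivity),
          show (8 : ℝ≥0∞) = ENNReal.ofReal 8 by simp, ← ENNReal.ofReal_mul (by norm_num)]
        congr 1
        field_simp
        ring
    _ ≤ _ := by
        gcongr
        rw [← setLIntegral_const]
        exact setLIntegral_mono' measurableSet_Ioo hbd

lemma pairwise_disjoint_Ioo_half_pow :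
    Pairwise (Function.onFun Disjoint
      fun i : ℕ => Ioo (((1 : ℝ) / 2) ^ (i + 1)) ((1 / 2) ^ i)) := by
  have h : Antitone fun i : ℕ => ((1 : ℝ) / 2) ^ i := fun i j hij =>
    pow_le_pow_of_le_one (by norm_num) (by norm_num) hij
  simpa using h.pairwise_disjoint_on_Ioo_succ

lemma summable_one_add_rpow_mul_half_pow {n : ℕ} (hn : 1 ≤ n) {γ : ℝ} (hγ1 : γ ≤ 1) :
    Summable fun i : ℕ => (1 + (i : ℝ)) ^ γ * (((1 : ℝ) / 2) ^ i) ^ (1 / (n : ℝ)) := by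
  set r := ((1 : ℝ) / 2) ^ (1 / (n : ℝ)) with hr
  have hr0 : 0 < r := by positivity
  have hr1 : r < 1 := Real.rpow_lt_one (by norm_num) (by norm_num) (by positivity)
  have h1 : Summable fun i : ℕ => (1 + (i : ℝ)) * r ^ i := by
    have ha := summable_pow_mul_geometric_of_norm_lt_one (R := ℝ) 1 (r := r)
      (by rwa [Real.norm_of_nonneg hr0.le])
    have hb := summable_geometric_of_lt_one hr0.le hr1
    refine (hb.add ha).congr fun i => ?_
    ring
  refine h1.of_nonneg_of_le (fun i => by positivity) fun i => ?_
  have h2 : (((1 : ℝ) / 2) ^ i) ^ (1 / (n : ℝ)) = r ^ i := by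
    rw [hr, ← Real.rpow_natCast, ← Real.rpow_natCast, ← Real.rpow_mul (by norm_num),
      ← Real.rpow_mul (by norm_num), mul_comm]
  rw [h2]
  gcongr
  exact Real.rpow_le_self_of_one_le (by linarith [Nat.cast_nonneg (α := ℝ) i]) hγ1

/-- Levels whose superlevel sets have dyadically small measure and whose sizes are summable
against the Lorentz-Zygmund weight. -/
lemma exists_levels_of_lorentzZygmund_lt_top {n : ℕ} (hn : 1 ≤ n) {γ : ℝ} (hγ0 : 0 ≤ γ)
    (hγ1 : γ ≤ 1) {Ω : Set (EuclideanSpace ℝ (Fin n))} (hΩm : MeasurableSet Ω)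
    (hΩ0 : volume Ω ≠ 0) (hΩfin : volume Ω ≠ ⊤)
    {h : EuclideanSpace ℝ (Fin n) → ℝ} (hm : AEMeasurable h (volume.restrict Ω))
    (hfin : ∫⁻ x in Ω, ‖h x‖ₑ ^ n ≠ ⊤) (hlz : lorentzZygmund n γ Ω h < ⊤) :
    ∃ σ : ℕ → ℝ, (∀ i, 0 < σ i) ∧
      (∀ i, volume.restrict Ω {x | σ i < |h x|} ≤ ENNReal.ofReal ((1 / 2) ^ i)) ∧
      ∑' i : ℕ, ENNReal.ofReal ((1 + (i : ℝ)) ^ γ) *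
        ENNReal.ofReal (((1 / 2) ^ i) ^ (1 / (n : ℝ)) * σ i) ≠ ⊤ := by
  set H := Ω.indicator h with hH
  have hHm : AEMeasurable H volume := (aemeasurable_indicator_iff hΩm).2 hm
  have hHfin : ∫⁻ x, ‖H x‖ₑ ^ n ≠ ⊤ := by
    have : (fun x => ‖H x‖ₑ ^ n) = Ω.indicator fun x => ‖h x‖ₑ ^ n := by
      ext x
      by_cases hx : x ∈ Ω
      · simp [hH, hx]
      · simp [hH, hx, show n ≠ 0 by omega]
    rwa [this, lintegral_indicator hΩm]
  have hne : ∀ t : ℝ, 0 < t → ∃ σ : ℝ, 0 < σ ∧ volume {x | σ < |H x|} ≤ ENNReal.ofReal t :=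
    fun t ht => exists_measure_superlevel_le hn hHm hHfin ht
  refine ⟨fun i => rearr n H ((1 / 2) ^ i) + 1,
    fun i => add_pos_of_nonneg_of_pos (rearr_nonneg _ _ _) one_pos, fun i => ?_, ?_⟩
  · refine le_trans ?_ (measure_superlevel_le_of_rearr_lt (hne ((1 / 2) ^ i) (by positivity))
      (lt_add_one _))
    rw [Measure.restrict_apply' hΩm]
    refine measure_mono fun x hx => ?_
    have h1 : _ < |h x| := hx.1
    simpa [hH, hx.2] using h1
  set a : ℕ → ℝ := fun i => (1 + (i : ℝ)) ^ γ *
    (((1 / 2) ^ i) ^ (1 / (n : ℝ)) * rearr n H ((1 / 2) ^ i)) with ha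
  set b : ℕ → ℝ := fun i => (1 + (i : ℝ)) ^ γ * (((1 : ℝ) / 2) ^ i) ^ (1 / (n : ℝ)) with hb
  have ha0 : ∀ i, 0 ≤ a i := fun i => mul_nonneg (by positivity)
    (mul_nonneg (by positivity) (rearr_nonneg _ _ _))
  have hb0 : ∀ i, 0 ≤ b i := fun i => by positivity
  have hsplit : ∀ i : ℕ, ENNReal.ofReal ((1 + (i : ℝ)) ^ γ) *
      ENNReal.ofReal (((1 / 2) ^ i) ^ (1 / (n : ℝ)) * (rearr n H ((1 / 2) ^ i) + 1)) =
      ENNReal.ofReal (a i) + ENNReal.ofReal (b i) := by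
    intro i
    rw [← ENNReal.ofReal_mul (by positivity), ← ENNReal.ofReal_add (ha0 i) (hb0 i)]
    congr 1
    simp only [ha, hb]
    ring
  simp_rw [hsplit]
  rw [ENNReal.tsum_add]
  have hbs : ∑' i, ENNReal.ofReal (b i) ≠ ⊤ :=
    (summable_one_add_rpow_mul_half_pow hn hγ1).tsum_ofReal_ne_top
  have hV : 0 < (volume Ω).toReal := ENNReal.toReal_pos hΩ0 hΩfin
  obtain ⟨k, hk⟩ := exists_pow_lt_of_lt_one hV (by norm_num : (1 : ℝ) / 2 < 1)
  have hle : ∀ i, ENNReal.ofReal (a i) ≤ (if i < k then ENNReal.ofReal (a i) else 0) +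
      8 * ∫⁻ t in Ioo (((1 : ℝ) / 2) ^ (i + 1)) ((1 / 2) ^ i) ∩ Ioo 0 (volume Ω).toReal,
        ENNReal.ofReal (t ^ (1 / (n : ℝ)) * (1 + |Real.log t|) ^ γ * rearr n H t / t) := by
    intro i
    by_cases hi : i < k
    · simp [hi]
    · rw [if_neg hi, zero_add, inter_eq_left.2]
      · exact ofReal_dyadic_le_setLIntegral hn hγ0 hγ1 hne i
      · refine Ioo_subset_Ioo (by positivity) (le_trans ?_ hk.le)
        exact pow_le_pow_of_le_one (by norm_num) (by norm_num) (not_lt.1 hi)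
  refine ENNReal.add_ne_top.2 ⟨ne_top_of_le_ne_top ?_ (ENNReal.tsum_le_tsum hle), hbs⟩
  rw [ENNReal.tsum_add, ENNReal.tsum_mul_left, ← lintegral_iUnion
    (fun i => measurableSet_Ioo.inter measurableSet_Ioo) fun i j hij =>
      (pairwise_disjoint_Ioo_half_pow hij).mono inter_subset_left inter_subset_left]
  refine ENNReal.add_ne_top.2 ⟨?_, ENNReal.mul_ne_top (by simp) (ne_top_of_le_ne_top hlz.ne
    (lintegral_mono_set (iUnion_subset fun i => inter_subset_right)))⟩
  rw [tsum_eq_sum (s := Finset.range k) fun i hi => if_neg fun h => hi (Finset.mem_range.2 h)]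
  exact ENNReal.sum_ne_top.2 fun i _ => by split_ifs <;> simp

/-- Local upper bound for a quasi-minimizer on a ball. -/
lemma IsQMinimizer.exists_ae_le_closedBall {n : ℕ} (hn : 2 ≤ n)
    {Ω : Set (EuclideanSpace ℝ (Fin n))}
    {f : EuclideanSpace ℝ (Fin n) → EuclideanSpace ℝ (Fin n) → ℝ} {Q : ℝ}
    {u : EuclideanSpace ℝ (Fin n) → ℝ}
    {du : EuclideanSpace ℝ (Fin n) → EuclideanSpace ℝ (Fin n)} (hQ : 1 ≤ Q)
    (hmin : IsQMinimizer n Ω f Q u du) (hum : Measurable u)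
    {G : EuclideanSpace ℝ (Fin n) → ℝ} (hG : IntegrableOn G Ω)
    (hf0m : AEStronglyMeasurable (fun x => f x 0) (volume.restrict Ω))
    (hf0 : ∀ᵐ x ∂volume.restrict Ω, |f x 0| ≤ G x)
    (hlow : ∀ᵐ x ∂volume.restrict Ω, ‖du x‖ ^ n - G x ≤ f x (du x))
    {h : EuclideanSpace ℝ (Fin n) → ℝ}
    (hGh : ∀ᵐ x ∂volume.restrict Ω, ENNReal.ofReal (G x) ≤ ‖h x‖ₑ ^ n)
    {σ : ℕ → ℝ} (hσ0 : ∀ i, 0 < σ i)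
    (hσ : ∀ i, volume.restrict Ω {x | σ i < |h x|} ≤ ENNReal.ofReal ((1 / 2) ^ i))
    (hσs : ∑' i : ℕ, ENNReal.ofReal ((1 + (i : ℝ)) ^ (((n : ℝ) - 1) / n)) *
        ENNReal.ofReal (((1 / 2) ^ i) ^ (1 / (n : ℝ)) * σ i) ≠ ⊤)
    {x₀ : EuclideanSpace ℝ (Fin n)} {a : ℝ} (ha : 0 < a) (hΩ : closedBall x₀ (4 * a) ⊆ Ω) :
    ∃ M, ∀ᵐ x ∂volume.restrict (closedBall x₀ a), u x ≤ M := by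
  have hn1 : 1 ≤ n := by omega
  have hn' : (2 : ℝ) ≤ n := by exact_mod_cast hn
  have hK := isCompact_closedBall x₀ (4 * a)
  have hu4 := hmin.2.1.integrableOn_compact_subset hΩ hK
  have hdu4 := hmin.2.2.1.integrableOn_compact_subset hΩ hK
  have hdup4 := hmin.memLp_of_isCompact hn1 hG hlow hK hΩ
  obtain ⟨r, hr, M₀, hBM⟩ := hmin.1.exists_ball_hasWeakGradPosPart_of_large hn1 hum ha hΩ hu4 hdu4
    hdup4
  have hr0 : 0 < r := ha.trans hr.1
  set B := closedBall x₀ r with hB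
  have hB4 : B ⊆ closedBall x₀ (4 * a) := closedBall_subset_closedBall (by linarith [hr.2])
  have hu := hu4.mono_set hB4
  have hdu := hdu4.mono_set hB4
  have hdup := hdup4.mono_measure (Measure.restrict_mono hB4 le_rfl)
  have hBf : volume B ≠ ⊤ := measure_closedBall_lt_top.ne
  set A : ℝ → Set (EuclideanSpace ℝ (Fin n)) := fun t => B ∩ {x | t < u x} with hA
  have hAm : ∀ t, MeasurableSet (A t) := fun t =>
    isClosed_closedBall.measurableSet.inter (measurableSet_lt measurable_const hum)
  have hAB : ∀ t, A t ⊆ B := fun t => inter_subset_left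
  have hAΩ : ∀ t, A t ⊆ Ω := fun t => ((hAB t).trans hB4).trans hΩ
  have hAanti : Antitone A := fun s t hst x hx => ⟨hx.1, hst.trans_lt hx.2⟩
  have hAf : ∀ t, volume (A t) ≠ ⊤ := fun t => measure_ne_top_of_subset (hAB t) hBf
  have hfin : ∀ S ⊆ B, ∫⁻ x in S, ‖du x‖ₑ ^ n ≠ ⊤ := by
    intro S hS
    have h1 := lintegral_rpow_enorm_lt_top_of_eLpNorm_lt_top
      (p := (n : ℝ≥0∞)) (by positivity) (by simp) hdup.2
    simp only [ENNReal.toReal_natCast, ENNReal.rpow_natCast] at h1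
    exact ne_top_of_le_ne_top h1.ne (lintegral_mono_set hS)
  set γ := ((n : ℝ) - 1) / n with hγ
  have hγ0 : 0 < γ := div_pos (by linarith) (by linarith)
  set α : ℕ → ℝ≥0∞ := fun i => ENNReal.ofReal (((1 / 2) ^ i) ^ (1 / (n : ℝ)) * σ i) with hα
  have hαs : ∑' i, α i ≠ ⊤ := by
    refine ne_top_of_le_ne_top hσs (ENNReal.tsum_le_tsum fun i => ?_)
    refine le_mul_of_one_le_left zero_le (ENNReal.one_le_ofReal.2 ?_)
    exact Real.one_le_rpow (by linarith [Nat.cast_nonneg (α := ℝ) i]) hγ0.le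
  set S : ℕ → ℝ≥0∞ := fun N => ∑' i, if N ≤ i then α i else 0 with hS
  have hSf : ∀ N, S N ≠ ⊤ := fun N => ne_top_of_le_ne_top hαs
    (ENNReal.tsum_le_tsum fun i => by split_ifs <;> simp)
  have hS0 : ∀ N, 0 < (S N).toReal := by
    intro N
    refine ENNReal.toReal_pos (ne_of_gt (lt_of_lt_of_le ?_
      (ENNReal.le_tsum (f := fun i => if N ≤ i then α i else 0) N))) (hSf N)
    have := hσ0 N
    simp only [le_refl, if_true, hα]
    exact ENNReal.ofReal_pos.2 (by positivity)
  obtain ⟨C, hC, Hslice⟩ := HasWeakGradPosPart.exists_measure_superlevel_le hn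
  obtain ⟨M, hM⟩ : ∃ M, (volume (A M)).toReal = 0 := by
    refine exists_eq_zero_of_slice_decay hn (m := fun t => (volume (A t)).toReal)
      (e := fun t => (∫⁻ x in A t, ‖du x‖ₑ ^ n).toReal) (C := C) (K := (Q + 1) * 3) (M₀ := M₀)
      (T := fun N => (S N).toReal) hC (by positivity) (fun _ => ENNReal.toReal_nonneg)
      (fun s t hst => ENNReal.toReal_mono (hAf s) (measure_mono (hAanti hst)))
      (fun _ => ENNReal.toReal_nonneg)
      (fun s t hst => ENNReal.toReal_mono (hfin _ (hAB s)) (lintegral_mono_set (hAanti hst)))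
      ?_ hS0 ?_ ?_ ?_
    · intro s t hs hst
      have h1 := Hslice u du x₀ r s t hum hu hdu hst (hBM s hs) (hBM t (hs.trans_le hst))
      have hd : (∫⁻ x in A s, ‖du x‖ₑ ^ n).toReal - (∫⁻ x in A t, ‖du x‖ₑ ^ n).toReal =
          (∫⁻ x in A s \ A t, ‖du x‖ₑ ^ n).toReal := by
        have h2 := lintegral_union (μ := volume) (f := fun x => ‖du x‖ₑ ^ n)
          ((hAm s).diff (hAm t)) (disjoint_sdiff_right (s := A t) (t := A s))
        rw [union_sdiff_cancel (hAanti hst)] at h2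
        rw [h2, ENNReal.toReal_add (hfin _ (hAB t)) (hfin _ (sdiff_subset.trans (hAB s)))]
        ring
      have h3 := ENNReal.toReal_mono (ENNReal.mul_ne_top ENNReal.ofReal_ne_top
        (ENNReal.mul_ne_top (ENNReal.rpow_ne_top_of_nonneg (by positivity)
          (hfin _ (sdiff_subset.trans (hAB s)))) (ENNReal.rpow_ne_top_of_nonneg hγ0.le (hAf s)))) h1
      rw [ENNReal.toReal_mul, ENNReal.toReal_mul, ENNReal.toReal_mul, ENNReal.toReal_ofReal hC.le,
        ENNReal.toReal_ofReal (by linarith), ← ENNReal.toReal_rpow, ← ENNReal.toReal_rpow,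
        ← ENNReal.toReal_rpow] at h3
      simp only [hd]
      exact h3
    · intro t N ht hmt
      have hAN : volume.restrict Ω (A t) ≤ ENNReal.ofReal ((1 / 2) ^ N) := by
        refine (Measure.restrict_apply_le _ _).trans ?_
        rw [← ENNReal.ofReal_toReal (hAf t)]
        exact ENNReal.ofReal_le_ofReal hmt
      have h1 : ∫⁻ x in A t, ENNReal.ofReal (G x) ≤ 3 * S N ^ n := by
        refine le_trans ?_ (lintegral_enorm_pow_le_of_measure_superlevel_le hn1 hσ hAN)
        rw [Measure.restrict_restrict (hAm t), inter_eq_left.2 (hAΩ t)]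
        exact lintegral_mono_ae (ae_mono (Measure.restrict_mono (hAΩ t) le_rfl) hGh)
      have h2 := (hmin.lintegral_superlevel_le hn1 hQ hum hG hf0m hf0 hlow hr0 (hB4.trans hΩ) hu hdu
        hdup hBM ht.le).trans (mul_le_mul_right h1 _)
      have h3 := ENNReal.toReal_mono (ENNReal.mul_ne_top ENNReal.ofReal_ne_top
        (ENNReal.mul_ne_top (by simp) (ENNReal.pow_ne_top (hSf N)))) h2
      rw [ENNReal.toReal_mul, ENNReal.toReal_mul, ENNReal.toReal_pow,
        ENNReal.toReal_ofReal (by linarith), ← mul_assoc] at h3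
      simpa using h3
    · have h1 := ne_top_of_le_ne_top (ENNReal.mul_ne_top ENNReal.ofReal_ne_top hσs)
        (tsum_pow_mul_tsum_ite_le hγ0 α)
      refine (ENNReal.summable_toReal h1).congr fun k => ?_
      rw [ENNReal.toReal_mul, ENNReal.toReal_ofReal (by positivity)]
    · have hlim : Tendsto (fun k : ℕ => volume (A k)) atTop (𝓝 0) := by
        have h1 := tendsto_measure_iInter_atTop (μ := volume) (s := fun k : ℕ => A k)
          (fun k => (hAm k).nullMeasurableSet) (fun i j hij => hAanti (by exact_mod_cast hij))
          ⟨0, hAf _⟩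
        have h2 : ⋂ k : ℕ, A k = ∅ := by
          refine eq_empty_of_forall_notMem fun x hx => ?_
          obtain ⟨k, hk⟩ := exists_nat_gt (u x)
          exact (mem_iInter.1 hx k).2.out.not_gt hk
        rwa [h2, measure_empty] at h1
      have hlt : ∀ᶠ k : ℕ in atTop, volume (A k) < ENNReal.ofReal (1 / 2) :=
        hlim.eventually_lt_const (by simp)
      obtain ⟨k, hk, hkM⟩ := (hlt.and
        (tendsto_natCast_atTop_atTop.eventually_gt_atTop M₀)).exists
      refine ⟨k, hkM, ?_⟩
      have h3 := ENNReal.toReal_mono ENNReal.ofReal_ne_top hk.le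
      rwa [ENNReal.toReal_ofReal (by norm_num)] at h3
  refine ⟨M, ?_⟩
  rw [ae_restrict_iff' isClosed_closedBall.measurableSet, ae_iff]
  refine measure_mono_null (fun x hx => ?_)
    (((ENNReal.toReal_eq_zero_iff _).1 hM).resolve_right (hAf M))
  simp only [Classical.not_imp, not_le, Set.mem_ofPred_eq] at hx
  exact ⟨closedBall_subset_closedBall hr.1.le hx.1, hx.2⟩

/-- Local upper bound for a quasi-minimizer on compact sets. -/
lemma IsQMinimizer.exists_ae_le_of_isCompact {n : ℕ} (hn : 2 ≤ n)
    {Ω : Set (EuclideanSpace ℝ (Fin n))} (hΩo : IsOpen Ω)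
    {f : EuclideanSpace ℝ (Fin n) → EuclideanSpace ℝ (Fin n) → ℝ} {Q : ℝ}
    {u : EuclideanSpace ℝ (Fin n) → ℝ}
    {du : EuclideanSpace ℝ (Fin n) → EuclideanSpace ℝ (Fin n)} (hQ : 1 ≤ Q)
    (hmin : IsQMinimizer n Ω f Q u du)
    {G : EuclideanSpace ℝ (Fin n) → ℝ} (hG : IntegrableOn G Ω)
    (hf0m : AEStronglyMeasurable (fun x => f x 0) (volume.restrict Ω))
    (hf0 : ∀ᵐ x ∂volume.restrict Ω, |f x 0| ≤ G x)
    (hlow : ∀ᵐ x ∂volume.restrict Ω, ‖du x‖ ^ n - G x ≤ f x (du x))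
    {h : EuclideanSpace ℝ (Fin n) → ℝ}
    (hGh : ∀ᵐ x ∂volume.restrict Ω, ENNReal.ofReal (G x) ≤ ‖h x‖ₑ ^ n)
    {σ : ℕ → ℝ} (hσ0 : ∀ i, 0 < σ i)
    (hσ : ∀ i, volume.restrict Ω {x | σ i < |h x|} ≤ ENNReal.ofReal ((1 / 2) ^ i))
    (hσs : ∑' i : ℕ, ENNReal.ofReal ((1 + (i : ℝ)) ^ (((n : ℝ) - 1) / n)) *
        ENNReal.ofReal (((1 / 2) ^ i) ^ (1 / (n : ℝ)) * σ i) ≠ ⊤)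
    {K : Set (EuclideanSpace ℝ (Fin n))} (hK : IsCompact K) (hKΩ : K ⊆ Ω) :
    ∃ M, ∀ᵐ x ∂volume.restrict K, u x ≤ M := by
  have hum : AEMeasurable u (volume.restrict Ω) :=
    (hmin.2.1.aestronglyMeasurable).aemeasurable
  have hmin' := hmin.congr_ae hum.ae_eq_mk
  suffices hmk : ∃ M, ∀ᵐ x ∂volume.restrict K, hum.mk u x ≤ M by
    obtain ⟨M, hM⟩ := hmk
    refine ⟨M, ?_⟩
    filter_upwards [hM, ae_mono (Measure.restrict_mono hKΩ le_rfl) hum.ae_eq_mk] with x hx hx'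
    rwa [hx']
  refine hK.induction_on (p := fun S => ∃ M, ∀ᵐ x ∂volume.restrict S, hum.mk u x ≤ M)
    ⟨0, by simp⟩ (fun s t hst ⟨M, hM⟩ => ⟨M, ae_mono (Measure.restrict_mono hst le_rfl) hM⟩)
    (fun s t ⟨M, hM⟩ ⟨M', hM'⟩ => ⟨max M M', (ae_restrict_union_iff _ _ _).2
      ⟨hM.mono fun x hx => le_max_of_le_left hx, hM'.mono fun x hx => le_max_of_le_right hx⟩⟩)
    fun x hx => ?_
  obtain ⟨ε, hε, hεΩ⟩ := Metric.nhds_basis_closedBall.mem_iff.1 (hΩo.mem_nhds (hKΩ hx))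
  refine ⟨closedBall x (ε / 4), mem_nhdsWithin_of_mem_nhds (closedBall_mem_nhds x (by positivity)),
    ?_⟩
  exact hmin'.exists_ae_le_closedBall hn hQ hum.measurable_mk hG hf0m hf0 hlow hGh hσ0 hσ
    hσs (by positivity) (by rwa [mul_div_cancel₀ _ (by norm_num)])

/-- **Local boundedness with right-hand side, borderline case `p = n`.**
Under `(n,q)`-growth with inhomogeneity `g` (`|z|^n − g^{n/(n−1)} ≤ f(x,z) ≤ L|z|^q + g^{n/(n−1)}`,
doubling in `z`), with `n < q < ∞`, `min{1/q + 1/(n−1), 1} − 1/n ≥ 0` and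
`g^{1/(n−1)} ∈ L^{n,1}(log L)^{(n−1)/n}(Ω)`, every quasi-minimizer `u ∈ W^{1,1}_loc(Ω)` of
`F[u,A] = ∫_A f(x,∇u) dx` belongs to `L^∞_loc(Ω)`. -/
theorem local_boundedness_with_rhs_p_eq_n
    (n : ℕ) (hn : 2 ≤ n)
    (Ω : Set (EuclideanSpace ℝ (Fin n)))
    (hΩopen : IsOpen Ω) (hΩconn : IsConnected Ω) (hΩbdd : Bornology.IsBounded Ω)
    (q : ℝ) (hpq : (n : ℝ) < q)
    (hε : 0 ≤ min (1 / q + 1 / ((n : ℝ) - 1)) 1 - 1 / (n : ℝ))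
    (g : EuclideanSpace ℝ (Fin n) → ℝ)
    (hg_nonneg : ∀ᵐ x ∂volume.restrict Ω, 0 ≤ g x)
    (hg_meas : AEMeasurable g (volume.restrict Ω))
    (hg_int : IntegrableOn (fun x => g x ^ ((n : ℝ) / ((n : ℝ) - 1))) Ω)
    (hg_lz : lorentzZygmund n (((n : ℝ) - 1) / (n : ℝ)) Ω
      (fun x => g x ^ (1 / ((n : ℝ) - 1))) < ⊤)
    (f : EuclideanSpace ℝ (Fin n) → EuclideanSpace ℝ (Fin n) → ℝ)
    (hf_meas : ∀ z : EuclideanSpace ℝ (Fin n),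
      AEMeasurable (fun x => f x z) (volume.restrict Ω))
    (hf_cont : ∀ᵐ x ∂volume.restrict Ω, Continuous fun z => f x z)
    (hf_conv : ∀ᵐ x ∂volume.restrict Ω, ConvexOn ℝ univ fun z => f x z)
    (L μ : ℝ) (hL : 1 ≤ L) (hμ : 0 ≤ μ)
    (hgrowth : ∀ᵐ x ∂volume.restrict Ω, ∀ z : EuclideanSpace ℝ (Fin n),
      ‖z‖ ^ (n : ℝ) - g x ^ ((n : ℝ) / ((n : ℝ) - 1)) ≤ f x z ∧
        f x z ≤ L * ‖z‖ ^ q + g x ^ ((n : ℝ) / ((n : ℝ) - 1)))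
    (hdouble : ∀ᵐ x ∂volume.restrict Ω, ∀ z : EuclideanSpace ℝ (Fin n),
      f x (2 • z) ≤ μ + L * f x z)
    (u : EuclideanSpace ℝ (Fin n) → ℝ)
    (du : EuclideanSpace ℝ (Fin n) → EuclideanSpace ℝ (Fin n))
    (hquasi : ∃ Q : ℝ, 1 ≤ Q ∧ IsQMinimizer n Ω f Q u du) :
    ∀ K : Set (EuclideanSpace ℝ (Fin n)), K ⊆ Ω → IsCompact K →
      ∃ C : ℝ, ∀ᵐ x ∂volume.restrict K, |u x| ≤ C := by
  have hn' : (2 : ℝ) ≤ n := by exact_mod_cast hn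
  have hn1 : 0 < (n : ℝ) - 1 := by linarith
  have hn0 : (n : ℝ) ≠ 0 := by positivity
  obtain ⟨Q, hQ, hmin⟩ := hquasi
  intro K hKΩ hK
  set G : EuclideanSpace ℝ (Fin n) → ℝ := fun x => g x ^ ((n : ℝ) / ((n : ℝ) - 1)) with hG
  set h : EuclideanSpace ℝ (Fin n) → ℝ := fun x => g x ^ (1 / ((n : ℝ) - 1)) with hh
  have hGh : ∀ᵐ x ∂volume.restrict Ω, ENNReal.ofReal (G x) = ‖h x‖ₑ ^ n := by
    filter_upwards [hg_nonneg] with x hx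
    have hx0 : 0 ≤ h x := Real.rpow_nonneg hx _
    rw [Real.enorm_eq_ofReal hx0, ← ENNReal.ofReal_pow hx0, hh, hG, ← Real.rpow_mul_natCast hx,
      one_div_mul_eq_div]
  have hGfin : ∫⁻ x in Ω, ‖h x‖ₑ ^ n ≠ ⊤ := by
    rw [← lintegral_congr_ae hGh]
    exact hg_int.lintegral_lt_top.ne
  have hf0 : ∀ᵐ x ∂volume.restrict Ω, |f x 0| ≤ G x := by
    filter_upwards [hgrowth] with x hx
    have h0 := hx 0
    rw [norm_zero, Real.zero_rpow hn0, Real.zero_rpow (by linarith : q ≠ 0)] at h0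
    exact abs_le.2 ⟨by linarith [h0.1], by linarith [h0.2]⟩
  have hlow : ∀ᵐ x ∂volume.restrict Ω, ‖du x‖ ^ n - G x ≤ f x (du x) := by
    filter_upwards [hgrowth] with x hx
    simpa only [Real.rpow_natCast] using (hx (du x)).1
  have hf0m : AEStronglyMeasurable (fun x => f x 0) (volume.restrict Ω) :=
    (hf_meas 0).aestronglyMeasurable
  obtain ⟨σ, hσ0, hσ, hσs⟩ := exists_levels_of_lorentzZygmund_lt_top (by omega : 1 ≤ n)
    (div_nonneg hn1.le (by positivity)) ((div_le_one (by positivity)).2 (by linarith))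
    hΩopen.measurableSet (hΩopen.measure_pos volume hΩconn.nonempty).ne'
    hΩbdd.measure_lt_top.ne (hg_meas.pow_const _) hGfin hg_lz
  have hGh' := hGh.mono fun x hx => hx.le
  obtain ⟨M, hM⟩ := hmin.exists_ae_le_of_isCompact hn hΩopen hQ hg_int hf0m hf0 hlow hGh' hσ0 hσ
    hσs hK hKΩ
  obtain ⟨M', hM'⟩ := hmin.neg.exists_ae_le_of_isCompact hn hΩopen hQ hg_int
    (by simpa only [neg_zero] using hf0m) (by simpa only [neg_zero] using hf0)
    (by simpa only [neg_neg, norm_neg] using hlow) hGh' hσ0 hσ hσs hK hKΩ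
  refine ⟨max M M', ?_⟩
  filter_upwards [hM, hM'] with x hx hx'
  exact abs_le.2 ⟨by linarith [le_max_right M M'], hx.trans (le_max_left _ _)⟩
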